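/- arXiv:1402.1208 — 2 statements merged into one kernel-verified Lean document; each statement's English description precedes it below -/
import Mathlib

section
/- There exists an absolute constant C > 0 such that for every integer a ≥ 2 and every integer b, there is an integer h with 0 ≤ h ≤ C·(log a)² and gcd(a, b + h) = 1. -/
namespace CSh

open Finset

/-- primes below n -/
noncomputable def P (n : ℕ) : Finset ℕ := (Finset.range n).filter Nat.Prime

lemma mem_P {n q : ℕ} : q ∈ P n ↔ q < n ∧ q.Prime := by simp [P]

noncomputable def mert (n : ℕ) : ℝ := ∑ q ∈ P n, Real.log q / q

lemma P_succ_prime {p : ℕ} (hp : p.Prime) : P (p+1) = insert p (P p) := by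
  simp [P, Finset.range_add_one, Finset.filter_insert, hp]

lemma P_succ_not {p : ℕ} (hp : ¬ p.Prime) : P (p+1) = P p := by
  simp [P, Finset.range_add_one, Finset.filter_insert, hp]

lemma notMem_P (p : ℕ) : p ∉ P p := by simp [P]

lemma mert_succ_prime {p : ℕ} (hp : p.Prime) : mert (p+1) = mert p + Real.log p / p := by
  rw [mert, P_succ_prime hp, Finset.sum_insert (notMem_P p), mert, add_comm]

lemma mert_succ_not {p : ℕ} (hp : ¬ p.Prime) : mert (p+1) = mert p := by
  rw [mert, P_succ_not hp, mert]

lemma log_factorial_eq (n : ℕ) :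
    Real.log (n.factorial) = ∑ p ∈ P (n+1), (n.factorial.factorization p : ℝ) * Real.log p := by
  rw [Real.log_nat_eq_sum_factorization, Finsupp.sum_of_support_subset]
  · intro q hq
    rw [Nat.support_factorization, Nat.mem_primeFactors] at hq
    rw [mem_P]
    exact ⟨Nat.lt_succ_of_le ((hq.1.dvd_factorial).1 hq.2.1), hq.1⟩
  · simp

lemma log_fact_le (n : ℕ) : Real.log (n.factorial) ≤ n * Real.log n := by
  rw [← Real.log_pow]
  apply Real.log_le_log (by positivity)
  exact_mod_cast Nat.factorial_le_pow n

lemma log_fact_ge (n : ℕ) (hn : 1 ≤ n) : n * Real.log n - n ≤ Real.log (n.factorial) := by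
  have h := Real.pow_div_factorial_le_exp (n:ℝ) (by positivity) n
  have hn' : (0:ℝ) < n := by exact_mod_cast hn
  have h2 := Real.log_le_log (by positivity) h
  rw [Real.log_div (by positivity) (by positivity), Real.log_pow, Real.log_exp] at h2
  linarith

lemma theta_P (n : ℕ) : ∑ q ∈ P n, Real.log q ≤ Real.log 4 * n := by
  refine le_trans ?_ (Chebyshev.theta_le_log4_mul_x (x := n) (by positivity))
  rw [Chebyshev.theta]
  apply Finset.sum_le_sum_of_subset_of_nonneg
  · intro q hq
    rw [mem_P] at hq
    simp only [mem_filter, mem_Ioc, Nat.floor_natCast]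
    exact ⟨⟨hq.2.pos, hq.1.le⟩, hq.2⟩
  · intro i _ _
    exact Real.log_natCast_nonneg i

lemma mert_upper (n : ℕ) (hn : 1 ≤ n) : mert n ≤ Real.log n + 2 := by
  have hn' : (0:ℝ) < n := by exact_mod_cast hn
  have h1 : ∑ p ∈ P n, ((n:ℝ)/p - 1) * Real.log p ≤ Real.log (n.factorial) := by
    rw [log_factorial_eq]
    calc _ ≤ ∑ p ∈ P n, (n.factorial.factorization p : ℝ) * Real.log p := by
          apply Finset.sum_le_sum
          intro p hp
          rw [mem_P] at hp
          apply mul_le_mul_of_nonneg_right _ (Real.log_natCast_nonneg p)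
          have h3 : n / p ≤ n.factorial.factorization p := by
            rw [Nat.factorization_factorial hp.2 (b := Nat.log p n + 1) (by lia)]
            have : n / p = n / p^1 := by simp
            rw [this]
            apply Finset.single_le_sum (f := fun i => n / p^i) (fun _ _ => Nat.zero_le _)
            simp only [mem_Ico, le_refl, true_and]
            have := Nat.log_pos hp.2.one_lt hp.1.le
            lia
          have h4 : (n:ℝ)/p - 1 ≤ ((n/p : ℕ):ℝ) := by
            have := Nat.lt_floor_add_one ((n:ℝ)/p)
            rw [Nat.floor_div_natCast, Nat.floor_natCast] at this
            linarith
          exact h4.trans (by exact_mod_cast h3)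
      _ ≤ _ := by
          apply Finset.sum_le_sum_of_subset_of_nonneg
          · intro q hq; rw [mem_P] at *; exact ⟨by lia, hq.2⟩
          · intro i _ _; exact mul_nonneg (by positivity) (Real.log_natCast_nonneg i)
  have h2 : ∑ p ∈ P n, ((n:ℝ)/p - 1) * Real.log p = n * mert n - ∑ p ∈ P n, Real.log p := by
    rw [mert, Finset.mul_sum, ← Finset.sum_sub_distrib]
    apply Finset.sum_congr rfl
    intro p hp; ring
  have h5 := theta_P n
  have h6 := log_fact_le n
  have h7 : Real.log 4 ≤ 2 := by
    have : Real.log 4 = 2 * Real.log 2 := by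
      rw [← Real.log_rpow (by norm_num)]; norm_num
    linarith [Real.log_two_lt_d9]
  have : n * mert n ≤ n * (Real.log n + 2) := by
    nlinarith
  exact le_of_mul_le_mul_left this hn'

lemma summable_logsq : Summable (fun p : ℕ => 4 / (p:ℝ)^(3/2:ℝ)) := by
  simpa [div_eq_mul_inv] using ((Real.summable_nat_rpow_inv (p := 3/2)).2 (by norm_num)).mul_left 4

lemma exists_mert_lower : ∃ B : ℝ, 0 ≤ B ∧ ∀ n : ℕ, 1 ≤ n → Real.log n - B ≤ mert n := by
  set T := ∑' p : ℕ, 4 / (p:ℝ)^(3/2:ℝ) with hT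
  refine ⟨T + 2, add_nonneg (tsum_nonneg fun _ => by positivity) (by norm_num), ?_⟩
  intro n hn
  have hn' : (0:ℝ) < n := by exact_mod_cast hn
  have h1 : Real.log (n.factorial) ≤ n * ∑ p ∈ P (n+1), (Real.log p / p + 4 / (p:ℝ)^(3/2:ℝ)) := by
    rw [log_factorial_eq, Finset.mul_sum]
    apply Finset.sum_le_sum
    intro p hp
    rw [mem_P] at hp
    have h2p := hp.2.two_le
    have hp2 : (2:ℝ) ≤ p := by exact_mod_cast h2p
    have h2 := Nat.sub_one_mul_factorization_factorial (n := n) hp.2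
    have h3 : (p - 1) * n.factorial.factorization p ≤ n := by rw [h2]; lia
    have h4 : ((p:ℝ) - 1) * n.factorial.factorization p ≤ n := by
      have : ((p - 1 : ℕ):ℝ) * n.factorial.factorization p ≤ n := by exact_mod_cast h3
      rwa [Nat.cast_sub (by lia), Nat.cast_one] at this
    have h5 : (n.factorial.factorization p : ℝ) ≤ n * (1/p + 2/(p:ℝ)^2) := by
      have h6 : (n.factorial.factorization p : ℝ) ≤ n / ((p:ℝ)-1) := by
        rw [le_div_iff₀ (by linarith)]; linarith
      refine h6.trans ?_
      rw [div_eq_mul_one_div]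
      apply mul_le_mul_of_nonneg_left _ hn'.le
      rw [div_add_div _ _ (by positivity) (by positivity), div_le_div_iff₀ (by linarith) (by positivity)]
      nlinarith
    have hl : Real.log p ≤ 2 * (p:ℝ)^(1/2:ℝ) := by
      have := Real.log_le_rpow_div (x := p) (by positivity) (ε := 1/2) (by norm_num)
      linarith
    have hl0 := Real.log_natCast_nonneg p
    have h8 : 2/(p:ℝ)^2 * Real.log p ≤ 4 / (p:ℝ)^(3/2:ℝ) := by
      have h9 : (p:ℝ)^2 = (p:ℝ)^(3/2:ℝ) * (p:ℝ)^(1/2:ℝ) := by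
        rw [← Real.rpow_add (by positivity)]; norm_num
      rw [h9]
      have a1 : 0 < (p:ℝ)^(3/2:ℝ) := by positivity
      have a2 : 0 < (p:ℝ)^(1/2:ℝ) := by positivity
      rw [div_mul_eq_mul_div, div_le_div_iff₀ (by positivity) a1]
      nlinarith
    calc _ ≤ (n * (1/p + 2/(p:ℝ)^2)) * Real.log p := mul_le_mul_of_nonneg_right h5 hl0
      _ = n * (Real.log p / p + 2/(p:ℝ)^2 * Real.log p) := by ring
      _ ≤ _ := by gcongr
  rw [Finset.sum_add_distrib] at h1
  have h2 : ∑ p ∈ P (n+1), 4 / (p:ℝ)^(3/2:ℝ) ≤ T :=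
    summable_logsq.sum_le_tsum _ (fun _ _ => by positivity)
  have h3 : ∑ p ∈ P (n+1), Real.log p / p ≤ mert n + 1 := by
    change mert (n+1) ≤ _
    by_cases hp : n.Prime
    · rw [mert_succ_prime hp]
      have : Real.log n / n ≤ 1 := by
        rw [div_le_one hn']; exact (Real.log_le_sub_one_of_pos hn').trans (by linarith)
      linarith
    · rw [mert_succ_not hp]; linarith
  have h4 := log_fact_ge n hn
  have : n * (Real.log n - (T+2)) ≤ n * mert n := by nlinarith
  exact le_of_mul_le_mul_left this hn'

/-- Shifted Mertens sum. -/
lemma exists_mertens : ∃ b B : ℝ, 1 ≤ b ∧ 1 ≤ B ∧ ∀ n : ℕ, 1 ≤ n →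
    Real.log n ≤ mert n + b ∧ mert n + b ≤ Real.log n + B := by
  obtain ⟨B, hB, h⟩ := exists_mert_lower
  refine ⟨B+1, B+3, by linarith, by linarith, fun n hn => ⟨?_, ?_⟩⟩
  · linarith [h n hn]
  · linarith [mert_upper n hn]

lemma mert_nonneg (n : ℕ) : 0 ≤ mert n :=
  Finset.sum_nonneg fun q _ => div_nonneg (Real.log_natCast_nonneg q) (by positivity)

lemma pi_upper6 {y : ℝ} (hy : 1 < y) :
    (Nat.primeCounting ⌊y⌋₊ : ℝ) ≤ 6 * y / Real.log y := by
  have h := Chebyshev.pi_le_log4_mul_div hy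
  refine h.trans ?_
  have hl : 0 < Real.log y := Real.log_pos hy
  have h1 : Real.log √y = Real.log y / 2 := Real.log_sqrt (by linarith)
  rw [h1]
  have h7 : Real.log 4 ≤ 2 := by
    have : Real.log 4 = 2 * Real.log 2 := by
      rw [← Real.log_rpow (by norm_num)]; norm_num
    linarith [Real.log_two_lt_d9]
  have h8 : √y * Real.log y ≤ 2 * y := by
    have h9 : Real.log √y ≤ √y := (Real.log_le_sub_one_of_pos (by positivity)).trans (by linarith)
    rw [h1] at h9
    have := Real.mul_self_sqrt (show 0 ≤ y by linarith)
    nlinarith [Real.sqrt_nonneg y]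
  rw [div_div_eq_mul_div, ← sub_nonneg]
  have : 6 * y / Real.log y - (Real.log 4 * y * 2 / Real.log y + √y)
     = ((6 - 2 * Real.log 4) * y - √y * Real.log y) / Real.log y := by field_simp; ring
  rw [this]
  apply div_nonneg _ hl.le
  nlinarith


/-- Chebyshev upper bound: number of primes ≤ y. -/
lemma exists_pi_upper : ∃ c : ℝ, 1 ≤ c ∧ ∀ y : ℝ, 1 < y →
    (Nat.primeCounting ⌊y⌋₊ : ℝ) ≤ c * y / Real.log y := by
  exact ⟨6, by norm_num, fun y hy => pi_upper6 hy⟩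

lemma card_P_le (n : ℕ) (y : ℝ) (h : (n:ℝ) ≤ y + 1) : ((P n).card : ℝ) ≤ Nat.primeCounting ⌊y⌋₊ := by
  rw [Nat.primeCounting, Nat.primeCounting', Nat.count_eq_card_filter_range]
  norm_cast
  apply Finset.card_le_card
  intro q hq
  rw [mem_P] at hq
  simp only [mem_filter, mem_range]
  refine ⟨?_, hq.2⟩
  have : (q:ℝ) ≤ y := by
    have : (q:ℝ) + 1 ≤ n := by exact_mod_cast hq.1
    linarith
  exact Nat.lt_succ_of_le (Nat.le_floor this)

lemma primes_block {y : ℝ} (hy : (16:ℝ)^10 ≤ y) :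
    y / Real.log y ≤ (((Finset.Ioc ⌊y⌋₊ ⌊16*y⌋₊).filter Nat.Prime).card : ℝ) := by
  have hy1 : (1000:ℝ) ≤ y := le_trans (by norm_num) hy
  have hup := pi_upper6 (y := y) (by linarith)
  have hlo := Chebyshev.pi_ge' (x := 16*y) (by linarith)
  have hl : 0 < Real.log y := Real.log_pos (by linarith)
  have hcard : (Nat.primeCounting ⌊16*y⌋₊ : ℝ) ≤ Nat.primeCounting ⌊y⌋₊ +
      (((Finset.Ioc ⌊y⌋₊ ⌊16*y⌋₊).filter Nat.Prime).card : ℝ) := by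
    simp only [Nat.primeCounting, Nat.primeCounting', Nat.count_eq_card_filter_range]
    norm_cast
    rw [← Finset.card_union_of_disjoint]
    · apply Finset.card_le_card
      intro q hq
      simp only [mem_filter, mem_range, mem_union, mem_Ioc] at *
      have := hq.2
      by_cases h : q < ⌊y⌋₊ + 1
      · left; exact ⟨h, hq.2⟩
      · right; exact ⟨⟨by lia, by lia⟩, hq.2⟩
    · rw [Finset.disjoint_left]
      intro q hq hq'
      simp only [mem_filter, mem_range, mem_Ioc] at *
      lia
  have h16 : Real.log (16*y) ≤ 1.1 * Real.log y := by
    rw [Real.log_mul (by norm_num) (by positivity)]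
    have : Real.log ((16:ℝ)^10) ≤ Real.log y := Real.log_le_log (by norm_num) hy
    rw [Real.log_pow] at this
    push_cast at this
    linarith
  have hnum : 10 * y ≤ (16*y - 1) * Real.log 2 - Real.log (16*y+2) := by
    have h2 := Real.log_two_gt_d9
    have h3 : Real.log (16*y+2) ≤ 0.5 * y := by
      have : Real.log (16*y+2) ≤ 2 * (16*y+2)^(1/2:ℝ) := by
        have := Real.log_le_rpow_div (x := 16*y+2) (by positivity) (ε := 1/2) (by norm_num)
        linarith
      refine this.trans ?_
      rw [← Real.sqrt_eq_rpow]
      have : √(16*y+2) ≤ y/4 := by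
        rw [Real.sqrt_le_left (by positivity)]
        nlinarith
      linarith
    nlinarith
  have hlo2 : 9 * y / Real.log y ≤ Nat.primeCounting ⌊16*y⌋₊ := by
    refine le_trans ?_ hlo
    have hl16 : 0 < Real.log (16*y) := Real.log_pos (by linarith)
    rw [div_le_div_iff₀ hl hl16]
    nlinarith
  have e1 : 9 * y / Real.log y = 9 * (y / Real.log y) := by ring
  have e2 : 6 * y / Real.log y = 6 * (y / Real.log y) := by ring
  have : 0 ≤ y / Real.log y := by positivity
  linarith

end CSh


namespace CSh

open Finset

/-- `m` has no prime factor below `n`. -/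
def rough (n m : ℕ) : Prop := ∀ q : ℕ, q.Prime → q < n → ¬ q ∣ m

open Classical in
noncomputable def V (N n e : ℕ) : ℕ :=
  ∑ m ∈ (Finset.Icc 1 N).filter
    (fun m => rough n m ∧ Even (ArithmeticFunction.cardFactors m + e)), (N / m) % 16

lemma rough_succ_not {n m : ℕ} (hn : ¬ n.Prime) : rough (n+1) m ↔ rough n m := by
  constructor
  · intro h q hq hqn; exact h q hq (by lia)
  · intro h q hq hqn
    refine h q hq (lt_of_le_of_ne (by lia) ?_)
    rintro rfl; exact hn hq

lemma rough_succ_prime {n m : ℕ} (hn : n.Prime) : rough (n+1) m ↔ rough n m ∧ ¬ n ∣ m := by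
  constructor
  · intro h; exact ⟨fun q hq hqn => h q hq (by lia), h n hn (by lia)⟩
  · rintro ⟨h, h'⟩ q hq hqn
    rcases eq_or_lt_of_le (Nat.lt_succ_iff.1 hqn) with rfl | h2
    · exact h'
    · exact h q hq h2

lemma V_succ_not {n : ℕ} (hn : ¬ n.Prime) (N e : ℕ) : V N (n+1) e = V N n e := by
  unfold V
  congr 1
  ext m
  simp only [mem_filter, rough_succ_not hn]

lemma rough_prime_mul {p m : ℕ} (hp : p.Prime) : rough p (p*m) ↔ rough p m := by
  constructor
  · intro h q hq hqn hd; exact h q hq hqn (hd.mul_left p)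
  · intro h q hq hqn hd
    rcases hq.dvd_mul.1 hd with h1 | h1
    · rw [Nat.prime_dvd_prime_iff_eq hq hp] at h1; lia
    · exact h q hq hqn h1

lemma V_succ_prime {p : ℕ} (hp : p.Prime) (N e : ℕ) :
    V N p e = V N (p+1) e + V (N/p) p (e+1) := by
  classical
  have h1 : V (N/p) p (e+1) = ∑ m ∈ ((Finset.Icc 1 N).filter
    (fun m => rough p m ∧ Even (ArithmeticFunction.cardFactors m + e))).filter (fun m => p ∣ m),
      (N / m) % 16 := by
    unfold V
    apply Finset.sum_nbij' (fun m => p * m) (fun m => m / p)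
    · intro m hm
      simp only [mem_filter, mem_Icc] at hm ⊢
      obtain ⟨⟨h1, h2⟩, h3, h4⟩ := hm
      refine ⟨⟨⟨Nat.mul_pos hp.pos h1, ?_⟩, (rough_prime_mul hp).2 h3, ?_⟩, dvd_mul_right _ _⟩
      · rw [Nat.le_div_iff_mul_le hp.pos] at h2; linarith
      · rw [ArithmeticFunction.cardFactors_mul hp.ne_zero (by lia),
          ArithmeticFunction.cardFactors_apply_prime hp]
        convert h4 using 1; ring
    · intro m hm
      simp only [mem_filter, mem_Icc] at hm ⊢
      obtain ⟨⟨⟨h1, h2⟩, h3, h4⟩, ⟨k, rfl⟩⟩ := hm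
      have hk : 0 < k := Nat.pos_of_ne_zero (by rintro rfl; simp at h1)
      rw [Nat.mul_div_cancel_left _ hp.pos]
      refine ⟨⟨hk, ?_⟩, (rough_prime_mul hp).1 h3, ?_⟩
      · rw [Nat.le_div_iff_mul_le hp.pos]; linarith
      · rw [ArithmeticFunction.cardFactors_mul hp.ne_zero (by lia),
          ArithmeticFunction.cardFactors_apply_prime hp] at h4
        convert h4 using 1; ring
    · intro m hm; exact Nat.mul_div_cancel_left _ hp.pos
    · intro m hm
      simp only [mem_filter] at hm
      exact Nat.mul_div_cancel' hm.2
    · intro m hm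
      rw [Nat.div_div_eq_div_mul]
  have h2 : V N (p+1) e = ∑ m ∈ ((Finset.Icc 1 N).filter
    (fun m => rough p m ∧ Even (ArithmeticFunction.cardFactors m + e))).filter (fun m => ¬ p ∣ m),
      (N / m) % 16 := by
    unfold V
    rw [Finset.filter_filter]
    congr 1
    ext m
    simp only [mem_filter, rough_succ_prime hp]
    tauto
  rw [h1, h2, add_comm, Finset.sum_filter_add_sum_filter_not]
  rfl

lemma V_add_two (N n e : ℕ) : V N n (e+2) = V N n e := by
  unfold V
  congr 1
  ext m
  simp only [mem_filter]
  have : Even (ArithmeticFunction.cardFactors m + (e+2)) ↔ Even (ArithmeticFunction.cardFactors m + e) := by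
    rw [← add_assoc, Nat.even_add_one.trans (not_congr Nat.even_add_one), not_not]
  rw [this]

/-- divisor sum -/
noncomputable def D (N : ℕ) : ℕ := ∑ i ∈ Ioc 0 N, N / i

lemma hyperbola (N s : ℕ) (h1 : s * s ≤ N) (h2 : N < (s+1)*(s+1)) :
    D N + s * s = 2 * ∑ i ∈ Ioc 0 s, N / i := by
  have hsN : s ≤ N := by nlinarith
  have hcard : ∀ i, 0 < i → i ≤ N → ∀ t u, (∀ j, t < j → j * i ≤ N → j ≤ u) → 
      ((Ioc t u).filter (fun j => j * i ≤ N)).card = N / i - t := by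
    intro i hi hiN t u h
    have : (Ioc t u).filter (fun j => j * i ≤ N) = Ioc t (N/i) := by
      ext j
      simp only [mem_filter, mem_Ioc, Nat.le_div_iff_mul_le hi]
      constructor
      · rintro ⟨⟨a, b⟩, c⟩; exact ⟨a, c⟩
      · rintro ⟨a, c⟩; exact ⟨⟨a, h j a c⟩, c⟩
    rw [this, Nat.card_Ioc]
  have hsplit : D N = ∑ i ∈ Ioc 0 s, N / i + ∑ i ∈ Ioc s N, N / i := by
    rw [D, ← Finset.sum_Ioc_consecutive _ (Nat.zero_le s) hsN]
  have hA : ∑ i ∈ Ioc s N, N / i = ∑ i ∈ Ioc s N, ∑ j ∈ Ioc 0 s, if j * i ≤ N then 1 else 0 := by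
    apply Finset.sum_congr rfl
    intro i hi
    rw [mem_Ioc] at hi
    rw [Finset.sum_boole, hcard i (by lia) hi.2 0 s]
    · simp
    · intro j hj hji
      by_contra hc
      have : (s+1)*(s+1) ≤ j * i := Nat.mul_le_mul (by lia) (by lia)
      lia
  have hB : ∑ j ∈ Ioc 0 s, ∑ i ∈ Ioc s N, (if j * i ≤ N then 1 else 0) = ∑ j ∈ Ioc 0 s, (N / j - s) := by
    apply Finset.sum_congr rfl
    intro j hj
    rw [mem_Ioc] at hj
    simp_rw [mul_comm j]
    rw [Finset.sum_boole, hcard j (by lia) (by lia) s N]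
    · simp
    · intro i hi hji
      nlinarith
  have hC : ∑ j ∈ Ioc 0 s, (N / j - s) + s * s = ∑ j ∈ Ioc 0 s, N / j := by
    have : s * s = ∑ j ∈ Ioc 0 s, s := by simp
    rw [this, ← Finset.sum_add_distrib]
    apply Finset.sum_congr rfl
    intro j hj
    rw [mem_Ioc] at hj
    apply Nat.sub_add_cancel
    rw [Nat.le_div_iff_mul_le (by lia)]
    nlinarith
  rw [hsplit, hA, Finset.sum_comm, hB]
  lia

lemma D_asymp (x : ℝ) (hx : 1 ≤ x) :
    |(D ⌊x⌋₊ : ℝ) - (x * Real.log x + (2 * Real.eulerMascheroniConstant - 1) * x)| ≤ 8 * √x := by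
  set N := ⌊x⌋₊ with hN
  set s := Nat.sqrt N with hs
  have h1 : s * s ≤ N := Nat.sqrt_le N
  have h2 : N < (s+1)*(s+1) := Nat.lt_succ_sqrt N
  have hyp := hyperbola N s h1 h2
  have hNx : (N:ℝ) ≤ x := Nat.floor_le (by linarith)
  have hxN : x < N + 1 := Nat.lt_floor_add_one x
  set r := √x with hr
  have hrr : r * r = x := Real.mul_self_sqrt (by linarith)
  have hr1 : 1 ≤ r := by rw [hr]; exact Real.one_le_sqrt.2 hx
  have hsr : (s:ℝ) ≤ r := by
    apply Real.le_sqrt_of_sq_le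
    have : ((s*s:ℕ):ℝ) ≤ N := by exact_mod_cast h1
    push_cast at this; nlinarith
  have hrs : r < s + 1 := by
    have : ((N+1:ℕ):ℝ) ≤ ((s+1)*(s+1):ℕ) := by exact_mod_cast h2
    push_cast at this
    by_contra hc
    push Not at hc
    have : ((s:ℝ)+1)*(s+1) ≤ r * r := by nlinarith
    linarith
  have hN1 : 1 ≤ N := Nat.le_floor (by simpa using hx)
  have hs1 : 1 ≤ s := by
    by_contra hc
    have : s = 0 := by lia
    rw [this] at h2; lia
  have hs1' : (1:ℝ) ≤ s := by exact_mod_cast hs1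
  have hH1 := Real.eulerMascheroniSeq_lt_eulerMascheroniConstant s
  have hH2 := Real.eulerMascheroniConstant_lt_eulerMascheroniSeq' s
  rw [Real.eulerMascheroniSeq] at hH1
  rw [Real.eulerMascheroniSeq', if_neg (by lia)] at hH2
  set γ := Real.eulerMascheroniConstant
  set H : ℝ := (harmonic s : ℝ) with hH
  have hHsum : H = ∑ i ∈ Ioc 0 s, 1 / (i:ℝ) := by
    rw [hH, harmonic_eq_sum_Icc]
    push_cast
    apply Finset.sum_congr
    · ext i; simp [Nat.lt_iff_add_one_le]
    · intros; simp
  have hfl : ∀ i ∈ Ioc 0 s, ((N / i : ℕ):ℝ) ≤ x * (1/(i:ℝ)) ∧ x * (1/(i:ℝ)) - 1 ≤ ((N/i:ℕ):ℝ) := by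
    intro i hi
    rw [hN, ← Nat.floor_div_natCast]
    have e : x * (1/(i:ℝ)) = x / i := by ring
    rw [e]
    exact ⟨Nat.floor_le (by positivity), by linarith [Nat.lt_floor_add_one (x/(i:ℝ))]⟩
  have hs_up : (∑ i ∈ Ioc 0 s, ((N / i : ℕ):ℝ)) ≤ x * H := by
    rw [hHsum, Finset.mul_sum]
    exact Finset.sum_le_sum fun i hi => (hfl i hi).1
  have hs_lo : x * H - s ≤ (∑ i ∈ Ioc 0 s, ((N / i : ℕ):ℝ)) := by
    have : (s:ℝ) = ∑ i ∈ Ioc 0 s, (1:ℝ) := by simp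
    rw [hHsum, Finset.mul_sum, this, ← Finset.sum_sub_distrib]
    exact Finset.sum_le_sum fun i hi => (hfl i hi).2
  have hD : (D N : ℝ) + s * s = 2 * ∑ i ∈ Ioc 0 s, ((N / i : ℕ):ℝ) := by exact_mod_cast hyp
  have hlr : Real.log x = 2 * Real.log r := by
    rw [← hrr, Real.log_mul (by positivity) (by positivity)]; ring
  have hls : Real.log s ≤ Real.log r := Real.log_le_log (by linarith) hsr
  -- log (s+1) ≤ log r + 1/r
  have e1 : Real.log (s+1) ≤ Real.log r + 1/r := by
    have : Real.log ((s+1)/r) ≤ (s+1)/r - 1 := Real.log_le_sub_one_of_pos (by positivity)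
    rw [Real.log_div (by positivity) (by positivity)] at this
    have : ((s:ℝ)+1)/r ≤ 1 + 1/r := by
      rw [add_div]; have : (s:ℝ)/r ≤ 1 := by rw [div_le_one (by linarith)]; exact hsr
      linarith
    linarith
  have e2 : Real.log r ≤ Real.log s + 2/r := by
    have h5 : Real.log (r/s) ≤ r/s - 1 := Real.log_le_sub_one_of_pos (by positivity)
    rw [Real.log_div (by positivity) (by positivity)] at h5
    have : r/s - 1 ≤ 2/r := by
      rw [div_sub_one (by positivity), div_le_div_iff₀ (by positivity) (by positivity)]
      nlinarith
    linarith
  have hxr : x * (1/r) = r := by rw [← hrr]; field_simp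
  have hxr2 : x * (2/r) = 2*r := by rw [← hrr]; field_simp
  have u1 : x * H ≤ x * (γ + Real.log r + 1/r) := by
    apply mul_le_mul_of_nonneg_left _ (by linarith); linarith
  have u2 : x * (γ + Real.log r - 2/r) ≤ x * H := by
    apply mul_le_mul_of_nonneg_left _ (by linarith); linarith
  have u3 : x * (γ + Real.log r + 1/r) = x * γ + x * Real.log r + r := by rw [mul_add, mul_add, hxr]
  have u4 : x * (γ + Real.log r - 2/r) = x * γ + x * Real.log r - 2 * r := by
    rw [mul_sub, mul_add, hxr2]
  have s1 : (s:ℝ) * s ≤ x := by nlinarith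
  have s2 : x - 2 * r ≤ (s:ℝ) * s := by nlinarith
  rw [hlr, abs_le]
  constructor <;> nlinarith

lemma liou_zeta (n : ℕ) (hn : n ≠ 0) :
    ((ArithmeticFunction.liouville * (ArithmeticFunction.zeta : ArithmeticFunction ℤ)) n = 0) ∨
    ((ArithmeticFunction.liouville * (ArithmeticFunction.zeta : ArithmeticFunction ℤ)) n = 1 ∧
      IsSquare n) := by
  have hm : (ArithmeticFunction.liouville * (ArithmeticFunction.zeta : ArithmeticFunction ℤ)).IsMultiplicative := by
    apply ArithmeticFunction.IsMultiplicative.mul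
    · exact ArithmeticFunction.isMultiplicative_liouville
    · exact ArithmeticFunction.isMultiplicative_zeta.natCast
  induction n using Nat.recOnPosPrimePosCoprime with
  | zero => exact absurd rfl hn
  | one => right; simp [hm.1]
  | prime_pow p k hp hk =>
    have h : (ArithmeticFunction.liouville * (ArithmeticFunction.zeta : ArithmeticFunction ℤ)) (p^k)
      = ∑ i ∈ range (k+1), (-1:ℤ)^i := by
      rw [ArithmeticFunction.coe_mul_zeta_apply, Nat.sum_divisors_prime_pow hp]
      apply Finset.sum_congr rfl
      intro i _
      rw [ArithmeticFunction.liouville_apply (pow_ne_zero _ hp.ne_zero),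
        ArithmeticFunction.cardFactors_apply_prime_pow hp]
    rw [h, neg_one_geom_sum]
    split_ifs with h1
    · left; rfl
    · right
      refine ⟨rfl, Even.isSquare_pow ?_ _⟩
      rw [Nat.even_add_one, not_not] at h1
      exact h1
  | coprime a b ha hb hab iha ihb =>
    rw [hm.2 hab]
    rcases iha (by lia) with h1 | ⟨h1, h1'⟩
    · left; simp [h1]
    rcases ihb (by lia) with h2 | ⟨h2, h2'⟩
    · left; simp [h2]
    right
    exact ⟨by simp [h1, h2], h1'.mul h2'⟩

lemma liou_sum_bound (N : ℕ) :
    |∑ n ∈ Ioc 0 N, ArithmeticFunction.liouville n * ((N / n : ℕ):ℤ)| ≤ Nat.sqrt N := by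
  rw [← ArithmeticFunction.sum_Ioc_mul_zeta_eq_sum]
  calc _ ≤ ∑ n ∈ Ioc 0 N, |(ArithmeticFunction.liouville * (ArithmeticFunction.zeta : ArithmeticFunction ℤ)) n| :=
        Finset.abs_sum_le_sum_abs _ _
    _ ≤ ∑ n ∈ Ioc 0 N, if n ∈ (Ioc 0 (Nat.sqrt N)).image (fun k => k * k) then 1 else 0 := by
        apply Finset.sum_le_sum
        intro n hn
        rw [mem_Ioc] at hn
        rcases liou_zeta n (by lia) with h | ⟨h, ⟨k, hk⟩⟩
        · rw [h]; split_ifs <;> simp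
        · rw [h, if_pos]
          · simp
          · rw [mem_image]
            refine ⟨k, ?_, hk.symm⟩
            rw [mem_Ioc, Nat.le_sqrt]
            refine ⟨Nat.pos_of_ne_zero (by rintro rfl; lia), by lia⟩
    _ ≤ ((Ioc 0 (Nat.sqrt N)).image (fun k => k * k)).card := by
        rw [Finset.sum_boole]
        norm_cast
        apply Finset.card_le_card
        intro n hn; exact (mem_filter.1 hn).2
    _ ≤ Nat.sqrt N := by
        have := Finset.card_image_le (s := Ioc 0 (Nat.sqrt N)) (f := fun k => k * k)
        rw [Nat.card_Ioc] at this
        exact_mod_cast this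

lemma V_one (N e : ℕ) : V N 1 e = ∑ m ∈ Ioc 0 N,
    if Even (ArithmeticFunction.cardFactors m + e) then (N/m) % 16 else 0 := by
  unfold V
  rw [← Finset.sum_filter]
  congr 1
  ext m
  simp only [mem_filter, mem_Icc, mem_Ioc, Nat.lt_iff_add_one_le, zero_add]
  have : rough 1 m := by
    intro q hq h; have := hq.pos; lia
  simp [this]

lemma div_mod_eq (N m : ℕ) : (N/m) % 16 + 16 * ((N/16)/m) = N/m := by
  rw [Nat.div_div_eq_div_mul, mul_comm 16 m, ← Nat.div_div_eq_div_mul]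
  exact Nat.mod_add_div _ _

lemma sum_ext_div {R : Type*} [Semiring R] (f : ℕ → R) (N : ℕ) :
    ∑ m ∈ Ioc 0 N, f m * ((N/16/m : ℕ):R) = ∑ m ∈ Ioc 0 (N/16), f m * ((N/16/m : ℕ):R) := by
  symm
  apply Finset.sum_subset
  · intro m hm; rw [mem_Ioc] at *; exact ⟨hm.1, hm.2.trans (Nat.div_le_self _ _)⟩
  · intro m hm hm'
    rw [mem_Ioc] at *
    rw [Nat.div_eq_of_lt (by lia)]; simp

lemma V_base_sum (N : ℕ) : V N 1 0 + V N 1 1 + 16 * D (N/16) = D N := by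
  rw [V_one, V_one, ← Finset.sum_add_distrib]
  have h := sum_ext_div (fun _ => (1:ℕ)) N
  simp only [one_mul, Nat.cast_id] at h
  rw [D, ← h, Finset.mul_sum, ← Finset.sum_add_distrib, D]
  apply Finset.sum_congr rfl
  intro m _
  rw [← div_mod_eq N m]
  have h2 : Even (ArithmeticFunction.cardFactors m + 1) ↔ ¬ Even (ArithmeticFunction.cardFactors m) :=
    Nat.even_add_one
  by_cases h1 : Even (ArithmeticFunction.cardFactors m)
  · have h3 : ¬ Even (ArithmeticFunction.cardFactors m + 1) := by simp [h2, h1]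
    rw [if_pos (by simpa using h1), if_neg h3]; simp
  · rw [if_neg (by simpa using h1), if_pos (h2.2 h1)]; simp

lemma V_base_diff (N : ℕ) : (V N 1 0 : ℤ) - V N 1 1 =
    ∑ n ∈ Ioc 0 N, ArithmeticFunction.liouville n * ((N / n : ℕ):ℤ)
    - 16 * ∑ n ∈ Ioc 0 (N/16), ArithmeticFunction.liouville n * ((N / 16 / n : ℕ):ℤ) := by
  rw [V_one, V_one, ← sum_ext_div, Finset.mul_sum, ← Finset.sum_sub_distrib]
  push_cast
  rw [← Finset.sum_sub_distrib]
  apply Finset.sum_congr rfl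
  intro m hm
  rw [mem_Ioc] at hm
  have h0 : ((N / m : ℕ) : ℤ) = ((N/m % 16 : ℕ):ℤ) + 16 * ((N/16/m : ℕ):ℤ) := by
    exact_mod_cast (div_mod_eq N m).symm
  push_cast at h0
  have h2 : Even (ArithmeticFunction.cardFactors m + 1) ↔ ¬ Even (ArithmeticFunction.cardFactors m) :=
    Nat.even_add_one
  rw [ArithmeticFunction.liouville_apply (by lia)]
  by_cases h1 : Even (ArithmeticFunction.cardFactors m)
  · have h3 : ¬ Even (ArithmeticFunction.cardFactors m + 1) := by simp [h2, h1]
    rw [if_pos (by simpa using h1), if_neg h3, h1.neg_one_pow]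
    linarith
  · rw [if_neg (by simpa using h1), if_pos (h2.2 h1), (Nat.not_even_iff_odd.1 h1).neg_one_pow]
    linarith

lemma nat_sqrt_le (x : ℝ) (hx : 0 ≤ x) : ((Nat.sqrt ⌊x⌋₊ : ℕ):ℝ) ≤ √x := by
  apply Real.le_sqrt_of_sq_le
  have h := Nat.sqrt_le ⌊x⌋₊
  have h2 : ((Nat.sqrt ⌊x⌋₊ * Nat.sqrt ⌊x⌋₊ : ℕ):ℝ) ≤ ⌊x⌋₊ := by exact_mod_cast h
  push_cast at h2
  rw [sq]
  exact h2.trans (Nat.floor_le hx)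

lemma V_base (X : ℝ) (hX : 1 ≤ X) (e : ℕ) (he : e = 0 ∨ e = 1) :
    |2 * (V ⌊X⌋₊ 1 e : ℝ) - X * Real.log 16| ≤ 100 * √X := by
  set N := ⌊X⌋₊ with hN
  have h16 : N / 16 = ⌊X/16⌋₊ := by
    have := Nat.floor_div_natCast X 16
    rw [hN, ← this]; norm_num
  have hsum : (V N 1 0 : ℝ) + V N 1 1 + 16 * D (N/16) = D N := by exact_mod_cast V_base_sum N
  have hdiff : |(V N 1 0 : ℝ) - V N 1 1| ≤ 17 * √X := by
    have h := V_base_diff N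
    have h1 := liou_sum_bound N
    have h2 := liou_sum_bound (N/16)
    have h3 : |(V N 1 0 : ℤ) - V N 1 1| ≤ Nat.sqrt N + 16 * Nat.sqrt (N/16) := by
      rw [h]
      rw [abs_le] at *
      constructor <;> linarith
    have h4 : |(V N 1 0 : ℝ) - V N 1 1| ≤ Nat.sqrt N + 16 * Nat.sqrt (N/16) := by
      exact_mod_cast h3
    have h5 := nat_sqrt_le X (by linarith)
    have h6 : ((Nat.sqrt (N/16) : ℕ):ℝ) ≤ Nat.sqrt N := by
      exact_mod_cast Nat.sqrt_le_sqrt (Nat.div_le_self _ _)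
    linarith
  have hlog16 : Real.log 16 ≤ 3 := by
    have : Real.log 16 = 4 * Real.log 2 := by
      rw [← Real.log_rpow (by norm_num)]; norm_num
    linarith [Real.log_two_lt_d9]
  have hl0 : 0 ≤ Real.log 16 := Real.log_nonneg (by norm_num)
  have hr := Real.mul_self_sqrt (show 0 ≤ X by linarith)
  have hr1 : 1 ≤ √X := Real.one_le_sqrt.2 hX
  have hs : |(V N 1 0 : ℝ) + V N 1 1 - X * Real.log 16| ≤ 80 * √X := by
    by_cases hX16 : 16 ≤ X
    · have d1 := D_asymp X hX
      have d2 := D_asymp (X/16) (by linarith)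
      rw [← h16] at d2
      rw [← hN] at d1
      have e1 : √(X/16) = √X / 4 := by
        rw [Real.sqrt_div (by linarith)]
        congr 1
        rw [show (16:ℝ) = 4^2 by norm_num]; simp
      rw [Real.log_div (by linarith) (by norm_num), e1] at d2
      rw [abs_le] at *
      constructor <;> nlinarith
    · push Not at hX16
      have hr4 : √X ≤ 4 := by
        rw [show (4:ℝ) = √16 by rw [show (16:ℝ) = 4^2 by norm_num]; simp]
        exact Real.sqrt_le_sqrt hX16.le
      have hv : (V N 1 0 : ℝ) + V N 1 1 ≤ 15 * X := by
        have : V N 1 0 + V N 1 1 ≤ ∑ m ∈ Ioc 0 N, 15 := by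
          rw [V_one, V_one, ← Finset.sum_add_distrib]
          apply Finset.sum_le_sum
          intro m _
          have := Nat.mod_lt (N/m) (show 16 > 0 by norm_num)
          by_cases h1 : Even (ArithmeticFunction.cardFactors m)
          · have h3 : ¬ Even (ArithmeticFunction.cardFactors m + 1) := by
              rw [Nat.even_add_one]; simpa using h1
            rw [if_pos (by simpa using h1), if_neg h3]; lia
          · rw [if_neg (by simpa using h1)]; split_ifs <;> lia
        simp at this
        have h2 : (V N 1 0 : ℝ) + V N 1 1 ≤ N * 15 := by exact_mod_cast this
        have := Nat.floor_le (show 0 ≤ X by linarith)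
        linarith
      have p0 : (0:ℝ) ≤ V N 1 0 := by positivity
      have p1 : (0:ℝ) ≤ V N 1 1 := by positivity
      rw [abs_le]
      constructor <;> nlinarith
  rw [abs_le] at *
  rcases he with rfl | rfl <;> constructor <;> linarith

end CSh


namespace CSh

open Finset

open Classical in
/-- number of sifted integers in `(α, α+X]` -/
noncomputable def S (α X : ℝ) (n : ℕ) : ℕ :=
  ((Finset.Ioc ⌊α⌋ ⌊α+X⌋).filter (fun i : ℤ => ∀ q : ℕ, q.Prime → q < n → ¬ (q:ℤ) ∣ i)).card

lemma S_anti (α X : ℝ) {n m : ℕ} (h : n ≤ m) : S α X m ≤ S α X n := by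
  unfold S
  apply Finset.card_le_card
  intro i hi
  simp only [mem_filter] at *
  exact ⟨hi.1, fun q hq hqn => hi.2 q hq (by lia)⟩

lemma S_mono (α : ℝ) {X Y : ℝ} (h : X ≤ Y) (n : ℕ) : S α X n ≤ S α Y n := by
  unfold S
  apply Finset.card_le_card
  intro i hi
  simp only [mem_filter, mem_Ioc] at *
  exact ⟨⟨hi.1.1, hi.1.2.trans (Int.floor_le_floor (by linarith))⟩, hi.2⟩

lemma S_succ_not {n : ℕ} (hn : ¬ n.Prime) (α X : ℝ) : S α X (n+1) = S α X n := by
  apply le_antisymm (S_anti α X (by lia))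
  unfold S
  apply Finset.card_le_card
  intro i hi
  simp only [mem_filter] at *
  refine ⟨hi.1, fun q hq hqn => hi.2 q hq (lt_of_le_of_ne (by lia) ?_)⟩
  rintro rfl; exact hn hq

open Classical in
/-- multiples of a number, in the sifted set -/
lemma S_mul {p : ℕ} (hp : p.Prime) {n : ℕ} (hn : n ≤ p) (α X : ℝ) :
    S (α/p) (X/p) n = (((Finset.Ioc ⌊α⌋ ⌊α+X⌋).filter
      (fun i : ℤ => ∀ q : ℕ, q.Prime → q < n → ¬ (q:ℤ) ∣ i)).filter (fun i => (p:ℤ) ∣ i)).card := by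
  unfold S
  have hp0 : (0:ℝ) < p := by exact_mod_cast hp.pos
  have hpz : (p:ℤ) ≠ 0 := by exact_mod_cast hp.ne_zero
  symm
  apply Finset.card_nbij' (fun i : ℤ => i / (p:ℤ)) (fun j : ℤ => (p:ℤ) * j)
  · intro i hi
    simp only [coe_filter, mem_filter, mem_Ioc, Set.mem_setOf_eq] at *
    obtain ⟨⟨⟨h1, h2⟩, h3⟩, k, rfl⟩ := hi
    rw [Int.mul_ediv_cancel_left _ hpz]
    rw [Int.floor_lt] at *
    rw [Int.le_floor] at *
    push_cast at *
    refine ⟨⟨?_, ?_⟩, fun q hq hqn hd => h3 q hq hqn (hd.mul_left _)⟩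
    · rw [div_lt_iff₀ hp0]; linarith
    · rw [← add_div, le_div_iff₀ hp0]; linarith
  · intro j hj
    simp only [coe_filter, mem_filter, mem_Ioc, Set.mem_setOf_eq] at *
    obtain ⟨⟨h1, h2⟩, h3⟩ := hj
    rw [Int.floor_lt] at *
    rw [Int.le_floor] at *
    push_cast at *
    rw [div_lt_iff₀ hp0] at h1
    rw [← add_div, le_div_iff₀ hp0] at h2
    refine ⟨⟨⟨by linarith, by linarith⟩, fun q hq hqn hd => ?_⟩, dvd_mul_right _ _⟩
    rcases (Nat.prime_iff_prime_int.1 hq).dvd_or_dvd hd with h | h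
    · have : q ∣ p := by exact_mod_cast h
      rw [Nat.prime_dvd_prime_iff_eq hq hp] at this
      lia
    · exact h3 q hq hqn h
  · intro i hi
    simp only [coe_filter, mem_filter, Set.mem_setOf_eq] at hi
    exact Int.mul_ediv_cancel' hi.2
  · intro j _
    exact Int.mul_ediv_cancel_left _ hpz

lemma S_succ_prime {p : ℕ} (hp : p.Prime) (α X : ℝ) :
    S α X p = S α X (p+1) + S (α/p) (X/p) p := by
  classical
  rw [S_mul hp le_rfl]
  have : S α X (p+1) = (((Finset.Ioc ⌊α⌋ ⌊α+X⌋).filter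
      (fun i : ℤ => ∀ q : ℕ, q.Prime → q < p → ¬ (q:ℤ) ∣ i)).filter (fun i => ¬ (p:ℤ) ∣ i)).card := by
    unfold S
    congr 1
    ext i
    simp only [mem_filter, and_assoc]
    refine and_congr_right fun _ => ?_
    constructor
    · intro h; exact ⟨fun q hq hqn => h q hq (by lia), h p hp (by lia)⟩
    · rintro ⟨h, h'⟩ q hq hqn
      rcases eq_or_lt_of_le (Nat.lt_succ_iff.1 hqn) with rfl | h2
      · exact h'
      · exact h q hq h2
  rw [this, add_comm, Finset.card_filter_add_card_filter_not]
  rfl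

lemma S_one (α X : ℝ) (hX : 0 ≤ X) : X - 1 ≤ S α X 1 ∧ (S α X 1 : ℝ) ≤ X + 1 := by
  have h : S α X 1 = (⌊α+X⌋ - ⌊α⌋).toNat := by
    classical
    unfold S
    rw [Finset.filter_true_of_mem, Int.card_Ioc]
    intro i _ q hq h
    have := hq.pos; lia
  have h0 : 0 ≤ ⌊α+X⌋ - ⌊α⌋ := by
    have := Int.floor_le_floor (show α ≤ α + X by linarith); linarith
  have h1 : (S α X 1 : ℝ) = (⌊α+X⌋:ℝ) - ⌊α⌋ := by
    rw [h]
    have := Int.toNat_of_nonneg h0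
    have h2 : (((⌊α+X⌋ - ⌊α⌋).toNat : ℤ):ℝ) = ((⌊α+X⌋ - ⌊α⌋ : ℤ):ℝ) := by rw [this]
    push_cast at h2
    exact_mod_cast h2
  rw [h1]
  constructor
  · linarith [Int.sub_one_lt_floor (α+X), Int.floor_le α]
  · linarith [Int.sub_one_lt_floor α, Int.floor_le (α+X)]

/-- thresholds: first component lower sieve, second component upper sieve -/
noncomputable def thr (N : ℕ) : ℕ → Multiset ℝ × Multiset ℝ
  | 0 => ((Multiset.range N).map (fun i : ℕ => ((i:ℝ)+1)^2), (Multiset.range N).map (fun i : ℕ => ((i:ℝ)+1)^2))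
  | n+1 => if n.Prime then
      ((thr N n).1 + (thr N n).2.map (fun t => max ((n:ℝ)*t) ((n:ℝ)^2)),
       (thr N n).2 + (thr N n).1.map (fun t => max ((n:ℝ)*t) ((n:ℝ)^3)) + {(n:ℝ)})
      else thr N n

noncomputable def sm (A : Multiset ℝ) (g : ℝ → ℝ) : ℝ := (A.map g).sum

noncomputable def Im (N n : ℕ) (g : ℝ → ℝ) : ℝ := sm (thr N n).1 g
noncomputable def Ip (N n : ℕ) (g : ℝ → ℝ) : ℝ := sm (thr N n).2 g

lemma thr_succ_not (N : ℕ) {n : ℕ} (hn : ¬ n.Prime) : thr N (n+1) = thr N n := by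
  rw [thr, if_neg hn]

lemma Im_succ_not (N : ℕ) {n : ℕ} (hn : ¬ n.Prime) (g) : Im N (n+1) g = Im N n g := by
  rw [Im, thr_succ_not N hn, Im]
lemma Ip_succ_not (N : ℕ) {n : ℕ} (hn : ¬ n.Prime) (g) : Ip N (n+1) g = Ip N n g := by
  rw [Ip, thr_succ_not N hn, Ip]

lemma Im_succ (N : ℕ) {p : ℕ} (hp : p.Prime) (g : ℝ → ℝ) :
    Im N (p+1) g = Im N p g + Ip N p (fun t => g (max ((p:ℝ)*t) ((p:ℝ)^2))) := by
  simp only [Im, Ip, sm, thr, if_pos hp, Multiset.map_add, Multiset.sum_add, Multiset.map_map,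
    Function.comp_def]

lemma Ip_succ (N : ℕ) {p : ℕ} (hp : p.Prime) (g : ℝ → ℝ) :
    Ip N (p+1) g = Ip N p g + Im N p (fun t => g (max ((p:ℝ)*t) ((p:ℝ)^3))) + g p := by
  simp only [Im, Ip, sm, thr, if_pos hp, Multiset.map_add, Multiset.sum_add, Multiset.map_map,
    Function.comp_def, Multiset.map_singleton, Multiset.sum_singleton]

lemma thr_ge_one (N n : ℕ) : (∀ t ∈ (thr N n).1, 1 ≤ t) ∧ (∀ t ∈ (thr N n).2, 1 ≤ t) := by
  induction n with
  | zero =>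
    have : ∀ t ∈ (Multiset.range N).map (fun i : ℕ => ((i:ℝ)+1)^2), 1 ≤ t := by
      intro t ht
      rw [Multiset.mem_map] at ht
      obtain ⟨i, _, rfl⟩ := ht
      have : (0:ℝ) ≤ i := by positivity
      nlinarith
    exact ⟨this, this⟩
  | succ n ih =>
    by_cases hn : n.Prime
    · have h1 : (1:ℝ) ≤ n := by exact_mod_cast hn.one_lt.le
      simp only [thr, if_pos hn, Multiset.mem_add, Multiset.mem_map, Multiset.mem_singleton]
      constructor
      · rintro t (ht | ⟨s, hs, rfl⟩)
        · exact ih.1 t ht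
        · exact le_max_of_le_right (one_le_pow₀ h1)
      · rintro t ((ht | ⟨s, hs, rfl⟩) | rfl)
        · exact ih.2 t ht
        · exact le_max_of_le_right (one_le_pow₀ h1)
        · exact h1
    · rw [thr_succ_not N hn]; exact ih

lemma sm_mono {A : Multiset ℝ} {f g : ℝ → ℝ} (h : ∀ t ∈ A, f t ≤ g t) : sm A f ≤ sm A g :=
  Multiset.sum_map_le_sum_map f g h

lemma Im_mono {N n : ℕ} {f g : ℝ → ℝ} (h : ∀ t, 1 ≤ t → f t ≤ g t) : Im N n f ≤ Im N n g :=
  sm_mono fun t ht => h t ((thr_ge_one N n).1 t ht)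
lemma Ip_mono {N n : ℕ} {f g : ℝ → ℝ} (h : ∀ t, 1 ≤ t → f t ≤ g t) : Ip N n f ≤ Ip N n g :=
  sm_mono fun t ht => h t ((thr_ge_one N n).2 t ht)

lemma sm_add (A : Multiset ℝ) (f g : ℝ → ℝ) : sm A (fun t => f t + g t) = sm A f + sm A g :=
  Multiset.sum_map_add
lemma sm_mul (A : Multiset ℝ) (c : ℝ) (f : ℝ → ℝ) : sm A (fun t => c * f t) = c * sm A f :=
  Multiset.sum_map_mul_left
lemma sm_zero (A : Multiset ℝ) : sm A (fun _ => 0) = 0 := by simp [sm]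

lemma Im_add (N n) (f g : ℝ → ℝ) : Im N n (fun t => f t + g t) = Im N n f + Im N n g := sm_add _ _ _
lemma Ip_add (N n) (f g : ℝ → ℝ) : Ip N n (fun t => f t + g t) = Ip N n f + Ip N n g := sm_add _ _ _
lemma Im_mul (N n) (c : ℝ) (g : ℝ → ℝ) : Im N n (fun t => c * g t) = c * Im N n g := sm_mul _ _ _
lemma Ip_mul (N n) (c : ℝ) (g : ℝ → ℝ) : Ip N n (fun t => c * g t) = c * Ip N n g := sm_mul _ _ _

lemma Im_nonneg {N n : ℕ} {g : ℝ → ℝ} (h : ∀ t, 1 ≤ t → 0 ≤ g t) : 0 ≤ Im N n g := by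
  have := Im_mono (N := N) (n := n) h
  rwa [Im, sm_zero] at this
lemma Ip_nonneg {N n : ℕ} {g : ℝ → ℝ} (h : ∀ t, 1 ≤ t → 0 ≤ g t) : 0 ≤ Ip N n g := by
  have := Ip_mono (N := N) (n := n) h
  rwa [Ip, sm_zero] at this

noncomputable def ind (X : ℝ) : ℝ → ℝ := fun t => if t ≤ X then 1 else 0

lemma ind_nonneg (X t : ℝ) : 0 ≤ ind X t := by unfold ind; split_ifs <;> norm_num

lemma I_one (N : ℕ) : Im N 1 = Im N 0 ∧ Ip N 1 = Ip N 0 := by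
  constructor <;> funext g
  · exact Im_succ_not N (by norm_num) g
  · exact Ip_succ_not N (by norm_num) g

lemma base_eq (N : ℕ) (g : ℝ → ℝ) : Im N 1 g = ∑ i ∈ Finset.range N, g (((i:ℝ)+1)^2) ∧
    Ip N 1 g = ∑ i ∈ Finset.range N, g (((i:ℝ)+1)^2) := by
  rw [(I_one N).1, (I_one N).2]
  simp only [Im, Ip, sm, thr, Multiset.map_map, Function.comp_def]
  exact ⟨rfl, rfl⟩

lemma base_cnt (N : ℕ) (X : ℝ) (hX : 1 ≤ X) (hXN : X ≤ N) :
    √X / 2 ≤ ∑ i ∈ Finset.range N, ind X (((i:ℝ)+1)^2) := by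
  set s := ⌊√X⌋₊ with hs
  have hr1 : 1 ≤ √X := Real.one_le_sqrt.2 hX
  have hr := Real.mul_self_sqrt (show 0 ≤ X by linarith)
  have h1 : (s:ℝ) ≤ √X := Nat.floor_le (by positivity)
  have h2 : √X < s + 1 := Nat.lt_floor_add_one _
  have h3 : 1 ≤ s := Nat.le_floor (by simpa using hr1)
  have h3' : (1:ℝ) ≤ s := by exact_mod_cast h3
  have hsN : s ≤ N := by
    have : (s:ℝ) ≤ N := by nlinarith
    exact_mod_cast this
  calc √X/2 ≤ s := by linarith
    _ = ∑ i ∈ Finset.range s, (1:ℝ) := by simp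
    _ ≤ ∑ i ∈ Finset.range s, ind X (((i:ℝ)+1)^2) := by
        apply Finset.sum_le_sum
        intro i hi
        rw [mem_range] at hi
        have : (i:ℝ) + 1 ≤ s := by exact_mod_cast hi
        rw [ind, if_pos]
        have : (0:ℝ) ≤ i := by positivity
        nlinarith
    _ ≤ _ := by
        apply Finset.sum_le_sum_of_subset_of_nonneg
        · intro i hi; rw [mem_range] at *; lia
        · intro i _ _; exact ind_nonneg _ _

lemma V_small {N p : ℕ} (hp : 1 ≤ p) (h : N < p * p) : V N p 0 ≤ 15 := by
  classical
  unfold V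
  have hsub : (Finset.Icc 1 N).filter
      (fun m => rough p m ∧ Even (ArithmeticFunction.cardFactors m + 0)) ⊆ {1} := by
    intro m hm
    simp only [mem_filter, mem_Icc, mem_singleton, add_zero] at *
    obtain ⟨⟨h1, h2⟩, h3, h4⟩ := hm
    by_contra hne
    have hmp : ¬ m.Prime := by
      intro hmp
      rw [ArithmeticFunction.cardFactors_apply_prime hmp] at h4
      exact absurd h4 (by decide)
    have hf := Nat.minFac_prime hne
    have hsq := Nat.minFac_sq_le_self h1 hmp
    have hge : p ≤ m.minFac := by
      by_contra hc
      exact h3 _ hf (by lia) (Nat.minFac_dvd m)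
    nlinarith
  calc _ ≤ ∑ m ∈ {1}, (N/m) % 16 := Finset.sum_le_sum_of_subset hsub
    _ ≤ 15 := by
      simp only [sum_singleton]
      have := Nat.mod_lt (N/1) (show 16 > 0 by norm_num); lia

noncomputable def kap : ℝ := 2 / Real.log 16

lemma log16_ge : 2 ≤ Real.log 16 := by
  have : Real.log 16 = 4 * Real.log 2 := by
    rw [← Real.log_rpow (by norm_num)]; norm_num
  linarith [Real.log_two_gt_d9]

lemma kap_pos : 0 < kap := div_pos (by norm_num) (by linarith [log16_ge])
lemma kap_le : kap ≤ 1 := by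
  unfold kap; rw [div_le_one (by linarith [log16_ge])]; exact log16_ge

lemma sieve_main (N : ℕ) : ∀ n : ℕ, 1 ≤ n → ∀ α X : ℝ, X ≤ N →
    ((n:ℝ)^2 ≤ X → kap * V ⌊X⌋₊ n 0 - 102 * Im N n (ind X) ≤ S α X n) ∧
    ((n:ℝ) ≤ X → (S α X n : ℝ) ≤ kap * V ⌊X⌋₊ n 1 + 102 * Ip N n (ind X)) := by
  intro n hn
  induction n, hn using Nat.le_induction with
  | base =>
    intro α X hXN
    have hk : ∀ e, e = 0 ∨ e = 1 → 1 ≤ X → |kap * (V ⌊X⌋₊ 1 e : ℝ) - X| ≤ 50 * √X := by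
      intro e he hX
      have h := V_base X hX e he
      have hl := log16_ge
      have e1 : kap * (V ⌊X⌋₊ 1 e : ℝ) - X = (2 * (V ⌊X⌋₊ 1 e : ℝ) - X * Real.log 16) / Real.log 16 := by
        unfold kap; field_simp
      rw [e1, abs_div, abs_of_pos (show 0 < Real.log 16 by linarith), div_le_iff₀ (by linarith)]
      nlinarith [Real.sqrt_nonneg X]
    rw [(base_eq N _).1, (base_eq N _).2]
    constructor
    · intro hX
      have hX1 : 1 ≤ X := by simpa using hX
      have h1 := hk 0 (Or.inl rfl) hX1
      have h2 := (S_one α X (by linarith)).1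
      have h3 := base_cnt N X hX1 hXN
      have hr1 : 1 ≤ √X := Real.one_le_sqrt.2 hX1
      rw [abs_le] at h1
      linarith
    · intro hX
      have hX1 : 1 ≤ X := by simpa using hX
      have h1 := hk 1 (Or.inr rfl) hX1
      have h2 := (S_one α X (by linarith)).2
      have h3 := base_cnt N X hX1 hXN
      have hr1 : 1 ≤ √X := Real.one_le_sqrt.2 hX1
      rw [abs_le] at h1
      linarith
  | succ p hp1 ih =>
    intro α X hXN
    by_cases hp : p.Prime
    swap
    · rw [S_succ_not hp, V_succ_not hp, V_succ_not hp, Im_succ_not N hp, Ip_succ_not N hp]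
      push_cast
      have hpp : (0:ℝ) ≤ p := by positivity
      exact ⟨fun h => (ih α X hXN).1 (by nlinarith), fun h => (ih α X hXN).2 (by linarith)⟩
    · have hpp : (1:ℝ) ≤ p := by exact_mod_cast hp.one_lt.le
      have hS := S_succ_prime hp α X
      have hS' : (S α X p : ℝ) = S α X (p+1) + S (α/p) (X/p) p := by exact_mod_cast hS
      have hfl : ⌊X⌋₊ / p = ⌊X/p⌋₊ := (Nat.floor_div_natCast X p).symm
      have hV0 := V_succ_prime hp ⌊X⌋₊ 0
      have hV1 := V_succ_prime hp ⌊X⌋₊ 1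
      rw [show 1 + 1 = 0 + 2 from rfl, V_add_two] at hV1
      rw [zero_add] at hV0
      rw [hfl] at hV0 hV1
      have hV0' : (V ⌊X⌋₊ p 0 : ℝ) = V ⌊X⌋₊ (p+1) 0 + V ⌊X/p⌋₊ p 1 := by exact_mod_cast hV0
      have hV1' : (V ⌊X⌋₊ p 1 : ℝ) = V ⌊X⌋₊ (p+1) 1 + V ⌊X/p⌋₊ p 0 := by exact_mod_cast hV1
      have hdiv : 0 ≤ X → X/p ≤ X := fun h => div_le_self h hpp
      have hind : ∀ k : ℕ, (p:ℝ)^k ≤ X →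
          (fun t => ind X (max ((p:ℝ)*t) ((p:ℝ)^k))) = ind (X/p) := by
        intro k hk
        funext t
        unfold ind
        have : max ((p:ℝ)*t) ((p:ℝ)^k) ≤ X ↔ t ≤ X/p := by
          rw [max_le_iff, le_div_iff₀ (by linarith), mul_comm]
          exact and_iff_left hk
        simp only [this]
      push_cast
      constructor
      · intro hX
        have hX0 : 0 ≤ X := le_trans (by positivity) hX
        have hX2 : (p:ℝ)^2 ≤ X := by nlinarith
        have h1 := (ih α X hXN).1 hX2
        have h2 := (ih (α/p) (X/p) ((hdiv hX0).trans hXN)).2 (by rw [le_div_iff₀ (by linarith)]; linarith)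
        rw [Im_succ N hp, hind 2 hX2]
        rw [hV0', mul_add] at h1
        linarith
      · intro hX
        have hX0 : 0 ≤ X := le_trans (by positivity) hX
        have hXp : (p:ℝ) ≤ X := by linarith
        have h1 := (ih α X hXN).2 hXp
        rw [hV1', mul_add] at h1
        rw [Ip_succ N hp]
        have hone : ind X p = 1 := by rw [ind, if_pos hXp]
        by_cases h3 : (p:ℝ)^3 ≤ X
        · have h2 := (ih (α/p) (X/p) ((hdiv hX0).trans hXN)).1
            (by rw [le_div_iff₀ (by linarith)]; linarith)
          rw [hind 3 h3, hone]
          linarith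
        · push Not at h3
          have hv : V ⌊X/p⌋₊ p 0 ≤ 15 := by
            apply V_small hp1
            rw [Nat.floor_lt (by positivity), div_lt_iff₀ (by linarith)]
            push_cast; linarith
          have hv' : (V ⌊X/p⌋₊ p 0 : ℝ) ≤ 15 := by exact_mod_cast hv
          have hk : kap * (V ⌊X/p⌋₊ p 0 : ℝ) ≤ 15 := by
            have := kap_le; have := kap_pos
            nlinarith
          have hnn : 0 ≤ Im N p (fun t => ind X (max ((p:ℝ)*t) ((p:ℝ)^3))) :=
            Im_nonneg fun t _ => ind_nonneg _ _
          have hs0 : (0:ℝ) ≤ S (α/p) (X/p) p := by positivity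
          rw [hone]
          linarith

end CSh


namespace CSh

open Finset

noncomputable def bb : ℝ := Classical.choose exists_mertens
noncomputable def BB : ℝ := Classical.choose (Classical.choose_spec exists_mertens)

lemma bb_spec : 1 ≤ bb ∧ 1 ≤ BB ∧ ∀ n : ℕ, 1 ≤ n →
    Real.log n ≤ mert n + bb ∧ mert n + bb ≤ Real.log n + BB :=
  Classical.choose_spec (Classical.choose_spec exists_mertens)

lemma BB_ge : 1 ≤ BB := bb_spec.2.1

noncomputable def Mn (n : ℕ) : ℝ := mert n + bb

lemma Mn_ge_log {n : ℕ} (hn : 1 ≤ n) : Real.log n ≤ Mn n := (bb_spec.2.2 n hn).1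
lemma Mn_le {n : ℕ} (hn : 1 ≤ n) : Mn n ≤ Real.log n + BB := (bb_spec.2.2 n hn).2
lemma Mn_ge_one (n : ℕ) : 1 ≤ Mn n := by
  have := bb_spec.1; have := mert_nonneg n; unfold Mn; linarith
lemma Mn_succ {p : ℕ} (hp : p.Prime) : Mn (p+1) = Mn p + Real.log p / p := by
  unfold Mn; rw [mert_succ_prime hp]; ring
lemma Mn_succ_not {p : ℕ} (hp : ¬ p.Prime) : Mn (p+1) = Mn p := by
  unfold Mn; rw [mert_succ_not hp]

noncomputable def sg : ℝ := 2 * BB + 4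
noncomputable def uu (τ : ℝ) : ℝ := Real.log τ + sg

noncomputable def wp (M τ : ℝ) : ℝ := ((uu τ - M)^2 + 1) / (M * τ)
noncomputable def wm (M τ : ℝ) : ℝ := ((uu τ ^ 2 + 1) / M - 2 * uu τ) / τ

lemma uu_exp {τ τ' : ℝ} (h0 : 0 < τ) (h : τ ≤ τ') : ∃ k : ℝ, 0 ≤ k ∧ uu τ' = uu τ + k ∧
    τ * (1 + k + k^2/2) ≤ τ' := by
  refine ⟨Real.log (τ'/τ), Real.log_nonneg ((one_le_div h0).2 h), ?_, ?_⟩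
  · unfold uu; rw [Real.log_div (by linarith) (by linarith)]; ring
  · have h1 := Real.quadratic_le_exp_of_nonneg (Real.log_nonneg ((one_le_div h0).2 h))
    rw [Real.exp_log (div_pos (by linarith) h0)] at h1
    calc _ ≤ τ * (τ'/τ) := mul_le_mul_of_nonneg_left h1 h0.le
      _ = τ' := by field_simp

lemma wp_anti {M τ τ' : ℝ} (hM : 0 < M) (h0 : 0 < τ) (h : τ ≤ τ') (h1 : 1 ≤ uu τ - M) :
    wp M τ' ≤ wp M τ := by
  obtain ⟨k, hk, hu, hτ⟩ := uu_exp h0 h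
  unfold wp
  rw [hu, div_le_div_iff₀ (by nlinarith) (by positivity)]
  set a := uu τ - M with ha
  have e : uu τ + k - M = a + k := by rw [ha]; ring
  rw [e]
  have h2 : ((a+k)^2+1) ≤ (a^2+1) * (1+k+k^2/2) := by
    nlinarith [mul_nonneg hk (sq_nonneg (a-1)), mul_nonneg (sq_nonneg k) (show 0 ≤ a^2 - 1 by nlinarith)]
  calc ((a+k)^2+1) * (M * τ) ≤ ((a^2+1) * (1+k+k^2/2)) * (M * τ) :=
        mul_le_mul_of_nonneg_right h2 (by positivity)
    _ = (a^2+1) * M * (τ * (1+k+k^2/2)) := by ring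
    _ ≤ (a^2+1) * M * τ' := mul_le_mul_of_nonneg_left hτ (by positivity)
    _ = _ := by ring

lemma wm_num {M u : ℝ} (hM : 1 ≤ M) (h1 : 2 * M + 1 ≤ u) : 1 ≤ (u^2+1)/M - 2*u := by
  have : (u^2+1)/M - 2*u = (u*(u-2*M)+1)/M := by
    have : M ≠ 0 := by linarith
    field_simp
    ring
  rw [this, le_div_iff₀ (by linarith)]
  nlinarith

lemma wm_anti {M τ τ' : ℝ} (hM : 1 ≤ M) (h0 : 0 < τ) (h : τ ≤ τ') (h1 : 2 * M + 1 ≤ uu τ) :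
    wm M τ' ≤ wm M τ := by
  obtain ⟨k, hk, hu, hτ⟩ := uu_exp h0 h
  unfold wm
  have e : ∀ u : ℝ, (u^2+1)/M - 2*u = (u*(u-2*M)+1)/M := by
    intro u; have : M ≠ 0 := by linarith
    field_simp
    ring
  rw [hu, e, e, div_div, div_div, div_le_div_iff₀ (by nlinarith) (by positivity)]
  set u := uu τ
  have hf : 2 * (u - M) ≤ u*(u-2*M)+1 := by nlinarith
  have hf2 : 2 ≤ u*(u-2*M)+1 := by nlinarith
  have h2 : ((u+k)*(u+k-2*M)+1) ≤ (u*(u-2*M)+1) * (1+k+k^2/2) := by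
    nlinarith [mul_nonneg hk (sub_nonneg.2 hf), mul_nonneg (sq_nonneg k) (sub_nonneg.2 hf2)]
  have hM0 : 0 ≤ M := by linarith
  calc ((u+k)*(u+k-2*M)+1) * (M * τ) ≤ ((u*(u-2*M)+1) * (1+k+k^2/2)) * (M * τ) :=
        mul_le_mul_of_nonneg_right h2 (by positivity)
    _ = (u*(u-2*M)+1) * M * (τ * (1+k+k^2/2)) := by ring
    _ ≤ (u*(u-2*M)+1) * M * τ' := mul_le_mul_of_nonneg_left hτ (mul_nonneg (by linarith) hM0)
    _ = _ := by ring

lemma sum1 {M M' l p u : ℝ} (hM : 1 ≤ M) (hp : 0 < p) (hl : 0 ≤ l) (hlM : l ≤ M)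
    (hM' : M' = M + l / p) (hu : 0 ≤ u) :
    ((u-M')^2+1)/M' + (((u+l)^2+1)/M' - 2*(u+l))/p ≤
      (1 + (M-l)/(p*M')) * (((u-M)^2+1)/M) := by
  have hlp : 0 ≤ l/p := by positivity
  have hM'0 : 0 < M' := by linarith
  have hl' : l = p * (M' - M) := by rw [hM']; field_simp; ring
  have key : (1 + (M-l)/(p*M')) * (((u-M)^2+1)/M) - (((u-M')^2+1)/M' + (((u+l)^2+1)/M' - 2*(u+l))/p)
     = ((M-l) * M + l*(M'-l) + 2*u*(M'-M))/(p*M') := by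
    have : M ≠ 0 := by linarith
    field_simp
    rw [hl']; ring
  have : 0 ≤ ((M-l) * M + l*(M'-l) + 2*u*(M'-M))/(p*M') := by
    apply div_nonneg _ (by positivity)
    have a1 : 0 ≤ (M-l)*M := mul_nonneg (by linarith) (by linarith)
    have a2 : 0 ≤ l*(M'-l) := mul_nonneg hl (by linarith)
    have a3 : 0 ≤ 2*u*(M'-M) := mul_nonneg (by linarith) (by linarith)
    linarith
  linarith

lemma sum2 {M M' l p u : ℝ} (hM : 1 ≤ M) (hp : 0 < p) (hl : 0 ≤ l) (_hlM : l ≤ M)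
    (hM' : M' = M + l / p) (hu : 2 * M + 1 ≤ u) :
    ((u^2+1)/M' - 2*u) + (((u+l-M')^2+1)/M')/p ≤
      (1 + (M-l+(M'-l)^2)/(p*M')) * ((u^2+1)/M - 2*u) := by
  have hlp : 0 ≤ l/p := by positivity
  have hM'0 : 0 < M' := by linarith
  have hl' : l = p * (M' - M) := by rw [hM']; field_simp; ring
  have key : (1 + (M-l+(M'-l)^2)/(p*M')) * ((u^2+1)/M - 2*u) - (((u^2+1)/M' - 2*u) + (((u+l-M')^2+1)/M')/p)
     = (2*u*(M'-M) + (M'-l)^2*((u^2+1)/M - 2*u - 1))/(p*M') := by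
    have : M ≠ 0 := by linarith
    field_simp
    rw [hl']; ring
  have : 0 ≤ (2*u*(M'-M) + (M'-l)^2*((u^2+1)/M - 2*u - 1))/(p*M') := by
    apply div_nonneg _ (by positivity)
    have a1 : 0 ≤ 2*u*(M'-M) := mul_nonneg (by linarith) (by linarith)
    have a2 := mul_nonneg (sq_nonneg (M'-l)) (sub_nonneg.2 (wm_num hM hu))
    linarith
  linarith

noncomputable def Wp (n : ℕ) (t : ℝ) : ℝ := wp (Mn n) (max t n)
noncomputable def Wm (n : ℕ) (t : ℝ) : ℝ := wm (Mn n) (max t ((n:ℝ)^2))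
noncomputable def J (N n : ℕ) : ℝ := Ip N n (Wp n) + Im N n (Wm n)

lemma Wp_nonneg (n : ℕ) {t : ℝ} (ht : 1 ≤ t) : 0 ≤ Wp n t := by
  unfold Wp wp
  have := Mn_ge_one n
  have : 1 ≤ max t n := le_max_of_le_left ht
  positivity

/-- bounds on `u` -/
lemma uu_ge {n : ℕ} (hn : 1 ≤ n) {τ : ℝ} (k : ℕ) (h : (n:ℝ)^k ≤ τ) :
    k * Mn n + (2 - k) * BB + 4 ≤ uu τ := by
  have hn' : (1:ℝ) ≤ n := by exact_mod_cast hn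
  have h1 : Real.log ((n:ℝ)^k) ≤ Real.log τ := Real.log_le_log (by positivity) h
  rw [Real.log_pow] at h1
  have h2 := Mn_le hn
  have : (k:ℝ) * Mn n ≤ k * (Real.log n + BB) := mul_le_mul_of_nonneg_left h2 (by positivity)
  unfold uu sg
  linarith

lemma Wm_nonneg {n : ℕ} (hn : 1 ≤ n) (t : ℝ) : 0 ≤ Wm n t := by
  unfold Wm wm
  have hn' : (1:ℝ) ≤ n := by exact_mod_cast hn
  have h0 : 1 ≤ max t ((n:ℝ)^2) := le_max_of_le_right (one_le_pow₀ hn')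
  have h1 := uu_ge hn 2 (le_max_right t ((n:ℝ)^2))
  push_cast at h1
  apply div_nonneg _ (by linarith)
  have := wm_num (Mn_ge_one n) (u := uu (max t ((n:ℝ)^2))) (by linarith)
  linarith

lemma J_nonneg {N n : ℕ} (hn : 1 ≤ n) : 0 ≤ J N n :=
  add_nonneg (Ip_nonneg fun _ ht => Wp_nonneg n ht) (Im_nonneg fun t _ => Wm_nonneg hn t)

lemma J_succ_not (N : ℕ) {n : ℕ} (hn1 : 1 ≤ n) (hn : ¬ n.Prime) : J N (n+1) ≤ J N n := by
  unfold J
  rw [Ip_succ_not N hn, Im_succ_not N hn]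
  have hn' : (1:ℝ) ≤ n := by exact_mod_cast hn1
  have hB := BB_ge
  apply add_le_add
  · apply Ip_mono
    intro t ht
    unfold Wp
    rw [Mn_succ_not hn]
    have h1 := uu_ge hn1 1 (τ := max t n) (by simp)
    push_cast at h1
    apply wp_anti (by linarith [Mn_ge_one n]) (by positivity) _ (by linarith)
    push_cast
    exact max_le_max le_rfl (by linarith)
  · apply Im_mono
    intro t ht
    unfold Wm
    rw [Mn_succ_not hn]
    have h1 := uu_ge hn1 2 (le_max_right t ((n:ℝ)^2))
    push_cast at h1
    apply wm_anti (Mn_ge_one n) (by positivity) _ (by linarith)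
    push_cast
    exact max_le_max le_rfl (by nlinarith)

noncomputable def cJ : ℝ := BB + (BB+1)^2 + sg^2 + 1

lemma logp_facts {p : ℕ} (hp : p.Prime) : 1/2 ≤ Real.log p ∧ Real.log p / p ≤ 1 ∧ 0 < Real.log p / p ∧
    Mn (p+1) = Mn p + Real.log p / p := by
  have h2 : (2:ℝ) ≤ p := by exact_mod_cast hp.two_le
  have h3 : 1/2 ≤ Real.log p := by
    have := Real.log_le_log (by norm_num) h2
    linarith [Real.log_two_gt_d9]
  refine ⟨h3, ?_, ?_, Mn_succ hp⟩
  · rw [div_le_one (by linarith)]; exact (Real.log_le_sub_one_of_pos (by linarith)).trans (by linarith)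
  · exact div_pos (by linarith) (by linarith)

lemma Wp_step {p : ℕ} (hp : p.Prime) {t : ℝ} (ht : 1 ≤ t) :
    Wp (p+1) t + Wm (p+1) (max ((p:ℝ)*t) ((p:ℝ)^2)) ≤ (1 + cJ/(p * Mn (p+1))) * Wp p t := by
  obtain ⟨hl, hl1, hl2, hM⟩ := logp_facts hp
  have hp1 : 1 ≤ p := hp.one_lt.le
  have hp' : (1:ℝ) ≤ p := by exact_mod_cast hp1
  have hB := BB_ge
  have hM1 := Mn_ge_one p
  have hlM := Mn_ge_log hp1
  have hMl := Mn_le hp1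
  set τ := max t p with hτ
  have hτ0 : 0 < τ := lt_of_lt_of_le (by linarith) (le_max_left _ _)
  have hu := uu_ge hp1 1 (τ := τ) (by simp [hτ])
  push_cast at hu
  have hpτ : max ((p:ℝ)*t) ((p:ℝ)^2) = p * τ := by
    rw [hτ, mul_max_of_nonneg _ _ (by linarith), sq]
  have hupτ : uu (p*τ) = uu τ + Real.log p := by
    unfold uu; rw [Real.log_mul (by linarith) (by linarith)]; ring
  have hupτ2 := uu_ge hp1 2 (τ := p * τ) (by rw [← hpτ]; exact le_max_right _ _)
  push_cast at hupτ2
  have a1 : Wp (p+1) t ≤ wp (Mn (p+1)) τ := by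
    unfold Wp
    apply wp_anti (by linarith [Mn_ge_one (p+1)]) hτ0 _ (by linarith)
    push_cast
    exact max_le_max le_rfl (by linarith)
  have a2 : Wm (p+1) (max ((p:ℝ)*t) ((p:ℝ)^2)) ≤ wm (Mn (p+1)) (p*τ) := by
    unfold Wm
    rw [hpτ]
    apply wm_anti (Mn_ge_one _) (by positivity) (le_max_left _ _) (by linarith)
  have h := sum1 (M := Mn p) (M' := Mn (p+1)) (l := Real.log p) (p := p) (u := uu τ) hM1
    (by linarith) (by linarith) hlM hM (by linarith)
  have hWp : Wp p t = (((uu τ - Mn p)^2+1)/Mn p) / τ := by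
    unfold Wp wp; rw [← hτ, div_div]
  have e1 : wp (Mn (p+1)) τ + wm (Mn (p+1)) (p*τ) = (((uu τ-Mn (p+1))^2+1)/Mn (p+1) +
      (((uu τ+Real.log p)^2+1)/Mn (p+1) - 2*(uu τ+Real.log p))/p)/τ := by
    unfold wp wm; rw [hupτ]; 
    have : Mn (p+1) ≠ 0 := by linarith
    have : (p:ℝ) ≠ 0 := by linarith
    field_simp
  have e2 : wp (Mn (p+1)) τ + wm (Mn (p+1)) (p*τ) ≤ (1 + (Mn p - Real.log p)/(p*Mn (p+1))) * Wp p t := by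
    rw [e1, hWp, ← mul_div_assoc]
    gcongr
  refine (add_le_add a1 a2).trans (e2.trans ?_)
  apply mul_le_mul_of_nonneg_right _ (Wp_nonneg p ht)
  have : 0 < Mn (p+1) := by linarith
  gcongr
  unfold cJ
  nlinarith [sq_nonneg sg, sq_nonneg (BB+1)]

lemma Wm_step {p : ℕ} (hp : p.Prime) {t : ℝ} :
    Wm (p+1) t + Wp (p+1) (max ((p:ℝ)*t) ((p:ℝ)^3)) ≤ (1 + cJ/(p * Mn (p+1))) * Wm p t := by
  obtain ⟨hl, hl1, hl2, hM⟩ := logp_facts hp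
  have hp1 : 1 ≤ p := hp.one_lt.le
  have hp' : (2:ℝ) ≤ p := by exact_mod_cast hp.two_le
  have hB := BB_ge
  have hM1 := Mn_ge_one p
  have hlM := Mn_ge_log hp1
  have hMl := Mn_le hp1
  set τ := max t ((p:ℝ)^2) with hτ
  have hτ0 : 0 < τ := lt_of_lt_of_le (by positivity) (le_max_right _ _)
  have hu := uu_ge hp1 2 (τ := τ) (by simp [hτ])
  push_cast at hu
  have hpτ : max ((p:ℝ)*t) ((p:ℝ)^3) = p * τ := by
    rw [hτ, mul_max_of_nonneg _ _ (by linarith)]; congr 1; ring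
  have hupτ : uu (p*τ) = uu τ + Real.log p := by
    unfold uu; rw [Real.log_mul (by linarith) (by linarith)]; ring
  have a1 : Wm (p+1) t ≤ wm (Mn (p+1)) τ := by
    unfold Wm
    apply wm_anti (Mn_ge_one (p+1)) hτ0 _ (by linarith)
    push_cast
    exact max_le_max le_rfl (by nlinarith)
  have a2 : Wp (p+1) (max ((p:ℝ)*t) ((p:ℝ)^3)) ≤ wp (Mn (p+1)) (p*τ) := by
    unfold Wp
    rw [hpτ]
    apply wp_anti (by linarith [Mn_ge_one (p+1)]) (by positivity) (le_max_left _ _) (by linarith)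
  have h := sum2 (M := Mn p) (M' := Mn (p+1)) (l := Real.log p) (p := p) (u := uu τ) hM1
    (by linarith) (by linarith) hlM hM (by linarith)
  have hWm : Wm p t = ((uu τ^2+1)/Mn p - 2 * uu τ) / τ := by
    unfold Wm wm; rw [← hτ]
  have e1 : wm (Mn (p+1)) τ + wp (Mn (p+1)) (p*τ) = (((uu τ^2+1)/Mn (p+1) - 2 * uu τ) + 
      (((uu τ + Real.log p - Mn (p+1))^2+1)/Mn (p+1))/p)/τ := by
    unfold wp wm; rw [hupτ]; 
    have : Mn (p+1) ≠ 0 := by linarith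
    have : (p:ℝ) ≠ 0 := by linarith
    field_simp
  have e2 : wm (Mn (p+1)) τ + wp (Mn (p+1)) (p*τ) ≤
      (1 + (Mn p - Real.log p + (Mn (p+1) - Real.log p)^2)/(p*Mn (p+1))) * Wm p t := by
    rw [e1, hWm, ← mul_div_assoc]
    gcongr
  refine (add_le_add a1 a2).trans (e2.trans ?_)
  apply mul_le_mul_of_nonneg_right _ (Wm_nonneg hp1 t)
  have : 0 < Mn (p+1) := by linarith
  have h5 : (Mn (p+1) - Real.log p)^2 ≤ (BB+1)^2 := by
    apply pow_le_pow_left₀ <;> linarith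
  gcongr
  unfold cJ
  nlinarith [sq_nonneg sg]

lemma source_step {p : ℕ} (hp : p.Prime) : Wp (p+1) p ≤ cJ/(p * Mn (p+1)) := by
  obtain ⟨hl, hl1, hl2, hM⟩ := logp_facts hp
  have hp1 : 1 ≤ p := hp.one_lt.le
  have hp' : (2:ℝ) ≤ p := by exact_mod_cast hp.two_le
  have hB := BB_ge
  have hM1 := Mn_ge_one p
  have hlM := Mn_ge_log hp1
  have hMl := Mn_le hp1
  have hu := uu_ge hp1 1 (τ := p) (by simp)
  push_cast at hu
  have a1 : Wp (p+1) p ≤ wp (Mn (p+1)) p := by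
    unfold Wp
    apply wp_anti (by linarith [Mn_ge_one (p+1)]) (by linarith) (le_max_left _ _) (by linarith)
  refine a1.trans ?_
  unfold wp
  rw [mul_comm (p:ℝ)]
  have : 0 < Mn (p+1) := by linarith
  gcongr
  have h5 : (uu p - Mn (p+1))^2 ≤ sg^2 := by
    apply pow_le_pow_left₀
    · linarith
    · unfold uu; linarith
  unfold cJ
  nlinarith [sq_nonneg (BB+1)]

lemma J_succ (N : ℕ) {p : ℕ} (hp : p.Prime) :
    J N (p+1) + 1 ≤ (1 + cJ/(p * Mn (p+1))) * (J N p + 1) := by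
  unfold J
  rw [Ip_succ N hp, Im_succ N hp]
  have h1 : Ip N p (Wp (p+1)) + Ip N p (fun t => Wm (p+1) (max ((p:ℝ)*t) ((p:ℝ)^2))) ≤
      (1 + cJ/(p * Mn (p+1))) * Ip N p (Wp p) := by
    rw [← Ip_add, ← Ip_mul]
    exact Ip_mono fun t ht => Wp_step hp ht
  have h2 : Im N p (Wm (p+1)) + Im N p (fun t => Wp (p+1) (max ((p:ℝ)*t) ((p:ℝ)^3))) ≤
      (1 + cJ/(p * Mn (p+1))) * Im N p (Wm p) := by
    rw [← Im_add, ← Im_mul]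
    exact Im_mono fun t ht => Wm_step hp
  have h3 := source_step hp
  nlinarith

lemma inv_step {p : ℕ} (hp : p.Prime) :
    1 / (p * Mn (p+1)) ≤ (1 + 2*BB) * (1/Mn p - 1/Mn (p+1)) := by
  obtain ⟨hl, hl1, hl2, hM⟩ := logp_facts hp
  have hp1 : 1 ≤ p := hp.one_lt.le
  have hp' : (2:ℝ) ≤ p := by exact_mod_cast hp.two_le
  have hM1 := Mn_ge_one p
  have hMl := Mn_le hp1
  have hB := BB_ge
  have hM' : 0 < Mn (p+1) := by linarith
  have e : (1 + 2*BB) * (1/Mn p - 1/Mn (p+1)) = (1+2*BB) * (Mn (p+1) - Mn p) / (Mn p * Mn (p+1)) := by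
    have : Mn p ≠ 0 := by linarith
    field_simp
  rw [e, show Mn (p+1) - Mn p = Real.log p / p by linarith, div_le_div_iff₀ (by positivity) (by positivity)]
  have : (1 + 2*BB) * (Real.log p / p) * (p * Mn (p+1)) = (1+2*BB) * Real.log p * Mn (p+1) := by
    field_simp
  rw [this, one_mul]
  apply mul_le_mul_of_nonneg_right _ hM'.le
  nlinarith

lemma exp_step {p : ℕ} (hp : p.Prime) {c : ℝ} (hc : 0 ≤ c) :
    (1 + c/(p * Mn (p+1))) * Real.exp (c * (1+2*BB) / Mn (p+1)) ≤ Real.exp (c * (1+2*BB) / Mn p) := by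
  have h := inv_step hp
  have h1 : 1 + c/(p * Mn (p+1)) ≤ Real.exp (c * ((1+2*BB) * (1/Mn p - 1/Mn (p+1)))) := by
    have h2 := Real.add_one_le_exp (c * ((1+2*BB) * (1/Mn p - 1/Mn (p+1))))
    have h3 := mul_le_mul_of_nonneg_left h hc
    have e : c * (1/(p * Mn (p+1))) = c/(p * Mn (p+1)) := by ring
    linarith
  calc _ ≤ Real.exp (c * ((1+2*BB) * (1/Mn p - 1/Mn (p+1)))) * Real.exp (c * (1+2*BB) / Mn (p+1)) :=
        mul_le_mul_of_nonneg_right h1 (Real.exp_pos _).le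
    _ = _ := by rw [← Real.exp_add]; congr 1; ring

lemma cJ_pos : 0 ≤ cJ := by
  unfold cJ; have := BB_ge; nlinarith [sq_nonneg sg, sq_nonneg (BB+1)]

lemma J_bound_base (N : ℕ) : ∀ n, 1 ≤ n →
    (J N n + 1) * Real.exp (cJ * (1+2*BB) / Mn n) ≤ (J N 1 + 1) * Real.exp (cJ * (1+2*BB) / Mn 1) := by
  intro n hn
  induction n, hn using Nat.le_induction with
  | base => exact le_rfl
  | succ p hp1 ih =>
    refine le_trans ?_ ih
    by_cases hp : p.Prime
    · have h1 := J_succ N hp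
      have h2 := exp_step hp cJ_pos
      calc _ ≤ ((1 + cJ/(p * Mn (p+1))) * (J N p + 1)) * Real.exp (cJ * (1+2*BB) / Mn (p+1)) :=
            mul_le_mul_of_nonneg_right h1 (Real.exp_pos _).le
        _ = (J N p + 1) * ((1 + cJ/(p * Mn (p+1))) * Real.exp (cJ * (1+2*BB) / Mn (p+1))) := by ring
        _ ≤ _ := mul_le_mul_of_nonneg_left h2 (by linarith [J_nonneg (N := N) hp1])
    · rw [Mn_succ_not hp]
      have := J_succ_not N hp1 hp
      gcongr

lemma base_sum_bound (s : ℝ) (hs : 0 ≤ s) : ∃ C : ℝ, 0 ≤ C ∧ ∀ N : ℕ,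
    ∑ i ∈ Finset.range N, (Real.log (((i:ℝ)+1)^2) + s)^3 / ((i:ℝ)+1)^2 ≤ C := by
  have hsum : Summable (fun i : ℕ => (12+s)^3 * (((i+1:ℕ):ℝ)^(3/2:ℝ))⁻¹) := by
    apply Summable.mul_left
    exact (summable_nat_add_iff 1).2 ((Real.summable_nat_rpow_inv (p := 3/2)).2 (by norm_num))
  refine ⟨∑' i : ℕ, (12+s)^3 * (((i+1:ℕ):ℝ)^(3/2:ℝ))⁻¹, tsum_nonneg fun _ => by positivity, fun N => ?_⟩
  refine le_trans (Finset.sum_le_sum fun i _ => ?_) (hsum.sum_le_tsum (Finset.range N) (fun _ _ => by positivity))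
  have hy : (1:ℝ) ≤ ((i+1:ℕ):ℝ) := by push_cast; linarith [show (0:ℝ) ≤ i by positivity]
  have e : (i:ℝ)+1 = ((i+1:ℕ):ℝ) := by push_cast; ring
  rw [e]
  set y : ℝ := ((i+1:ℕ):ℝ)
  have hl : Real.log y ≤ 6 * y^(1/6:ℝ) := by
    have := Real.log_le_rpow_div (x := y) (by positivity) (ε := 1/6) (by norm_num)
    linarith
  have hl0 := Real.log_nonneg hy
  have h1 : 1 ≤ y^(1/6:ℝ) := Real.one_le_rpow hy (by norm_num)
  have h2 : Real.log (y^2) + s ≤ (12+s) * y^(1/6:ℝ) := by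
    rw [Real.log_pow]; push_cast; nlinarith
  have h3 : (Real.log (y^2) + s)^3 ≤ ((12+s) * y^(1/6:ℝ))^3 := by
    apply pow_le_pow_left₀ _ h2
    rw [Real.log_pow]; positivity
  have h4 : (y^(1/6:ℝ))^3 = y^(1/2:ℝ) := by
    rw [← Real.rpow_natCast, ← Real.rpow_mul (by positivity)]; norm_num
  have h5 : y^2 = y^(1/2:ℝ) * y^(3/2:ℝ) := by
    rw [← Real.rpow_add (by positivity)]; norm_num
  rw [mul_pow, h4] at h3
  rw [div_le_iff₀ (by positivity)]
  refine h3.trans (le_of_eq ?_)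
  rw [h5]
  have : y^(3/2:ℝ) ≠ 0 := by positivity
  field_simp

lemma exists_J_bound : ∃ C : ℝ, 1 ≤ C ∧ ∀ N n : ℕ, 1 ≤ n → J N n ≤ C := by
  have hB := BB_ge
  have hb := Mn_ge_one 1
  set s := sg + Mn 1 + 1 with hs
  have hsg : 6 ≤ sg := by unfold sg; linarith
  obtain ⟨C, hC, h⟩ := base_sum_bound s (by linarith)
  refine ⟨(2*C+1) * Real.exp (cJ * (1+2*BB) / Mn 1) + 1, ?_, fun N n hn => ?_⟩
  · have := Real.exp_pos (cJ * (1+2*BB) / Mn 1); nlinarith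
  have h1 := J_bound_base N n hn
  have hpt : ∀ t : ℝ, 1 ≤ t → Wp 1 t ≤ (Real.log t + s)^3/t ∧ Wm 1 t ≤ (Real.log t + s)^3/t := by
    intro t ht
    have hl := Real.log_nonneg ht
    have e1 : max t ((1:ℕ):ℝ) = t := by simpa using ht
    have e2 : max t (((1:ℕ):ℝ)^2) = t := by simpa using ht
    unfold Wp Wm wp wm
    rw [e1, e2]
    have hu : uu t = Real.log t + sg := rfl
    set v := Real.log t + s with hv
    have huv : uu t + Mn 1 + 1 = v := by rw [hu, hv, hs]; ring
    have hu0 : 0 ≤ uu t := by rw [hu]; linarith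
    have hv1 : 1 ≤ v := by linarith
    have hv23 : v^2 ≤ v^3 := by nlinarith [sq_nonneg v]
    constructor
    · rw [← div_div]
      gcongr
      rw [div_le_iff₀ (by linarith)]
      have : (uu t - Mn 1)^2 + 1 ≤ v^2 := by rw [← huv]; nlinarith
      nlinarith
    · gcongr
      have : (uu t^2+1)/Mn 1 ≤ uu t^2 + 1 := div_le_self (by positivity) hb
      have : uu t^2 + 1 ≤ v^2 := by rw [← huv]; nlinarith
      linarith
  have h2 : J N 1 ≤ 2 * C := by
    unfold J
    have a1 := Ip_mono (N := N) (n := 1) fun t ht => (hpt t ht).1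
    have a2 := Im_mono (N := N) (n := 1) fun t ht => (hpt t ht).2
    rw [(base_eq N _).2, (base_eq N _).2] at a1
    rw [(base_eq N _).1, (base_eq N _).1] at a2
    rw [(base_eq N _).2, (base_eq N _).1]
    linarith [h N]
  have h4 : 1 ≤ Real.exp (cJ * (1+2*BB) / Mn n) := by
    apply Real.one_le_exp
    have := Mn_ge_one n; have := cJ_pos
    positivity
  have h5 := J_nonneg (N := N) hn
  have h6 : (J N 1 + 1) * Real.exp (cJ * (1+2*BB) / Mn 1) ≤ (2*C+1) * Real.exp (cJ * (1+2*BB) / Mn 1) := by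
    gcongr
  nlinarith

end CSh


namespace CSh

open Finset

noncomputable def HH (M t : ℝ) : ℝ := (max (Real.log t - 3 * M) 0)^3 / (M * t)

lemma HH_nonneg {M t : ℝ} (hM : 1 ≤ M) (ht : 1 ≤ t) : 0 ≤ HH M t := by
  unfold HH
  have : 0 ≤ max (Real.log t - 3 * M) 0 := le_max_right _ _
  positivity

lemma HH_zero {M t : ℝ} (h : Real.log t ≤ 3 * M) : HH M t = 0 := by
  unfold HH
  rw [max_eq_right (by linarith)]; simp

lemma HH_le {M M' t : ℝ} (hM : 1 ≤ M) (h : M ≤ M') (ht : 1 ≤ t) : HH M' t ≤ HH M t * (M / M') := by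
  unfold HH
  have h0 : 0 ≤ max (Real.log t - 3 * M') 0 := le_max_right _ _
  have h1 : max (Real.log t - 3 * M') 0 ≤ max (Real.log t - 3 * M) 0 := max_le_max (by linarith) le_rfl
  have e : (max (Real.log t - 3 * M) 0)^3 / (M * t) * (M / M') = (max (Real.log t - 3 * M) 0)^3 / (M' * t) := by
    have : M ≠ 0 := by linarith
    have : M' ≠ 0 := by linarith
    field_simp
  rw [e]
  have : 0 < M' := by linarith
  gcongr

lemma HH_step {M M' l B p W t q : ℝ} (hM : 1 ≤ M) (hp : 2 ≤ p) (hl : l = Real.log p) (hl0 : 0 < l)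
    (hlM : l ≤ M) (hB : M ≤ l + B) (hB0 : 0 ≤ B) (hM' : M' = M + l / p) (ht : 1 ≤ t)
    (_hq1 : 0 < q) (hq : Real.log q ≤ 3 * M) (hW0 : 0 ≤ W)
    (hW : 2 * M < Real.log t → Real.log t * (Real.log t - 2 * M) / (M * t) ≤ W) :
    HH M' t + HH M' (max (p*t) q) ≤ (1 + B/(p*M')) * HH M t + (3*M/p) * W := by
  have hlp : 0 < l/p := by positivity
  have hMM : M ≤ M' := by linarith
  have hM0 : 0 < M := by linarith
  have hM'0 : 0 < M' := by linarith
  have h1 := HH_le hM hMM ht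
  have hH := HH_nonneg hM ht
  have hH' := HH_nonneg (hM.trans hMM) ht
  have hMd : M / M' ≤ 1 := by rw [div_le_one hM'0]; exact hMM
  have hb : 0 ≤ B/(p*M') := by positivity
  have hw : 0 ≤ (3*M/p) * W := by positivity
  have triv : HH M' t ≤ (1 + B/(p*M')) * HH M t + (3*M/p) * W := by nlinarith
  by_cases hmax : p*t ≤ q
  · rw [max_eq_right hmax, HH_zero (by linarith : Real.log q ≤ 3 * M'), add_zero]
    exact triv
  rw [max_eq_left (not_le.1 hmax).le]
  have hlog : Real.log (p*t) = Real.log t + l := by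
    rw [Real.log_mul (by linarith) (by linarith), hl]; ring
  by_cases hy : Real.log t ≤ 2 * M
  · rw [HH_zero (by rw [hlog]; linarith : Real.log (p*t) ≤ 3 * M'), add_zero]
    exact triv
  push Not at hy
  have hW' := hW hy
  set y := Real.log t with hyd
  set a := y - 2*M with ha
  have ha0 : 0 < a := by linarith
  set m := max (y - 3 * M) 0 with hm
  have hm0 : 0 ≤ m := le_max_right _ _
  have hma : m = max (a - M) 0 := by rw [hm, ha]; ring_nf
  have hcub : a^3 ≤ m^3 + 3*M*(y*a) := by
    have hay : a ≤ y := by linarith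
    have h3 : 3*M*a^2 ≤ 3*M*(y*a) := by
      have : a^2 ≤ y*a := by nlinarith
      nlinarith
    rcases le_total M a with h | h
    · rw [hma, max_eq_left (by linarith)]
      nlinarith [mul_nonneg (sq_nonneg M) (sub_nonneg.2 h), pow_pos hM0 3]
    · have : a^3 ≤ M * a^2 := by nlinarith [sq_nonneg a]
      have := pow_nonneg hm0 3
      nlinarith [mul_nonneg hM0.le (sq_nonneg a)]
  have h2 : HH M' (p*t) ≤ a^3/(M'*(p*t)) := by
    unfold HH
    have h0 : 0 ≤ max (Real.log (p*t) - 3 * M') 0 := le_max_right _ _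
    have h1 : max (Real.log (p*t) - 3 * M') 0 ≤ a := max_le (by rw [hlog]; linarith) ha0.le
    gcongr
  have h3 : a^3/(M'*(p*t)) ≤ (m^3 + 3*M*(y*a))/(M'*(p*t)) := by gcongr
  have hHH : HH M t = m^3/(M*t) := by unfold HH; rw [← hyd]
  have h4 : (m^3 + 3*M*(y*a))/(M'*(p*t)) = HH M t * (M/(p*M')) + (3*M/p) * (y*a/(M'*t)) := by
    rw [hHH]; field_simp
  have h5 : y*a/(M'*t) ≤ y*a/(M*t) := by
    have : 0 ≤ y * a := mul_nonneg (by linarith) ha0.le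
    gcongr
  have h6 : (3*M/p) * (y*a/(M'*t)) ≤ (3*M/p) * W := by
    apply mul_le_mul_of_nonneg_left (h5.trans hW') (by positivity)
  have h7 : HH M t * (M/M') + HH M t * (M/(p*M')) ≤ (1 + B/(p*M')) * HH M t := by
    have e : M/M' = 1 - l/(p*M') := by rw [hM']; field_simp; ring
    have e2 : (1 + B/(p*M')) * HH M t - (HH M t * (M/M') + HH M t * (M/(p*M'))) = HH M t * ((l + B - M)/(p*M')) := by
      rw [e]; ring
    have : 0 ≤ HH M t * ((l + B - M)/(p*M')) := mul_nonneg hH (div_nonneg (by linarith) (by positivity))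
    linarith
  linarith

noncomputable def RR (N n : ℕ) : ℝ := Ip N n (HH (Mn n)) + Im N n (HH (Mn n))

lemma RR_nonneg (N n : ℕ) : 0 ≤ RR N n :=
  add_nonneg (Ip_nonneg fun _ ht => HH_nonneg (Mn_ge_one n) ht) (Im_nonneg fun _ ht => HH_nonneg (Mn_ge_one n) ht)

lemma log_big {n : ℕ} (hn : 1 ≤ n) {t : ℝ} (ht : 1 ≤ t) (h : 2 * Mn n < Real.log t) :
    (n:ℝ)^2 ≤ t ∧ (n:ℝ) ≤ t := by
  have hn' : (1:ℝ) ≤ n := by exact_mod_cast hn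
  have h1 : Real.log ((n:ℝ)^2) < Real.log t := by
    rw [Real.log_pow]; push_cast; linarith [Mn_ge_log hn]
  have h2 := (Real.log_lt_log_iff (by positivity) (by linarith)).1 h1
  exact ⟨h2.le, by nlinarith⟩

lemma Wp_big {n : ℕ} (hn : 1 ≤ n) {t : ℝ} (ht : 1 ≤ t) (h : 2 * Mn n < Real.log t) :
    Real.log t * (Real.log t - 2 * Mn n) / (Mn n * t) ≤ Wp n t := by
  obtain ⟨h1, h2⟩ := log_big hn ht h
  unfold Wp wp
  rw [max_eq_left h2]
  have hM := Mn_ge_one n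
  have hB := BB_ge
  have hsg : 6 ≤ sg := by unfold sg; linarith
  gcongr
  unfold uu
  nlinarith

lemma Wm_big {n : ℕ} (hn : 1 ≤ n) {t : ℝ} (ht : 1 ≤ t) (h : 2 * Mn n < Real.log t) :
    Real.log t * (Real.log t - 2 * Mn n) / (Mn n * t) ≤ Wm n t := by
  obtain ⟨h1, h2⟩ := log_big hn ht h
  unfold Wm wm
  rw [max_eq_left h1]
  have hM := Mn_ge_one n
  have hB := BB_ge
  have hsg : 6 ≤ sg := by unfold sg; linarith
  rw [← div_div]
  gcongr
  have e : (uu t^2+1)/Mn n - 2 * uu t = (uu t * (uu t - 2 * Mn n) + 1)/Mn n := by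
    have : Mn n ≠ 0 := by linarith
    field_simp
    ring
  rw [e]
  gcongr
  unfold uu
  nlinarith

lemma RR_succ (N : ℕ) {p : ℕ} (hp : p.Prime) :
    RR N (p+1) ≤ (1 + BB/(p * Mn (p+1))) * RR N p + (3 * Mn p / p) * J N p := by
  obtain ⟨hl, hl1, hl2, hM⟩ := logp_facts hp
  have hp1 : 1 ≤ p := hp.one_lt.le
  have hp' : (2:ℝ) ≤ p := by exact_mod_cast hp.two_le
  have hB := BB_ge
  have hM1 := Mn_ge_one p
  have hlM := Mn_ge_log hp1
  have hMl := Mn_le hp1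
  unfold RR
  rw [Ip_succ N hp, Im_succ N hp]
  rw [HH_zero (by linarith : Real.log p ≤ 3 * Mn (p+1))]
  have h1 : Ip N p (HH (Mn (p+1))) + Ip N p (fun t => HH (Mn (p+1)) (max ((p:ℝ)*t) ((p:ℝ)^2))) ≤
      (1 + BB/(p * Mn (p+1))) * Ip N p (HH (Mn p)) + (3 * Mn p / p) * Ip N p (Wp p) := by
    rw [← Ip_add, ← Ip_mul, ← Ip_mul, ← Ip_add]
    exact Ip_mono fun t ht => HH_step hM1 hp' rfl (by linarith) hlM hMl (by linarith) hM ht (by positivity)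
      (by rw [Real.log_pow]; push_cast; linarith) (Wp_nonneg p ht) (Wp_big hp1 ht)
  have h2 : Im N p (HH (Mn (p+1))) + Im N p (fun t => HH (Mn (p+1)) (max ((p:ℝ)*t) ((p:ℝ)^3))) ≤
      (1 + BB/(p * Mn (p+1))) * Im N p (HH (Mn p)) + (3 * Mn p / p) * Im N p (Wm p) := by
    rw [← Im_add, ← Im_mul, ← Im_mul, ← Im_add]
    exact Im_mono fun t ht => HH_step hM1 hp' rfl (by linarith) hlM hMl (by linarith) hM ht (by positivity)
      (by rw [Real.log_pow]; push_cast; linarith) (Wm_nonneg hp1 t) (Wm_big hp1 ht)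
  unfold J
  linarith

lemma exists_RR_bound : ∃ C : ℝ, 1 ≤ C ∧ ∀ N n : ℕ, 1 ≤ n → RR N n ≤ C * Mn n := by
  obtain ⟨CJ, hCJ, hJ⟩ := exists_J_bound
  have hB := BB_ge
  obtain ⟨C, hC, h⟩ := base_sum_bound 0 le_rfl
  set E : ℕ → ℝ := fun n => Real.exp (BB * (1+2*BB) / Mn n) with hE
  set E0 := Real.exp (BB * (1+2*BB)) with hE0
  have hE1 : ∀ n, 1 ≤ E n ∧ E n ≤ E0 := by
    intro n
    have := Mn_ge_one n
    constructor
    · apply Real.one_le_exp; positivity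
    · apply Real.exp_le_exp.2; exact div_le_self (by positivity) this
  have hE01 : 1 ≤ E0 := (hE1 1).1.trans (hE1 1).2
  set C3 := 3 * (1+2*BB) * CJ * E0 with hC3
  have hC30 : 0 ≤ C3 := by positivity
  have key : ∀ N n : ℕ, 1 ≤ n → RR N n * E n ≤ 2*C*E0 + C3 * Mn n := by
    intro N n hn
    induction n, hn using Nat.le_induction with
    | base =>
      have hpt : ∀ t : ℝ, 1 ≤ t → HH (Mn 1) t ≤ (Real.log t + 0)^3/t := by
        intro t ht
        have hM := Mn_ge_one 1
        have hl := Real.log_nonneg ht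
        unfold HH
        have h0 : 0 ≤ max (Real.log t - 3 * Mn 1) 0 := le_max_right _ _
        have : max (Real.log t - 3 * Mn 1) 0 ≤ Real.log t + 0 := max_le (by linarith) (by linarith)
        have h3 : t ≤ Mn 1 * t := by nlinarith
        gcongr
      have a1 := Ip_mono (N := N) (n := 1) hpt
      have a2 := Im_mono (N := N) (n := 1) hpt
      rw [(base_eq N _).2, (base_eq N _).2] at a1
      rw [(base_eq N _).1, (base_eq N _).1] at a2
      have h1 : RR N 1 ≤ 2 * C := by
        unfold RR
        rw [(base_eq N _).2, (base_eq N _).1]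
        linarith [h N]
      have h2 := Mn_ge_one 1
      have h3 : RR N 1 * E 1 ≤ 2 * C * E0 :=
        mul_le_mul h1 (hE1 1).2 (by linarith [(hE1 1).1]) (by linarith)
      nlinarith
    | succ p hp1 ih =>
      by_cases hp : p.Prime
      · obtain ⟨hl, hl1, hl2, hM⟩ := logp_facts hp
        have hp' : (2:ℝ) ≤ p := by exact_mod_cast hp.two_le
        have h1 := RR_succ N hp
        have h2 := exp_step hp (c := BB) (by linarith)
        have hM1 := Mn_ge_one p
        have hMl := Mn_le hp1
        have h3 : (3 * Mn p / p) * J N p ≤ 3 * (1+2*BB) * CJ * (Mn (p+1) - Mn p) := by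
          rw [hM, add_sub_cancel_left]
          have a : 3 * Mn p / p ≤ 3 * (1+2*BB) * (Real.log p / p) := by
            rw [← mul_div_assoc]; apply div_le_div_of_nonneg_right _ (by linarith); nlinarith
          calc _ ≤ (3 * (1+2*BB) * (Real.log p / p)) * CJ :=
                mul_le_mul a (hJ N p hp1) (J_nonneg hp1) (by positivity)
            _ = _ := by ring
        have h4 : 0 ≤ 3 * (1+2*BB) * CJ * (Mn (p+1) - Mn p) := by
          have : 0 ≤ Mn (p+1) - Mn p := by linarith
          positivity
        calc RR N (p+1) * E (p+1) ≤ ((1 + BB/(p * Mn (p+1))) * RR N p + 3 * (1+2*BB) * CJ * (Mn (p+1) - Mn p)) * E (p+1) :=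
              mul_le_mul_of_nonneg_right (by linarith) (by linarith [(hE1 (p+1)).1])
          _ = RR N p * ((1 + BB/(p * Mn (p+1))) * E (p+1)) + 3 * (1+2*BB) * CJ * (Mn (p+1) - Mn p) * E (p+1) := by ring
          _ ≤ RR N p * E p + 3 * (1+2*BB) * CJ * (Mn (p+1) - Mn p) * E0 :=
              add_le_add (mul_le_mul_of_nonneg_left h2 (RR_nonneg N p)) (mul_le_mul_of_nonneg_left (hE1 _).2 h4)
          _ ≤ (2*C*E0 + C3 * Mn p) + 3 * (1+2*BB) * CJ * (Mn (p+1) - Mn p) * E0 := by linarith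
          _ = _ := by rw [hC3]; ring
      · have e1 : RR N (p+1) = RR N p := by
          unfold RR; rw [Ip_succ_not N hp, Im_succ_not N hp, Mn_succ_not hp]
        have e2 : E (p+1) = E p := by simp only [hE]; rw [Mn_succ_not hp]
        rw [e1, e2, Mn_succ_not hp]; exact ih
  refine ⟨2*C*E0 + C3 + 1, by have := mul_nonneg hC (by linarith : 0 ≤ E0); linarith, fun N n hn => ?_⟩
  have h1 := key N n hn
  have h2 := RR_nonneg N n
  have h3 := (hE1 n).1
  have h4 := Mn_ge_one n
  have h5 : 0 ≤ 2*C*E0 := by positivity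
  nlinarith

end CSh


namespace CSh

open Finset

noncomputable def CJ : ℝ := Classical.choose exists_J_bound
lemma CJ_ge : 1 ≤ CJ := (Classical.choose_spec exists_J_bound).1
lemma J_le {N n : ℕ} (hn : 1 ≤ n) : J N n ≤ CJ := (Classical.choose_spec exists_J_bound).2 N n hn
noncomputable def CR : ℝ := Classical.choose exists_RR_bound
lemma CR_ge : 1 ≤ CR := (Classical.choose_spec exists_RR_bound).1
lemma RR_le {N n : ℕ} (hn : 1 ≤ n) : RR N n ≤ CR * Mn n := (Classical.choose_spec exists_RR_bound).2 N n hn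

lemma Ip_Wp_le {N n : ℕ} (hn : 1 ≤ n) : Ip N n (Wp n) ≤ CJ := by
  have h := J_le (N := N) hn
  unfold J at h
  have := Im_nonneg (N := N) (n := n) fun t _ => Wm_nonneg hn t
  linarith
lemma Im_Wm_le {N n : ℕ} (hn : 1 ≤ n) : Im N n (Wm n) ≤ CJ := by
  have h := J_le (N := N) hn
  unfold J at h
  have := Ip_nonneg (N := N) (n := n) fun t ht => Wp_nonneg n ht
  linarith
lemma Ip_HH_le {N n : ℕ} (hn : 1 ≤ n) : Ip N n (HH (Mn n)) ≤ CR * Mn n := by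
  have h := RR_le (N := N) hn
  unfold RR at h
  have := Im_nonneg (N := N) (n := n) fun t ht => HH_nonneg (Mn_ge_one n) ht
  linarith
lemma Im_HH_le {N n : ℕ} (hn : 1 ≤ n) : Im N n (HH (Mn n)) ≤ CR * Mn n := by
  have h := RR_le (N := N) hn
  unfold RR at h
  have := Ip_nonneg (N := N) (n := n) fun t ht => HH_nonneg (Mn_ge_one n) ht
  linarith

/-- pointwise lower bound for `Wp` -/
lemma Wp_lower {n : ℕ} (hn : 1 ≤ n) {t τ : ℝ} (ht : 1 ≤ t) (h1 : t ≤ τ) (h2 : (n:ℝ)^2 ≤ τ) :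
    1/τ ≤ 1/Mn n * Wp n t := by
  have hn' : (1:ℝ) ≤ n := by exact_mod_cast hn
  have hM := Mn_ge_one n
  have hB := BB_ge
  have hu := uu_ge hn 1 (τ := max t n) (by simp)
  have hu2 := uu_ge hn 2 h2
  push_cast at hu hu2
  have hτ : 0 < τ := by linarith
  have h3 : wp (Mn n) τ ≤ Wp n t := by
    unfold Wp
    apply wp_anti (by linarith) (lt_of_lt_of_le (by linarith) (le_max_left t _)) _ (by linarith)
    exact max_le h1 (by nlinarith)
  have h4 : Mn n / τ ≤ wp (Mn n) τ := by
    unfold wp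
    rw [← div_div]
    gcongr
    rw [le_div_iff₀ (by linarith)]
    nlinarith
  calc 1/τ = 1/Mn n * (Mn n/τ) := by field_simp
    _ ≤ _ := mul_le_mul_of_nonneg_left (h4.trans h3) (by positivity)

lemma Wp_lower' {n : ℕ} (hn : 1 ≤ n) {t τ : ℝ} (ht : 1 ≤ t) (h1 : t ≤ τ) (h2 : (n:ℝ) ≤ τ) :
    1/τ ≤ Mn n * Wp n t := by
  have hM := Mn_ge_one n
  have hτ : 0 < max t n := lt_of_lt_of_le (by linarith) (le_max_left t _)
  have h3 : max t n ≤ τ := max_le h1 h2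
  have e : Mn n * Wp n t = ((uu (max t n) - Mn n)^2 + 1) / max t n := by
    unfold Wp wp
    field_simp
  rw [e]
  have : (1:ℝ) ≤ (uu (max t n) - Mn n)^2 + 1 := by nlinarith [sq_nonneg (uu (max t n) - Mn n)]
  gcongr

lemma Wm_lower {n : ℕ} (hn : 1 ≤ n) {t τ : ℝ} (ht : 1 ≤ t) (h1 : t ≤ τ) (h2 : (n:ℝ)^2 ≤ τ) :
    1/τ ≤ Wm n t := by
  have hM := Mn_ge_one n
  have hu := uu_ge hn 2 (τ := max t ((n:ℝ)^2)) (by simp)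
  have hu2 := uu_ge hn 2 h2
  push_cast at hu hu2
  have hτ : 0 < τ := by linarith
  have h3 : wm (Mn n) τ ≤ Wm n t := by
    unfold Wm
    apply wm_anti (by linarith) (lt_of_lt_of_le (by linarith) (le_max_left t _)) _ (by linarith)
    exact max_le h1 h2
  have h4 : 1 / τ ≤ wm (Mn n) τ := by
    unfold wm
    gcongr
    apply wm_num hM (by linarith)
  linarith

lemma PA {N n : ℕ} (hn : 1 ≤ n) {Y : ℝ} (hY : (n:ℝ)^2 ≤ Y) :
    Ip N n (fun t => 1/max t Y) ≤ CJ / Mn n := by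
  have h : Ip N n (fun t => 1/max t Y) ≤ Ip N n (fun t => 1/Mn n * Wp n t) :=
    Ip_mono fun t ht => Wp_lower hn ht (le_max_left _ _) (hY.trans (le_max_right _ _))
  rw [Ip_mul] at h
  have hM := Mn_ge_one n
  have := mul_le_mul_of_nonneg_left (Ip_Wp_le (N := N) hn) (show 0 ≤ 1/Mn n by positivity)
  have e : 1/Mn n * CJ = CJ / Mn n := by ring
  linarith

lemma HH_lower {M x t : ℝ} (hM : 1 ≤ M) (hx : 0 < x) (hMx : 9 * M ≤ x) (ht : 1 ≤ t) (h : x/2 ≤ Real.log t) :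
    1/t ≤ 216 * M / x^3 * HH M t := by
  have h1 : (x/6)^3/(M*t) ≤ HH M t := by
    unfold HH
    have : x/6 ≤ max (Real.log t - 3 * M) 0 := le_max_of_le_left (by linarith)
    gcongr
  have h2 := mul_le_mul_of_nonneg_left h1 (show 0 ≤ 216 * M / x^3 by positivity)
  have e : 216 * M / x^3 * ((x/6)^3/(M*t)) = 1/t := by field_simp; norm_num
  linarith

lemma x_cube {x : ℝ} (hx : 0 ≤ x) : x^3 ≤ 6000 * Real.exp (x/10) := by
  have := Real.pow_div_factorial_le_exp (x/10) (by positivity) 3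
  have e : ((3).factorial : ℝ) = 6 := by norm_num [Nat.factorial]
  rw [e] at this
  have : (x/10)^3 = x^3/1000 := by ring
  linarith

lemma small_facts {n : ℕ} (hn : 1 ≤ n) {X : ℝ} (hx : 90 * BB ≤ Real.log X) (hX0 : 0 < X)
    (h : (n:ℝ)^10 ≤ X) : 9 * Mn n ≤ Real.log X ∧ (n:ℝ) ≤ Real.exp (Real.log X/10) := by
  have hn' : (1:ℝ) ≤ n := by exact_mod_cast hn
  have h1 := Real.log_le_log (by positivity) h
  rw [Real.log_pow] at h1
  push_cast at h1
  refine ⟨by have := Mn_le hn; linarith, ?_⟩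
  rw [← Real.exp_log (show (0:ℝ) < n by linarith)]
  apply Real.exp_le_exp.2; linarith

noncomputable def CP : ℝ := 216 * CR + 6000 * CJ

lemma lemP {N n : ℕ} (hn : 1 ≤ n) {X : ℝ} (hx : 90 * BB ≤ Real.log X) (hX0 : 0 < X)
    (hn3 : (n:ℝ)^3 ≤ X) : Ip N n (fun t => 1/max t (X/n)) ≤ CP * Mn n^2/(Real.log X)^3 := by
  have hB := BB_ge
  have hn' : (1:ℝ) ≤ n := by exact_mod_cast hn
  have hM := Mn_ge_one n
  set x := Real.log X with hxd
  have hx0 : 0 < x := by linarith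
  have hCJ := CJ_ge
  have hCR := CR_ge
  have hY : (n:ℝ)^2 ≤ X/n := by rw [le_div_iff₀ (by linarith)]; nlinarith
  by_cases h10 : X < (n:ℝ)^10
  · refine (PA hn hY).trans ?_
    have h1 := Real.log_lt_log hX0 h10
    rw [Real.log_pow] at h1
    push_cast at h1
    have h2 : x ≤ 10 * Mn n := by linarith [Mn_ge_log hn]
    rw [div_le_div_iff₀ (by linarith) (by positivity)]
    have h3 : x^3 ≤ (10 * Mn n)^3 := by gcongr
    unfold CP
    calc CJ * x^3 ≤ CJ * (10 * Mn n)^3 := by gcongr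
      _ = 1000 * CJ * Mn n^3 := by ring
      _ ≤ (216 * CR + 6000 * CJ) * Mn n^3 := by gcongr; linarith
      _ = _ := by ring
  push Not at h10
  obtain ⟨h9, hne⟩ := small_facts hn hx hX0 h10
  have hXe : X = Real.exp x := (Real.exp_log hX0).symm
  have hpt : ∀ t : ℝ, 1 ≤ t → 1/max t (X/n) ≤ 216 * Mn n / x^3 * HH (Mn n) t + 6000 * Mn n^2 / x^3 * Wp n t := by
    intro t ht
    have hW := Wp_nonneg n ht
    have hH := HH_nonneg hM ht
    by_cases h : x/2 ≤ Real.log t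
    · have h1 := HH_lower hM hx0 h9 ht h
      have h2 : 1/max t (X/n) ≤ 1/t := one_div_le_one_div_of_le (by linarith) (le_max_left _ _)
      have : 0 ≤ 6000 * Mn n^2 / x^3 * Wp n t := by positivity
      linarith
    · push Not at h
      have h0 : t ≤ Real.exp (x/2) := by
        rw [← Real.exp_log (show 0 < t by linarith)]; exact Real.exp_le_exp.2 h.le
      have h00 : (n:ℝ) ≤ Real.exp (x/2) := hne.trans (Real.exp_le_exp.2 (by linarith))
      have h1 := Wp_lower' hn ht h0 h00
      have h2 : 1/max t (X/n) ≤ 1/(X/n) := one_div_le_one_div_of_le (by positivity) (le_max_right _ _)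
      have h3 : 1/(X/n) ≤ 6000 / x^3 * (1/Real.exp (x/2)) := by
        rw [one_div_div, div_mul_div_comm, div_le_div_iff₀ hX0 (by positivity)]
        calc (n:ℝ) * (x^3 * Real.exp (x/2)) ≤ Real.exp (x/10) * ((6000 * Real.exp (x/10)) * Real.exp (x/2)) := by
              gcongr; exact x_cube hx0.le
          _ = 6000 * Real.exp (x/10 + x/10 + x/2) := by rw [Real.exp_add, Real.exp_add]; ring
          _ ≤ 6000 * Real.exp x := by gcongr; linarith
          _ = _ := by rw [hXe]; ring
      have h4 : 6000 / x^3 * (1/Real.exp (x/2)) ≤ 6000 / x^3 * (Mn n * Wp n t) := by gcongr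
      have h5 : 6000 / x^3 * (Mn n * Wp n t) ≤ 6000 * Mn n^2 / x^3 * Wp n t := by
        have e1 : 6000 / x^3 * (Mn n * Wp n t) = 6000 / x^3 * (Mn n * 1 * Wp n t) := by ring
        have e2 : 6000 * Mn n^2 / x^3 * Wp n t = 6000 / x^3 * (Mn n * Mn n * Wp n t) := by ring
        rw [e1, e2]
        gcongr
      have : 0 ≤ 216 * Mn n / x^3 * HH (Mn n) t := by positivity
      linarith
  have h := Ip_mono (N := N) (n := n) hpt
  rw [Ip_add, Ip_mul, Ip_mul] at h
  refine h.trans ?_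
  calc _ ≤ 216 * Mn n / x^3 * (CR * Mn n) + 6000 * Mn n^2 / x^3 * CJ := by
        gcongr
        · exact Ip_HH_le hn
        · exact Ip_Wp_le hn
    _ = _ := by unfold CP; ring

lemma Im_small {N n : ℕ} (hn : 1 ≤ n) {X : ℝ} (hx : 90 * BB ≤ Real.log X) (hX0 : 0 < X)
    (h10 : (n:ℝ)^10 ≤ X) : Im N n (ind X) ≤ CP * Mn n^2 * X/(Real.log X)^3 := by
  have hB := BB_ge
  have hn' : (1:ℝ) ≤ n := by exact_mod_cast hn
  have hM := Mn_ge_one n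
  set x := Real.log X with hxd
  have hx0 : 0 < x := by linarith
  have hCJ := CJ_ge
  have hCR := CR_ge
  obtain ⟨h9, hne⟩ := small_facts hn hx hX0 h10
  have hXe : X = Real.exp x := (Real.exp_log hX0).symm
  have hpt : ∀ t : ℝ, 1 ≤ t → ind X t ≤ X * (216 * Mn n / x^3) * HH (Mn n) t + X * (6000/x^3) * Wm n t := by
    intro t ht
    have hW := Wm_nonneg hn t
    have hH := HH_nonneg hM ht
    have a1 : 0 ≤ X * (216 * Mn n / x^3) * HH (Mn n) t := by positivity
    have a2 : 0 ≤ X * (6000/x^3) * Wm n t := by positivity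
    unfold ind
    split_ifs with hX
    swap
    · linarith
    by_cases h : x/2 ≤ Real.log t
    · have h1 := HH_lower hM hx0 h9 ht h
      have h2 : 1 ≤ X * (1/t) := by rw [mul_one_div, one_le_div (by linarith)]; exact hX
      have h3 := mul_le_mul_of_nonneg_left h1 hX0.le
      rw [← mul_assoc] at h3
      linarith
    · push Not at h
      have h0 : t ≤ Real.exp (x/2) := by
        rw [← Real.exp_log (show 0 < t by linarith)]; exact Real.exp_le_exp.2 h.le
      have h00 : (n:ℝ)^2 ≤ Real.exp (x/2) := by
        calc (n:ℝ)^2 ≤ (Real.exp (x/10))^2 := by gcongr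
          _ = Real.exp (x/10 + x/10) := by rw [Real.exp_add]; ring
          _ ≤ _ := Real.exp_le_exp.2 (by linarith)
      have h1 := Wm_lower hn ht h0 h00
      have h2 : 1 ≤ X * (6000/x^3) * (1/Real.exp (x/2)) := by
        have e : X * (6000/x^3) * (1/Real.exp (x/2)) = (X * 6000) / (x^3 * Real.exp (x/2)) := by
          field_simp
        rw [e, one_le_div (by positivity)]
        calc x^3 * Real.exp (x/2) ≤ (6000 * Real.exp (x/10)) * Real.exp (x/2) := by
              gcongr; exact x_cube hx0.le
          _ = 6000 * Real.exp (x/10 + x/2) := by rw [Real.exp_add]; ring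
          _ ≤ 6000 * Real.exp x := by gcongr; linarith
          _ = _ := by rw [hXe]; ring
      have h3 := mul_le_mul_of_nonneg_left h1 (show 0 ≤ X * (6000/x^3) by positivity)
      linarith
  have h := Im_mono (N := N) (n := n) hpt
  rw [Im_add, Im_mul, Im_mul] at h
  refine h.trans ?_
  calc _ ≤ X * (216 * Mn n / x^3) * (CR * Mn n) + X * (6000/x^3) * CJ := by
        gcongr
        · exact Im_HH_le hn
        · exact Im_Wm_le hn
    _ = (216 * CR * Mn n^2 + 6000 * CJ) * X/x^3 := by ring
    _ ≤ _ := by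
        unfold CP
        gcongr
        nlinarith [mul_nonneg (show 0 ≤ CJ by linarith) (show 0 ≤ Mn n^2 - 1 by nlinarith)]

lemma Ip_mono_n {N m n : ℕ} (h : m ≤ n) {g : ℝ → ℝ} (hg : ∀ t, 1 ≤ t → 0 ≤ g t) :
    Ip N m g ≤ Ip N n g := by
  induction n, h using Nat.le_induction with
  | base => exact le_rfl
  | succ p _ ih =>
    refine ih.trans ?_
    by_cases hp : p.Prime
    · rw [Ip_succ N hp]
      have hp' : (1:ℝ) ≤ p := by exact_mod_cast hp.one_lt.le
      have h1 : 0 ≤ Im N p (fun t => g (max ((p:ℝ)*t) ((p:ℝ)^3))) :=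
        Im_nonneg fun t ht => hg _ (le_max_of_le_left (by nlinarith))
      have := hg p hp'
      linarith
    · rw [Ip_succ_not N hp]

lemma Im_step {N p : ℕ} (hp : p.Prime) {X : ℝ} (h : (p:ℝ)^2 ≤ X) :
    Im N (p+1) (ind X) = Im N p (ind X) + Ip N p (fun t => ind X (p*t)) := by
  rw [Im_succ N hp]
  congr 2
  funext t
  unfold ind
  simp [h]

noncomputable def cnt (n' m : ℕ) (X t : ℝ) : ℝ :=
  (((P m).filter (fun q => n' ≤ q ∧ (q:ℝ)*t ≤ X)).card : ℝ)

lemma cnt_succ_prime {n' p : ℕ} (hp : p.Prime) (h : n' ≤ p) (X t : ℝ) :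
    cnt n' (p+1) X t = cnt n' p X t + ind X (p*t) := by
  unfold cnt ind
  rw [P_succ_prime hp, Finset.filter_insert]
  by_cases hX : (p:ℝ)*t ≤ X
  · rw [if_pos ⟨h, hX⟩, if_pos hX, Finset.card_insert_of_notMem (by simp [notMem_P])]
    push_cast; ring
  · rw [if_neg (by tauto), if_neg hX]; simp

lemma Im_accum {N n' nT n : ℕ} {X E : ℝ} (hE : 0 ≤ E) (hX : (n:ℝ)^2 ≤ X)
    (hF : ∀ q : ℕ, q.Prime → n' ≤ q → q < n →
      Ip N q (fun t => ind X (q*t)) ≤ Ip N nT (fun t => ind X (q*t)) + E) (hn : n' ≤ n) :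
    Im N n (ind X) ≤ Im N n' (ind X) + Ip N nT (cnt n' n X) + E * (P n).card := by
  suffices H : ∀ m, n' ≤ m → m ≤ n →
      Im N m (ind X) ≤ Im N n' (ind X) + Ip N nT (cnt n' m X) + E * (P m).card from H n hn le_rfl
  intro m hm
  induction m, hm using Nat.le_induction with
  | base =>
    intro _
    have h1 : 0 ≤ Ip N nT (cnt n' n' X) := Ip_nonneg fun t _ => by unfold cnt; positivity
    have : 0 ≤ E * ((P n').card:ℝ) := by positivity
    linarith
  | succ p hp1 ih =>
    intro hpn
    have ih := ih (by lia)
    by_cases hp : p.Prime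
    · have hpn' : (p:ℝ) ≤ n := by exact_mod_cast (show p ≤ n by lia)
      have e : cnt n' (p+1) X = fun t => cnt n' p X t + ind X (p*t) := by
        funext t; exact cnt_succ_prime hp hp1 X t
      rw [Im_step hp (le_trans (by gcongr) hX), e, Ip_add, P_succ_prime hp,
        Finset.card_insert_of_notMem (by simp [notMem_P])]
      have := hF p hp hp1 (by lia)
      push_cast
      have e2 : Ip N nT (cnt n' p X) = Ip N nT (fun t => cnt n' p X t) := rfl
      linarith
    · have e : cnt n' (p+1) X = cnt n' p X := by
        funext t; unfold cnt; rw [P_succ_not hp]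
      rw [Im_succ_not N hp, e, P_succ_not hp]
      exact ih

lemma cnt_le {n' n : ℕ} (hn' : 2 ≤ n') (h : n ≤ n'^2) (hn : n' ≤ n) {X t : ℝ} (hX : 0 < X) (ht : 1 ≤ t) :
    cnt n' n X t ≤ (12 * X / Real.log n) * (1/max t (X/n)) := by
  have hn2 : (2:ℝ) ≤ n := by exact_mod_cast hn'.trans hn
  have hlog : 0 < Real.log n := Real.log_pos (by linarith)
  have hmax : 0 < max t (X/n) := lt_of_lt_of_le (by linarith) (le_max_left _ _)
  unfold cnt
  rcases ((P n).filter (fun q => n' ≤ q ∧ (q:ℝ)*t ≤ X)).eq_empty_or_nonempty with he | ⟨q, hq⟩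
  · rw [he]; simp; positivity
  set y := X / max t (X/n) with hy
  have hle : ∀ r : ℕ, (r:ℝ) ≤ n → (r:ℝ) * t ≤ X → (r:ℝ) ≤ y := by
    intro r h1 h2
    rw [hy, le_div_iff₀ hmax, mul_max_of_nonneg _ _ (by positivity)]
    apply max_le h2
    calc (r:ℝ) * (X/n) ≤ n * (X/n) := by gcongr
      _ = X := by field_simp
  simp only [mem_filter, mem_P] at hq
  have hqy := hle q (by exact_mod_cast hq.1.1.le) hq.2.2
  have hq' : (n':ℝ) ≤ q := by exact_mod_cast hq.2.1
  have hn'2 : (2:ℝ) ≤ n' := by exact_mod_cast hn'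
  have hy1 : (n':ℝ) ≤ y := hq'.trans hqy
  have hlogy : Real.log n ≤ 2 * Real.log y := by
    have h1 : (n:ℝ) ≤ y^2 := by
      have : (n:ℝ) ≤ (n':ℝ)^2 := by exact_mod_cast h
      exact this.trans (by gcongr)
    have := Real.log_le_log (by linarith) h1
    rw [Real.log_pow] at this
    exact_mod_cast this
  have hcard : (((P n).filter (fun q => n' ≤ q ∧ (q:ℝ)*t ≤ X)).card : ℝ) ≤ Nat.primeCounting ⌊y⌋₊ := by
    refine le_trans ?_ (card_P_le (⌊y⌋₊+1) y ?_)
    · have : ((P n).filter (fun q => n' ≤ q ∧ (q:ℝ)*t ≤ X)).card ≤ (P (⌊y⌋₊+1)).card := by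
        apply Finset.card_le_card
        intro r hr
        simp only [mem_filter, mem_P] at hr ⊢
        refine ⟨Nat.lt_succ_of_le (Nat.le_floor (hle r (by exact_mod_cast hr.1.1.le) hr.2.2)), hr.1.2⟩
      exact_mod_cast this
    · push_cast; linarith [Nat.floor_le (show 0 ≤ y by linarith)]
  have hpi := pi_upper6 (y := y) (by linarith)
  refine hcard.trans (hpi.trans ?_)
  have hly : 0 < Real.log y := by linarith
  have e : (12 * X / Real.log n) * (1/max t (X/n)) = 12 * y / Real.log n := by rw [hy]; ring
  rw [e, div_le_div_iff₀ hly hlog]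
  have hy0 : 0 ≤ y := by linarith
  nlinarith

end CSh


namespace CSh

open Finset

lemma log2_ge : (1/2:ℝ) ≤ Real.log 2 := by linarith [Real.log_two_gt_d9]

lemma CP_ge : 1 ≤ CP := by
  unfold CP; linarith [CJ_ge, CR_ge]

lemma Mn_le_mul {n : ℕ} (hn : 2 ≤ n) : Mn n ≤ (1+2*BB) * Real.log n := by
  have h := Mn_le (show 1 ≤ n by lia)
  have h2 : (1/2:ℝ) ≤ Real.log n :=
    log2_ge.trans (Real.log_le_log (by norm_num) (by exact_mod_cast hn))
  nlinarith [BB_ge]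

noncomputable def CK : ℝ := 12 * CP * (1+2*BB)^2

lemma CK_pos : 0 < CK := by
  unfold CK; have := CP_ge; have := BB_ge; positivity

lemma Im_scale {N n' n : ℕ} (hn' : 2 ≤ n') (h : n ≤ n'^2) (hn : n' ≤ n) {X : ℝ} (hX : 0 < X)
    (hx : 90 * BB ≤ Real.log X) (hn3 : (n:ℝ)^3 ≤ X) :
    Im N n (ind X) ≤ Im N n' (ind X) + CK * Real.log n * (X/(Real.log X)^3) := by
  have hB := BB_ge
  have hn2 : (2:ℝ) ≤ n := by exact_mod_cast hn'.trans hn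
  have hlog : 0 < Real.log n := Real.log_pos (by linarith)
  have hM := Mn_ge_one n
  have hMm := Mn_le_mul (hn'.trans hn)
  have hCP := CP_ge
  have hx0 : 0 < Real.log X := by linarith
  have h1 := Im_accum (N := N) (n' := n') (nT := n) (n := n) (X := X) (E := 0) le_rfl
    (le_trans (by nlinarith [sq_nonneg (n:ℝ)]) hn3)
    (fun q _ _ hqn => by
      rw [add_zero]
      exact Ip_mono_n hqn.le fun t _ => ind_nonneg _ _) hn
  have h2 : Ip N n (cnt n' n X) ≤ (12 * X / Real.log n) * (CP * Mn n^2/(Real.log X)^3) := by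
    refine (Ip_mono fun t ht => cnt_le hn' h hn hX ht).trans ?_
    rw [Ip_mul]
    gcongr
    exact lemP (by lia) hx hX hn3
  have h3 : (12 * X / Real.log n) * (CP * Mn n^2/(Real.log X)^3) ≤ CK * Real.log n * (X/(Real.log X)^3) := by
    have : Mn n^2 ≤ ((1+2*BB) * Real.log n)^2 := by gcongr
    calc _ ≤ (12 * X / Real.log n) * (CP * ((1+2*BB) * Real.log n)^2/(Real.log X)^3) := by gcongr
      _ = _ := by unfold CK; field_simp
  simp only [zero_mul, add_zero] at h1
  linarith

noncomputable def CB : ℝ := CP * (Real.log 16 + BB)^2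

lemma Im_low {N : ℕ} {X : ℝ} (hX : 0 < X) (hx : 90 * BB ≤ Real.log X) (hx2 : 40 * Real.log 2 ≤ Real.log X) :
    ∀ n : ℕ, 1 ≤ n → (n:ℝ)^3 ≤ X →
    Im N n (ind X) ≤ (4 * CK * Real.log n + CB) * (X/(Real.log X)^3) := by
  intro n
  induction n using Nat.strong_induction_on with
  | _ n ih =>
  intro hn hn3
  have hB := BB_ge
  have hx0 : 0 < Real.log X := by linarith
  have hK := CK_pos
  have hCP := CP_ge
  have hZ : 0 ≤ X/(Real.log X)^3 := by positivity
  by_cases h16 : n < 16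
  · have hX16 : (16:ℝ)^10 ≤ X := by
      rw [← Real.exp_log hX, ← Real.exp_log (show (0:ℝ) < 16^10 by norm_num)]
      apply Real.exp_le_exp.2
      have : Real.log (16^10) = 40 * Real.log 2 := by
        rw [show (16:ℝ)^10 = 2^40 by norm_num, Real.log_pow]; norm_num
      linarith
    have hn16 : (n:ℝ) ≤ 16 := by exact_mod_cast h16.le
    have hn1 : (1:ℝ) ≤ n := by exact_mod_cast hn
    have h1 := Im_small (N := N) hn hx hX (le_trans (by gcongr) hX16)
    refine h1.trans ?_
    have hM := Mn_ge_one n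
    have hM2 : Mn n ≤ Real.log 16 + BB := by
      have := Mn_le hn
      have := Real.log_le_log (by linarith) hn16
      linarith
    have hln := Real.log_nonneg hn1
    calc CP * Mn n^2 * X/(Real.log X)^3 ≤ CP * (Real.log 16 + BB)^2 * X/(Real.log X)^3 := by gcongr
      _ = CB * (X/(Real.log X)^3) := by unfold CB; ring
      _ ≤ _ := by
        apply mul_le_mul_of_nonneg_right _ hZ
        have : 0 ≤ 4 * CK * Real.log n := by positivity
        linarith
  · push Not at h16
    set n' := Nat.sqrt n + 1 with hn'
    have hs := Nat.sqrt_le' n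
    have hs2 := Nat.lt_succ_sqrt' n
    have hs4 : 4 ≤ Nat.sqrt n := Nat.le_sqrt'.2 (by lia)
    have hlt : n' < n := by nlinarith
    have hnn : n' * n' ≤ 4 * n := by nlinarith
    have h1 := Im_scale (N := N) (n' := n') (n := n) (by lia) (by simpa using hs2.le) hlt.le hX hx hn3
    have hlt' : (n':ℝ) ≤ n := by exact_mod_cast hlt.le
    have h2 := ih n' hlt (by lia) (le_trans (by gcongr) hn3)
    have hn'0 : (0:ℝ) < n' := by positivity
    have hn0 : (0:ℝ) < n := by exact_mod_cast hn
    have h3 : 2 * Real.log n' ≤ 2 * Real.log 2 + Real.log n := by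
      have : (n':ℝ)^2 ≤ 2^2 * n := by
        have : ((n' * n' : ℕ):ℝ) ≤ ((4 * n:ℕ):ℝ) := by exact_mod_cast hnn
        push_cast at this
        nlinarith
      have := Real.log_le_log (by positivity) this
      rw [Real.log_pow, Real.log_mul (by norm_num) hn0.ne', Real.log_pow] at this
      exact_mod_cast this
    have h4 : 4 * Real.log 2 ≤ Real.log n := by
      have : Real.log ((2:ℝ)^4) ≤ Real.log n := Real.log_le_log (by norm_num) (by norm_num; exact_mod_cast h16)
      rw [Real.log_pow] at this
      exact_mod_cast this
    have h5 : (4 * CK * Real.log n' + CB) + CK * Real.log n ≤ 4 * CK * Real.log n + CB := by nlinarith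
    calc _ ≤ _ := h1
      _ ≤ (4 * CK * Real.log n' + CB) * (X/(Real.log X)^3) + CK * Real.log n * (X/(Real.log X)^3) := by linarith
      _ = ((4 * CK * Real.log n' + CB) + CK * Real.log n) * (X/(Real.log X)^3) := by ring
      _ ≤ _ := mul_le_mul_of_nonneg_right h5 hZ

/-- no spawning above `n1` -/
lemma Ip_top {N n1 q : ℕ} {X : ℝ} (h4 : X < (n1:ℝ)^4) (hq : n1 ≤ q) :
    Ip N q (fun t => ind X (q*t)) ≤ Ip N n1 (fun t => ind X (q*t)) + (P q).card := by
  suffices H : ∀ m, n1 ≤ m → m ≤ q →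
    Ip N m (fun t => ind X (q*t)) ≤ Ip N n1 (fun t => ind X (q*t)) + (P m).card from H q hq le_rfl
  intro m hm
  induction m, hm using Nat.le_induction with
  | base => intro _; linarith [show (0:ℝ) ≤ (P n1).card by positivity]
  | succ p hp1 ih =>
    intro hpq
    have ih := ih (by lia)
    by_cases hp : p.Prime
    · rw [Ip_succ N hp, P_succ_prime hp, Finset.card_insert_of_notMem (notMem_P p)]
      have h0 : Im N p (fun t => ind X (q * (max ((p:ℝ)*t) ((p:ℝ)^3)))) ≤ Im N p (fun _ => 0) := by
        apply Im_mono
        intro t ht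
        unfold ind
        rw [if_neg]
        push Not
        have a1 : (n1:ℝ) ≤ q := by exact_mod_cast hq
        have a2 : (n1:ℝ) ≤ p := by exact_mod_cast hp1
        calc X < (n1:ℝ) * (n1:ℝ)^3 := by linarith [h4]
          _ ≤ q * (p:ℝ)^3 := by gcongr
          _ ≤ _ := by gcongr; exact le_max_right _ _
      rw [Im, Im, sm_zero] at h0
      have h1 : ind X ((q:ℝ)*p) ≤ 1 := by unfold ind; split_ifs <;> norm_num
      push_cast
      unfold Im
      linarith
    · rw [Ip_succ_not N hp, P_succ_not hp]; exact ih

set_option maxHeartbeats 2000000 in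
lemma Im_top : ∃ C2 x0 : ℝ, 1 ≤ C2 ∧ 1 ≤ x0 ∧ ∀ (N z : ℕ) (X : ℝ), 2 ≤ z → 16 * (z:ℝ)^2 ≤ X → X ≤ (z:ℝ)^3 →
    x0 ≤ Real.log X → Im N z (ind X) ≤ C2 * (X/(Real.log z)^2) := by
  have hB := BB_ge
  have hK := CK_pos
  have hCP := CP_ge
  have hCJ := CJ_ge
  have hCB : 0 ≤ CB := by unfold CB; positivity
  refine ⟨4 * CK + CB + 48 * CJ + 36, 90 * BB + 40, by linarith, by linarith, ?_⟩
  intro N z X hz hzX hXz hx0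
  have hl2 := Real.log_two_lt_d9
  have hz2 : (2:ℝ) ≤ z := by exact_mod_cast hz
  have hX : 0 < X := by nlinarith
  have hz16 : (16:ℝ) ≤ z := by
    by_contra hcon
    push Not at hcon
    nlinarith [sq_nonneg (z:ℝ)]
  set x := Real.log X with hx
  set L := Real.log z with hL
  have hL0 : 0 < L := Real.log_pos (by linarith)
  have hxL : x ≤ 3 * L := by
    have := Real.log_le_log hX hXz
    rw [Real.log_pow] at this; exact_mod_cast this
  have hLx : 2 * L ≤ x := by
    have : Real.log ((z:ℝ)^2) ≤ x := Real.log_le_log (by positivity) (by nlinarith)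
    rw [Real.log_pow] at this; exact_mod_cast this
  have hx00 : 0 < x := by linarith
  set s := √X with hs
  have hss : s^2 = X := Real.sq_sqrt hX.le
  have hs0 : 0 < s := Real.sqrt_pos.2 hX
  set ρ := √s with hρ
  have hρs : ρ^2 = s := Real.sq_sqrt hs0.le
  have hρ0 : 0 < ρ := Real.sqrt_pos.2 hs0
  have hρ4 : ρ^4 = X := by rw [← hss, ← hρs]; ring
  have hX8 : (8:ℝ)^4 ≤ X := by
    have : (16:ℝ)^2 ≤ z^2 := by gcongr
    nlinarith
  have hρ8 : 8 ≤ ρ := by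
    by_contra hcon
    push Not at hcon
    have : ρ^4 < 8^4 := by gcongr
    linarith
  set n1 := ⌊ρ⌋₊ + 1 with hn1
  have hn1ρ : ρ < n1 := by rw [hn1]; push_cast; exact Nat.lt_floor_add_one ρ
  have hn1ρ2 : (n1:ℝ) ≤ 2 * ρ := by
    rw [hn1]; push_cast; linarith [Nat.floor_le hρ0.le]
  have hs4z : 4 * z ≤ s := by
    rw [hs]; apply Real.le_sqrt_of_sq_le; nlinarith
  have hn13 : (n1:ℝ)^3 ≤ X := by
    calc (n1:ℝ)^3 ≤ (2*ρ)^3 := by gcongr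
      _ = 8 * ρ^3 := by ring
      _ ≤ ρ * ρ^3 := by gcongr
      _ = X := by rw [← hρ4]; ring
  have hn14 : X < (n1:ℝ)^4 := by rw [← hρ4]; gcongr
  have hn1sq : s < (n1:ℝ)^2 := by rw [← hρs]; gcongr
  have hn1sq2 : (n1:ℝ)^2 ≤ 4 * s := by
    calc (n1:ℝ)^2 ≤ (2*ρ)^2 := by gcongr
      _ = 4 * s := by rw [← hρs]; ring
  have hzz : z ≤ n1^2 := by
    have : (z:ℝ) ≤ (n1:ℝ)^2 := by linarith
    exact_mod_cast this
  have hn1z : n1 ≤ z := by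
    have h : (n1:ℝ) ≤ z := by
      by_contra hcon
      push Not at hcon
      have h1 : (z:ℝ)^4 < (2*ρ)^4 := by gcongr; linarith
      have h2 : (2*ρ)^4 = 16 * X := by rw [← hρ4]; ring
      have h3 : 16 * (z:ℝ)^3 ≤ z * (z:ℝ)^3 := by gcongr
      nlinarith
    exact_mod_cast h
  have hn18 : 2 ≤ n1 := by
    have : (2:ℝ) ≤ n1 := by linarith
    exact_mod_cast this
  have hM : x / 4 ≤ Mn n1 := by
    have h1 := Mn_ge_log (show 1 ≤ n1 by lia)
    have h2 := Real.log_lt_log hX hn14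
    rw [Real.log_pow] at h2
    push_cast at h2
    linarith
  have hlow := Im_low (N := N) hX (by linarith) (by linarith) n1 (by lia) hn13
  have hlogn1 : Real.log n1 ≤ x := by
    apply Real.log_le_log (by linarith)
    nlinarith [sq_nonneg (n1:ℝ), show (1:ℝ) ≤ n1 by linarith]
  have hlow2 : (4 * CK * Real.log n1 + CB) * (X/x^3) ≤ (4 * CK + CB) * (X / L^2) := by
    have h1 : 4 * CK * Real.log n1 + CB ≤ (4 * CK + CB) * x := by nlinarith
    calc _ ≤ ((4 * CK + CB) * x) * (X/x^3) := by gcongr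
      _ = (4 * CK + CB) * (X/x^2) := by field_simp
      _ ≤ _ := by gcongr; linarith
  have hpz : ((P z).card:ℝ) ≤ 6 * z / L := by
    refine (card_P_le z z (by linarith)).trans ?_
    exact pi_upper6 (by linarith)
  have hacc := Im_accum (N := N) (n' := n1) (nT := n1) (n := z) (X := X) (E := (P z).card) (by positivity)
    (by nlinarith)
    (fun q hq h1 h2 => by
      refine (Ip_top hn14 h1).trans ?_
      have : (P q).card ≤ (P z).card := by
        apply Finset.card_le_card
        intro r hr
        rw [mem_P] at *
        exact ⟨by lia, hr.2⟩
      gcongr) hn1z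
  have hcnt : Ip N n1 (cnt n1 z X) ≤ (12 * X / L) * (CJ / Mn n1) := by
    refine (Ip_mono fun t ht => cnt_le hn18 hzz hn1z hX ht).trans ?_
    rw [Ip_mul]
    gcongr
    apply PA (by lia)
    rw [le_div_iff₀ (by linarith)]
    nlinarith
  have hcnt2 : (12 * X / L) * (CJ / Mn n1) ≤ 48 * CJ * (X/L^2) := by
    have : L / 4 ≤ Mn n1 := by linarith
    calc _ ≤ (12 * X / L) * (CJ / (L/4)) := by gcongr
      _ = _ := by field_simp; norm_num
  have hsq : ((P z).card:ℝ) * (P z).card ≤ 36 * (X/L^2) := by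
    calc _ ≤ (6 * z / L) * (6 * z / L) := by gcongr
      _ = 36 * (z^2 / L^2) := by ring
      _ ≤ _ := by gcongr; nlinarith
  calc _ ≤ _ := hacc
    _ ≤ (4 * CK + CB) * (X / L^2) + 48 * CJ * (X/L^2) + 36 * (X/L^2) := by linarith
    _ = _ := by ring

end CSh


namespace CSh

open Finset

lemma rough_pow_le {n m : ℕ} (hm : m ≠ 0) (h : rough n m) : n ^ ArithmeticFunction.cardFactors m ≤ m := by
  rw [ArithmeticFunction.cardFactors_apply]
  conv_rhs => rw [← Nat.prod_primeFactorsList hm]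
  apply List.pow_card_le_prod
  intro q hq
  by_contra hcon
  push Not at hcon
  exact h q (Nat.prime_of_mem_primeFactorsList hq) hcon (Nat.dvd_of_mem_primeFactorsList hq)

lemma V_one_le {n Y : ℕ} (h2 : 2 ≤ n) (h : Y < n^3) (hY : 1 < (Y:ℝ)) :
    (V Y n 1 : ℝ) ≤ 90 * Y / Real.log Y := by
  classical
  have h1 : V Y n 1 ≤ (P (Y+1)).card * 15 := by
    unfold V
    refine (Finset.sum_le_card_nsmul _ _ 15 (fun m _ => by have := Nat.mod_lt (Y/m) (show 16 > 0 by norm_num); lia)).trans ?_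
    rw [smul_eq_mul]
    apply Nat.mul_le_mul_right
    apply Finset.card_le_card
    intro m hm
    simp only [mem_filter, mem_Icc] at hm
    obtain ⟨⟨hm1, hmY⟩, hr, hev⟩ := hm
    have hp := rough_pow_le (by lia) hr
    have hlt : ArithmeticFunction.cardFactors m < 3 := by
      have : n ^ ArithmeticFunction.cardFactors m < n^3 := by lia
      exact (Nat.pow_lt_pow_iff_right (by lia)).1 this
    have h1 : ArithmeticFunction.cardFactors m = 1 := by
      rcases hev with ⟨k, hk⟩
      lia
    rw [mem_P]
    exact ⟨by lia, ArithmeticFunction.cardFactors_eq_one_iff_prime.1 h1⟩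
  have h2 := (card_P_le (Y+1) Y (by push_cast; linarith)).trans (pi_upper6 hY)
  have h3 : (V Y n 1 : ℝ) ≤ (P (Y+1)).card * 15 := by exact_mod_cast h1
  have e : 90 * (Y:ℝ) / Real.log Y = 6 * Y / Real.log Y * 15 := by ring
  rw [e]
  linarith

lemma S_upper (z Y : ℕ) (α : ℝ) (hz : 64 ≤ z) (h1 : z ≤ Y) (h2 : Y ≤ z^2) :
    (S α Y z : ℝ) ≤ (90 + 306 * CJ) * (Y / Real.log z) := by
  have hCJ := CJ_ge
  set n := Nat.sqrt Y with hn
  have hs := Nat.sqrt_le' Y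
  have hs2 := Nat.lt_succ_sqrt' Y
  rw [← hn] at hs hs2
  have hn8 : 8 ≤ n := Nat.le_sqrt'.2 (by lia)
  have hnz : n ≤ z := by
    by_contra hcon
    push Not at hcon
    have : z^2 < n^2 := Nat.pow_lt_pow_left hcon (by norm_num)
    lia
  have hn3 : Y < n^3 := by
    have : (n+1)^2 ≤ n^3 := by nlinarith
    exact lt_of_lt_of_le hs2 this
  have hsr : (n:ℝ)^2 ≤ Y := by exact_mod_cast hs
  have hn3r : (Y:ℝ) < (n:ℝ)^3 := by exact_mod_cast hn3
  have hn8r : (8:ℝ) ≤ n := by exact_mod_cast hn8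
  have hzr : (64:ℝ) ≤ z := by exact_mod_cast hz
  have hzY : (z:ℝ) ≤ Y := by exact_mod_cast h1
  have hL0 : 0 < Real.log z := Real.log_pos (by linarith)
  have hLY : Real.log z ≤ Real.log Y := Real.log_le_log (by linarith) hzY
  have hM : Real.log z / 3 ≤ Mn n := by
    have a := Mn_ge_log (show 1 ≤ n by lia)
    have b := Real.log_lt_log (by linarith) hn3r
    rw [Real.log_pow] at b
    push_cast at b
    linarith
  have hm := (sieve_main Y n (by lia) α Y le_rfl).2 (by nlinarith)
  rw [Nat.floor_natCast] at hm
  have hV := V_one_le (show 2 ≤ n by lia) hn3 (by linarith)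
  have hS : (S α Y z : ℝ) ≤ S α Y n := by exact_mod_cast S_anti α Y hnz
  have hV2 : kap * V Y n 1 ≤ 90 * (Y / Real.log z) := by
    have : (V Y n 1 : ℝ) ≤ 90 * (Y / Real.log z) := by
      refine hV.trans ?_
      rw [mul_div_assoc]
      gcongr
    have h0 : (0:ℝ) ≤ V Y n 1 := by positivity
    nlinarith [kap_le]
  have hI : Ip Y n (ind Y) ≤ Y * (CJ / Mn n) := by
    have : Ip Y n (ind Y) ≤ Ip Y n (fun t => (Y:ℝ) * (1/max t Y)) := by
      apply Ip_mono
      intro t ht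
      unfold ind
      split_ifs with h
      · rw [max_eq_right h, mul_one_div, div_self (by linarith)]
      · have : 0 < max t (Y:ℝ) := lt_of_lt_of_le (by linarith) (le_max_left _ _)
        positivity
    rw [Ip_mul] at this
    refine this.trans ?_
    gcongr
    exact PA (by lia) hsr
  have hI2 : (Y:ℝ) * (CJ / Mn n) ≤ 3 * CJ * (Y / Real.log z) := by
    calc (Y:ℝ) * (CJ / Mn n) ≤ Y * (CJ / (Real.log z / 3)) := by gcongr
      _ = _ := by field_simp
  have : (90 + 306 * CJ) * (Y / Real.log z) = 90 * (Y / Real.log z) + 102 * (3 * CJ * (Y / Real.log z)) := by ring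
  rw [this]
  linarith

lemma prime_mul_inj {r r' s s' : ℕ} (hr : r.Prime) (_hr' : r'.Prime) (hs : s.Prime) (hs' : s'.Prime)
    (h1 : r < r') (h2 : s < s') (h : r * r' = s * s') : r = s ∧ r' = s' := by
  have hd : r ∣ s * s' := ⟨r', h.symm⟩
  rcases hr.dvd_mul.1 hd with hd | hd
  · have e := (Nat.prime_dvd_prime_iff_eq hr hs).1 hd
    subst e
    exact ⟨rfl, Nat.eq_of_mul_eq_mul_left hr.pos h⟩
  · have e := (Nat.prime_dvd_prime_iff_eq hr hs').1 hd
    subst e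
    rw [mul_comm s] at h
    have := Nat.eq_of_mul_eq_mul_left hr.pos h
    lia

noncomputable def Rset (N r : ℕ) : Finset ℕ :=
  (Finset.Ioc ⌊(N:ℝ)/(16*r)⌋₊ ⌊16 * ((N:ℝ)/(16*r))⌋₊).filter Nat.Prime
noncomputable def Bset (z k : ℕ) : Finset ℕ :=
  (Finset.Ioc ⌊((16:ℝ)^k * z)⌋₊ ⌊16 * ((16:ℝ)^k * z)⌋₊).filter Nat.Prime

lemma mem_Bset {z k r : ℕ} : r ∈ Bset z k ↔ 16^k*z < r ∧ r ≤ 16^(k+1)*z ∧ r.Prime := by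
  unfold Bset
  have e1 : ((16:ℝ)^k * z) = ((16^k*z : ℕ):ℝ) := by push_cast; ring
  have e2 : 16 * ((16:ℝ)^k * z) = ((16^(k+1)*z : ℕ):ℝ) := by push_cast; ring
  rw [e2, e1, Nat.floor_natCast, Nat.floor_natCast]
  simp [and_assoc]

lemma mem_Rset {N r s : ℕ} (hr : 0 < r) (h : s ∈ Rset N r) : N < 16 * (r * s) ∧ r * s ≤ N ∧ s.Prime := by
  unfold Rset at h
  simp only [mem_filter, mem_Ioc] at h
  obtain ⟨⟨h1, h2⟩, hp⟩ := h
  have hr0 : (0:ℝ) < r := by exact_mod_cast hr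
  have e : 16 * ((N:ℝ)/(16*r)) = N / r := by field_simp
  rw [e] at h2
  have h1' := (Nat.floor_lt (by positivity)).1 h1
  have h2' := (Nat.le_floor_iff (by positivity)).1 h2
  rw [div_lt_iff₀ (by positivity)] at h1'
  rw [le_div_iff₀ hr0] at h2'
  refine ⟨?_, ?_, hp⟩
  · have : (N:ℝ) < ((16 * (r*s) : ℕ):ℝ) := by push_cast; linarith
    exact_mod_cast this
  · have : ((r*s : ℕ):ℝ) ≤ N := by push_cast; linarith
    exact_mod_cast this

lemma V_lower (z K : ℕ) (hz : 16^10 ≤ z) (hK : 16^(2*K+1) ≤ z) :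
    (K:ℝ) * (((16^(2*K+1)*z^2 : ℕ):ℝ) / (2304 * (Real.log z)^2)) ≤ V (16^(2*K+1)*z^2) z 0 := by
  classical
  set N := 16^(2*K+1)*z^2 with hN
  have hz0 : 0 < z := by lia
  have hzr : (16:ℝ)^10 ≤ z := by exact_mod_cast hz
  have hz1 : (1:ℝ) < z := lt_of_lt_of_le (by norm_num) hzr
  have hL0 : 0 < Real.log z := Real.log_pos hz1
  have hzN : z ≤ N := by
    rw [hN]
    have : 1 ≤ 16^(2*K+1) := Nat.one_le_pow _ _ (by norm_num)
    nlinarith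
  have hN3 : N ≤ z^3 := by
    rw [hN]
    calc 16^(2*K+1)*z^2 ≤ z * z^2 := Nat.mul_le_mul_right _ hK
      _ = z^3 := by ring
  have hNr : (1:ℝ) < N := lt_of_lt_of_le hz1 (by exact_mod_cast hzN)
  have hlN0 : 0 < Real.log N := Real.log_pos hNr
  have hlN : Real.log N ≤ 3 * Real.log z := by
    have : Real.log N ≤ Real.log ((z:ℝ)^3) := Real.log_le_log (by linarith) (by exact_mod_cast hN3)
    rw [Real.log_pow] at this
    exact_mod_cast this
  set T := (range K).sigma (fun k => (Bset z k).sigma (fun r => Rset N r)) with hT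
  set F := ((Finset.Icc 1 N).filter
    (fun m => rough z m ∧ Even (ArithmeticFunction.cardFactors m + 0))).filter (fun m => 1 ≤ (N/m) % 16) with hF
  have hr16 : ∀ k r, k < K → r ∈ Bset z k → r ≤ 16^K * z := by
    intro k r hk hr
    rw [mem_Bset] at hr
    refine hr.2.1.trans (Nat.mul_le_mul_right _ (Nat.pow_le_pow_right (by norm_num) (by lia)))
  have hNsq : N = 16 * (16^K*z) * (16^K*z) := by rw [hN]; ring
  have hlt : ∀ k r s, k < K → r ∈ Bset z k → s ∈ Rset N r → r < s := by
    intro k r s hk hr hs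
    have h1 := hr16 k r hk hr
    rw [mem_Bset] at hr
    have h2 := mem_Rset (by lia) hs
    set w := 16^K*z
    have h3 : 16 * w * w < 16 * (r*s) := by rw [← hNsq]; exact h2.1
    by_contra hcon
    push Not at hcon
    have : r * s ≤ w * w := Nat.mul_le_mul h1 (hcon.trans h1)
    nlinarith
  have hmaps : ∀ u ∈ T, u.2.1 * u.2.2 ∈ F := by
    rintro ⟨k, r, s⟩ hu
    simp only [hT, mem_sigma, mem_range] at hu
    obtain ⟨hk, hr, hs⟩ := hu
    have hrs := hlt k r s hk hr hs
    rw [mem_Bset] at hr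
    obtain ⟨h1, h2, hsp⟩ := mem_Rset (by lia) hs
    have hzr : z < r := lt_of_le_of_lt (Nat.le_mul_of_pos_left _ (by positivity)) hr.1
    have hpos : 0 < r * s := Nat.mul_pos (by lia) (by lia)
    simp only [hF, mem_filter, mem_Icc]
    refine ⟨⟨⟨hpos, h2⟩, ?_, ?_⟩, ?_⟩
    · intro q hq hqz hd
      rcases hq.dvd_mul.1 hd with hd | hd
      · have := (Nat.prime_dvd_prime_iff_eq hq hr.2.2).1 hd; lia
      · have := (Nat.prime_dvd_prime_iff_eq hq hsp).1 hd; lia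
    · rw [ArithmeticFunction.cardFactors_mul (by lia) (by lia),
        ArithmeticFunction.cardFactors_apply_prime hr.2.2, ArithmeticFunction.cardFactors_apply_prime hsp]
      decide
    · have a1 : 1 ≤ N / (r*s) := (Nat.one_le_div_iff hpos).2 h2
      have a2 : N / (r*s) < 16 := (Nat.div_lt_iff_lt_mul hpos).2 h1
      rw [Nat.mod_eq_of_lt a2]; exact a1
  have hinj : Set.InjOn (fun u : (Σ _ : ℕ, Σ _ : ℕ, ℕ) => u.2.1 * u.2.2) (T : Set (Σ _ : ℕ, Σ _ : ℕ, ℕ)) := by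
    rintro ⟨k, r, s⟩ hu ⟨k', r', s'⟩ hu' he
    simp only [hT, mem_coe, mem_sigma, mem_range] at hu hu'
    obtain ⟨hk, hr, hs⟩ := hu
    obtain ⟨hk', hr', hs'⟩ := hu'
    have h1 := hlt k r s hk hr hs
    have h2 := hlt k' r' s' hk' hr' hs'
    rw [mem_Bset] at hr hr'
    have h3 := (mem_Rset (by lia) hs).2.2
    have h4 := (mem_Rset (by lia) hs').2.2
    obtain ⟨rfl, rfl⟩ := prime_mul_inj hr.2.2 h3 hr'.2.2 h4 h1 h2 he
    have key : ∀ k k' : ℕ, 16^k*z < r → r ≤ 16^(k'+1)*z → k ≤ k' := by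
      intro k k' ha hb
      have : 16^k < 16^(k'+1) := lt_of_mul_lt_mul_right (lt_of_lt_of_le ha hb) (Nat.zero_le z)
      have := (Nat.pow_lt_pow_iff_right (show 1 < 16 by norm_num)).1 this
      lia
    have : k = k' := le_antisymm (key k k' hr.1 hr'.2.1) (key k' k hr'.1 hr.2.1)
    subst this
    rfl
  have hTF : T.card ≤ F.card := Finset.card_le_card_of_injOn _ hmaps hinj
  have hFV : F.card ≤ V N z 0 := by
    unfold V
    calc F.card = ∑ m ∈ F, 1 := by simp
      _ ≤ ∑ m ∈ F, (N/m)%16 := Finset.sum_le_sum fun m hm => (mem_filter.1 hm).2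
      _ ≤ _ := Finset.sum_le_sum_of_subset (Finset.filter_subset _ _)
  have hTV : (T.card:ℝ) ≤ V N z 0 := by exact_mod_cast hTF.trans hFV
  refine le_trans ?_ hTV
  rw [hT, Finset.card_sigma]
  push_cast
  have hk : ∀ k ∈ range K, (N:ℝ) / (2304 * (Real.log z)^2) ≤ (((Bset z k).sigma (fun r => Rset N r)).card : ℝ) := by
    intro k hk
    rw [mem_range] at hk
    rw [Finset.card_sigma]
    push_cast
    have hR : ∀ r ∈ Bset z k, (N:ℝ)/(16*(16^(k+1)*z)) / Real.log N ≤ ((Rset N r).card : ℝ) := by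
      intro r hr
      have h1 := hr16 k r hk hr
      rw [mem_Bset] at hr
      have hr0 : (1:ℝ) ≤ r := by exact_mod_cast hr.2.2.one_lt.le
      have h2 : (r:ℝ) ≤ 16^(k+1)*z := by exact_mod_cast hr.2.1
      have h1' : (r:ℝ) ≤ 16^K*z := by exact_mod_cast h1
      have hy : (z:ℝ) ≤ (N:ℝ)/(16*r) := by
        rw [le_div_iff₀ (by linarith)]
        have e : (N:ℝ) = 16 * (16^K*z) * (16^K*z) := by exact_mod_cast hNsq
        rw [e]
        have : (z:ℝ) ≤ 16^K*z := le_mul_of_one_le_left (by linarith) (one_le_pow₀ (by norm_num))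
        calc (z:ℝ) * (16*r) ≤ (16^K*z) * (16*(16^K*z)) := by gcongr
          _ = _ := by ring
      have hp := primes_block (hzr.trans hy)
      refine le_trans ?_ hp
      have hyN : (N:ℝ)/(16*r) ≤ N := div_le_self (by linarith) (by linarith)
      have hly : 0 < Real.log ((N:ℝ)/(16*r)) := Real.log_pos (by linarith)
      have hly2 : Real.log ((N:ℝ)/(16*r)) ≤ Real.log N := Real.log_le_log (by linarith) hyN
      gcongr
    have h1 : ((Bset z k).card : ℝ) * ((N:ℝ)/(16*(16^(k+1)*z)) / Real.log N) ≤ ∑ r ∈ Bset z k, ((Rset N r).card : ℝ) := by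
      have := Finset.card_nsmul_le_sum (Bset z k) (fun r => ((Rset N r).card:ℝ)) _ hR
      rwa [nsmul_eq_mul] at this
    refine le_trans ?_ h1
    have hkz : (z:ℝ) ≤ 16^k*z := le_mul_of_one_le_left (by linarith) (one_le_pow₀ (by norm_num))
    have hB := primes_block (hzr.trans hkz)
    have hkN : (16:ℝ)^k * z ≤ N := by
      have : 16^k*z ≤ N := by
        rw [hNsq]
        have h : 16^k*z ≤ 16^K*z := Nat.mul_le_mul_right _ (Nat.pow_le_pow_right (by norm_num) hk.le)
        have : 1 ≤ 16^K*z := Nat.mul_pos (by positivity) hz0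
        nlinarith
      exact_mod_cast this
    have hlk0 : 0 < Real.log ((16:ℝ)^k * z) := Real.log_pos (by linarith)
    have hlk : Real.log ((16:ℝ)^k * z) ≤ Real.log N := Real.log_le_log (by linarith) hkN
    have hB2 : (16:ℝ)^k * z / Real.log N ≤ ((Bset z k).card : ℝ) := by
      refine le_trans ?_ hB
      gcongr
    calc (N:ℝ) / (2304 * (Real.log z)^2) = (N:ℝ) / (256 * (3 * Real.log z)^2) := by ring_nf
      _ ≤ N / (256 * (Real.log N)^2) := by gcongr
      _ = (16:ℝ)^k * z / Real.log N * ((N:ℝ)/(16*(16^(k+1)*z)) / Real.log N) := by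
          rw [pow_succ]
          field_simp
          ring
      _ ≤ _ := by gcongr
  have := Finset.card_nsmul_le_sum (range K) _ _ hk
  rw [card_range, nsmul_eq_mul] at this
  simpa using this

end CSh


namespace CSh

open Finset

lemma card_big_primes {a : ℕ} (ha : a ≠ 0) {z : ℕ} (hz : 1 ≤ z) :
    ((a.primeFactors.filter (fun q => z ≤ q)).card : ℝ) * Real.log z ≤ Real.log a := by
  set Q := a.primeFactors.filter (fun q => z ≤ q) with hQ
  have h1 : z ^ Q.card ≤ a := by
    calc z ^ Q.card ≤ ∏ q ∈ Q, q :=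
          Finset.pow_card_le_prod Q (fun q => q) z (fun q hq => (mem_filter.1 hq).2)
      _ ≤ ∏ q ∈ a.primeFactors, q := by
          apply Finset.prod_le_prod_of_subset_of_one_le' (Finset.filter_subset _ _)
          intro q hq _
          exact (Nat.prime_of_mem_primeFactors hq).one_lt.le
      _ ≤ a := Nat.le_of_dvd (Nat.pos_of_ne_zero ha) (Nat.prod_primeFactors_dvd a)
  have hz0 : (0:ℝ) < z := by exact_mod_cast hz
  have h2 : Real.log ((z:ℝ)^Q.card) ≤ Real.log a := by
    apply Real.log_le_log (by positivity)
    exact_mod_cast h1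
  rwa [Real.log_pow] at h2

set_option maxHeartbeats 2000000 in
lemma main_large : ∃ z0 C : ℝ, 1 ≤ z0 ∧ 0 < C ∧ ∀ a b : ℤ, 2 ≤ a → z0 ≤ Real.log a →
    ∃ h : ℤ, 0 ≤ h ∧ (h:ℝ) ≤ C * (Real.log a)^2 ∧ Int.gcd a (b+h) = 1 := by
  obtain ⟨C2, x0, hC2, hx0, hIm⟩ := Im_top
  set C3 := 90 + 306 * CJ with hC3
  have hCJ := CJ_ge
  have hkap := kap_pos
  obtain ⟨K, hK⟩ := exists_nat_gt ((102 * C2 + C3) * 2304 / kap)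
  have hK' : 102 * C2 + C3 < kap * (K / 2304) := by
    rw [div_lt_iff₀ hkap] at hK
    linarith
  set W : ℕ := 16^(2*K+1) with hW
  have hW16 : 16 ≤ W := by
    rw [hW, pow_succ]
    have : 1 ≤ 16^(2*K) := Nat.one_le_pow _ _ (by norm_num)
    lia
  refine ⟨Real.exp x0 + W + 16^10, 4 * W, ?_, by positivity, ?_⟩
  · have := Real.exp_pos x0
    have : (0:ℝ) ≤ W := by positivity
    norm_num; linarith
  intro a b ha hla
  set z := ⌈Real.log a⌉₊ with hz
  have hzl : Real.log a ≤ z := Nat.le_ceil _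
  have hE := Real.exp_pos x0
  have hW0 : (0:ℝ) ≤ W := by positivity
  have hla1 : 1 ≤ Real.log a := le_trans (by norm_num; linarith) hla
  have hzu : (z:ℝ) ≤ 2 * Real.log a := by
    have := Nat.ceil_lt_add_one (show 0 ≤ Real.log a by linarith)
    rw [← hz] at this
    linarith
  have hz10r : (16:ℝ)^10 ≤ z := by linarith
  have hz10 : 16^10 ≤ z := by exact_mod_cast hz10r
  have hzWr : (W:ℝ) ≤ z := by
    have : (0:ℝ) < 16^10 := by norm_num
    linarith
  have hzW : W ≤ z := by exact_mod_cast hzWr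
  have hzx : Real.exp x0 ≤ z := by
    have : (0:ℝ) < 16^10 := by norm_num
    linarith
  have hz64 : 64 ≤ z := le_trans (by norm_num) hz10
  have hz1 : (64:ℝ) ≤ z := by exact_mod_cast hz64
  set L := Real.log z with hL
  have hL0 : 0 < L := Real.log_pos (by linarith)
  set N : ℕ := W * z^2 with hN
  have hNr : (N:ℝ) = W * (z:ℝ)^2 := by rw [hN]; push_cast; ring
  have hW16r : (16:ℝ) ≤ W := by exact_mod_cast hW16
  have hN16 : 16 * (z:ℝ)^2 ≤ N := by rw [hNr]; gcongr
  have hN3 : (N:ℝ) ≤ (z:ℝ)^3 := by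
    rw [hNr]
    calc (W:ℝ) * (z:ℝ)^2 ≤ z * (z:ℝ)^2 := by gcongr
      _ = _ := by ring
  have hxN : x0 ≤ Real.log N := by
    rw [Real.le_log_iff_exp_le (by nlinarith)]
    nlinarith
  have hI := hIm N z N (by lia) hN16 hN3 hxN
  have hV := V_lower z K hz10 hzW
  rw [← hW, ← hN] at hV
  set α : ℝ := ((b-1 : ℤ) : ℝ) with hα
  have hs := (sieve_main N z (by lia) α N le_rfl).1 (by nlinarith)
  rw [Nat.floor_natCast] at hs
  -- contradiction setup
  by_contra hcon
  push Not at hcon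
  have hN0 : (0:ℝ) < N := by nlinarith
  have hZ : 0 < (N:ℝ)/L^2 := by positivity
  set Q := a.natAbs.primeFactors.filter (fun q => z ≤ q) with hQ
  have ha0 : a.natAbs ≠ 0 := by lia
  have hnat : ((a.natAbs : ℕ):ℝ) = (a:ℝ) := by
    have : ((a.natAbs : ℕ):ℤ) = a := by lia
    rw [← Int.cast_natCast, this]
  have hQc : (Q.card:ℝ) * L ≤ z := by
    have := card_big_primes ha0 (show 1 ≤ z by lia)
    rw [hnat] at this
    exact this.trans hzl
  have hupper : (S α N z : ℝ) ≤ C3 * (N/L^2) := by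
    classical
    have h1 : S α N z ≤ ∑ q ∈ Q, S (α/q) (N/q) z := by
      have hsum : ∑ q ∈ Q, S (α/q) (N/q) z = ∑ q ∈ Q, (((Finset.Ioc ⌊α⌋ ⌊α+N⌋).filter
          (fun i : ℤ => ∀ q : ℕ, q.Prime → q < z → ¬ (q:ℤ) ∣ i)).filter (fun i => (q:ℤ) ∣ i)).card := by
        apply Finset.sum_congr rfl
        intro q hq
        rw [hQ, mem_filter, Nat.mem_primeFactors] at hq
        rw [S_mul hq.1.1 hq.2]
      rw [hsum]
      refine le_trans ?_ Finset.card_biUnion_le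
      unfold S
      apply Finset.card_le_card
      intro i hi
      simp only [mem_filter, mem_Ioc] at hi
      obtain ⟨⟨hi1, hi2⟩, hi3⟩ := hi
      rw [hα, Int.floor_intCast] at hi1
      rw [hα, Int.le_floor] at hi2
      have hh0 : 0 ≤ i - b := by lia
      have hhr : ((i-b:ℤ):ℝ) ≤ 4 * W * (Real.log a)^2 := by
        push_cast at hi2 ⊢
        have : (z:ℝ)^2 ≤ (2 * Real.log a)^2 := by gcongr
        rw [hNr] at hi2
        have h3 : (W:ℝ) * (z:ℝ)^2 ≤ W * (2 * Real.log a)^2 := by gcongr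
        nlinarith
      have hg := hcon (i-b) hh0 hhr
      rw [show b + (i-b) = i by ring] at hg
      obtain ⟨q, hq, hqd⟩ := Nat.exists_prime_and_dvd hg
      have hqa : (q:ℤ) ∣ a := (Int.natCast_dvd_natCast.2 hqd).trans (Int.gcd_dvd_left a i)
      have hqi : (q:ℤ) ∣ i := (Int.natCast_dvd_natCast.2 hqd).trans (Int.gcd_dvd_right a i)
      have hzq : z ≤ q := by
        by_contra hlt
        push Not at hlt
        exact hi3 q hq hlt hqi
      rw [mem_biUnion]
      refine ⟨q, ?_, ?_⟩
      · rw [hQ, mem_filter, Nat.mem_primeFactors]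
        exact ⟨⟨hq, Int.natCast_dvd.1 hqa, ha0⟩, hzq⟩
      · simp only [mem_filter, mem_Ioc]
        refine ⟨⟨⟨?_, ?_⟩, hi3⟩, hqi⟩
        · rw [hα, Int.floor_intCast]; exact hi1
        · rw [hα, Int.le_floor]; exact hi2
    have h2 : ∀ q ∈ Q, (S (α/q) (N/q) z : ℝ) ≤ C3 * (((W*z : ℕ):ℝ) / L) := by
      intro q hq
      rw [hQ, mem_filter] at hq
      have hzq : (z:ℝ) ≤ q := by exact_mod_cast hq.2
      have h3 : (N:ℝ)/q ≤ ((W*z:ℕ):ℝ) := by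
        rw [div_le_iff₀ (by linarith), hNr]
        push_cast
        calc (W:ℝ) * (z:ℝ)^2 = W * z * z := by ring
          _ ≤ _ := by gcongr
      have h4 : (S (α/q) (N/q) z : ℝ) ≤ S (α/q) ((W*z:ℕ):ℝ) z := by exact_mod_cast S_mono (α/q) h3 z
      refine h4.trans (S_upper z (W*z) (α/q) hz64 (Nat.le_mul_of_pos_left _ (by lia)) ?_)
      rw [sq]; exact Nat.mul_le_mul_right _ hzW
    have h3 : (S α N z : ℝ) ≤ ∑ q ∈ Q, (S (α/q) (N/q) z : ℝ) := by exact_mod_cast h1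
    have h4 := Finset.sum_le_card_nsmul Q _ _ h2
    rw [nsmul_eq_mul] at h4
    refine h3.trans (h4.trans ?_)
    have hQ2 : (Q.card:ℝ) ≤ z / L := by rw [le_div_iff₀ hL0]; exact hQc
    calc (Q.card:ℝ) * (C3 * (((W*z : ℕ):ℝ) / L)) ≤ (z/L) * (C3 * (((W*z : ℕ):ℝ) / L)) := by
          apply mul_le_mul_of_nonneg_right hQ2
          have : 0 ≤ C3 := by linarith
          positivity
      _ = _ := by rw [hNr]; push_cast; field_simp
  have hV2 : kap * (K/2304) * (N/L^2) ≤ kap * V N z 0 := by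
    calc _ = kap * ((K:ℝ) * ((N:ℝ) / (2304 * L^2))) := by field_simp
      _ ≤ _ := by gcongr
  have := mul_lt_mul_of_pos_right hK' hZ
  nlinarith

end CSh


/-- Key step in the greedy construction: there is an absolute constant `C > 0`
such that for every integer `a ≥ 2` and every integer `b` there is an integer `h`
with `0 ≤ h ≤ C·(log a)²` and `gcd(a, b + h) = 1`. -/
theorem coprime_shift_of_single :
    ∃ C : ℝ, 0 < C ∧
      ∀ a b : ℤ, 2 ≤ a →
        ∃ h : ℤ, 0 ≤ h ∧ (h : ℝ) ≤ C * (Real.log a) ^ 2 ∧ Int.gcd a (b + h) = 1 := by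
  obtain ⟨z0, C, hz0, hC, hmain⟩ := CSh.main_large
  have hl2 : 0 < Real.log 2 := Real.log_pos (by norm_num)
  have hD : 0 < Real.exp z0 / (Real.log 2)^2 := by positivity
  refine ⟨C + Real.exp z0 / (Real.log 2)^2, by positivity, ?_⟩
  intro a b ha
  by_cases hla : z0 ≤ Real.log a
  · obtain ⟨h, h0, h1, h2⟩ := hmain a b ha hla
    refine ⟨h, h0, h1.trans ?_, h2⟩
    gcongr
    linarith
  · push Not at hla
    have ha2 : (2:ℝ) ≤ a := by exact_mod_cast ha
    refine ⟨(1 - b) % a, Int.emod_nonneg _ (by lia), ?_, ?_⟩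
    · have h1 : (((1 - b) % a : ℤ):ℝ) ≤ a := by
        exact_mod_cast (Int.emod_lt_of_pos (1-b) (by lia : 0 < a)).le
      have h2 : (a:ℝ) ≤ Real.exp z0 := by
        rw [← Real.exp_log (show (0:ℝ) < a by linarith)]
        exact Real.exp_le_exp.2 hla.le
      have h3 : Real.log 2 ≤ Real.log a := Real.log_le_log (by norm_num) ha2
      calc (((1 - b) % a : ℤ):ℝ) ≤ Real.exp z0 := h1.trans h2
        _ = Real.exp z0 / (Real.log 2)^2 * (Real.log 2)^2 := by field_simp
        _ ≤ (C + Real.exp z0 / (Real.log 2)^2) * (Real.log a)^2 := by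
            gcongr
            linarith
    · have e : b + (1 - b) % a = 1 + a * (-((1-b)/a)) := by
        have := Int.emod_add_mul_ediv (1-b) a
        linarith
      rw [e, ← Int.isCoprime_iff_gcd_eq_one]
      exact ⟨(1-b)/a, 1, by ring⟩
end

section
/- Let n ≥ 2 be an integer. For every real ε > 0 there is a constant C > 0, depending only on n and ε, such that for every vector a = (a_1, …, a_n) of positive integers and every integer h ≥ 2: |R(a, h) − ζ(2)^{−1} h^{2n}| ≤ C · h^{2n − n/(n² − n + 1)} · (h·𝔥(a))^ε. -/
/-- The height of an integer vector: `𝔥(x) = max |x_i|`. -/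
def vecHeight {n : ℕ} (x : Fin n → ℤ) : ℕ :=
  Finset.univ.sup fun i => (x i).natAbs

/-- `R(a, h)`: the number of pairs of vectors `x, y ∈ ℤⁿ` with positive components
and heights at most `h` for which `gcd(a·x, a·y) = gcd(a₁, …, aₙ)`. -/
noncomputable def Rcount {n : ℕ} (a : Fin n → ℤ) (h : ℕ) : ℕ :=
  Nat.card {p : (Fin n → ℤ) × (Fin n → ℤ) //
    (∀ i, 0 < p.1 i) ∧ (∀ i, 0 < p.2 i) ∧ vecHeight p.1 ≤ h ∧ vecHeight p.2 ≤ h ∧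
    (Int.gcd (∑ i, a i * p.1 i) (∑ i, a i * p.2 i) : ℤ) = Finset.univ.gcd a}

open Finset

lemma divisor_bound (ε : ℝ) (hε : 0 < ε) : ∃ C : ℝ, 0 < C ∧ ∀ m : ℕ, m ≠ 0 →
    (#m.divisors : ℝ) ≤ C * (m : ℝ) ^ ε := by
  obtain ⟨P, hP⟩ : ∃ P : ℕ, ∀ p : ℕ, P ≤ p → (2 : ℝ) ≤ (p : ℝ) ^ ε := by
    have := (tendsto_rpow_atTop hε).comp (tendsto_natCast_atTop_atTop (R := ℝ))
    have h2 := this.eventually_ge_atTop 2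
    exact Filter.eventually_atTop.1 h2
  have hl : 0 < Real.log 2 := Real.log_pos (by norm_num)
  set K : ℝ := 1 + 1 / (ε * Real.log 2) with hK
  have hK1 : 1 ≤ K := by
    have : 0 < 1 / (ε * Real.log 2) := by positivity
    linarith
  refine ⟨K ^ P, by positivity, fun m hm => ?_⟩
  rw [Nat.card_divisors hm]
  have hmprod : (m : ℝ) ^ ε = ∏ p ∈ m.primeFactors, ((p : ℝ) ^ ε) ^ (m.factorization p) := by
    conv_lhs => rw [← Nat.prod_factorization_pow_eq_self hm]
    rw [Finsupp.prod, Nat.support_factorization]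
    push_cast
    rw [← Real.finsetProd_rpow _ _ (fun i _ => by positivity)]
    refine prod_congr rfl fun p _ => ?_
    rw [← Real.rpow_natCast, ← Real.rpow_natCast, ← Real.rpow_mul (by positivity),
      ← Real.rpow_mul (by positivity), mul_comm]
  have key : ∀ p ∈ m.primeFactors, ((m.factorization p + 1 : ℕ) : ℝ) ≤
      (if p < P then K else 1) * ((p : ℝ) ^ ε) ^ (m.factorization p) := by
    intro p hp
    set v := m.factorization p
    split_ifs with hlt
    · have hp2 : (2 : ℝ) ≤ p := by exact_mod_cast (Nat.prime_of_mem_primeFactors hp).two_le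
      have h1 : ((2 : ℝ) ^ ε) ^ v ≤ ((p : ℝ) ^ ε) ^ v := by gcongr
      have h2 : 1 + v * (ε * Real.log 2) ≤ ((2 : ℝ) ^ ε) ^ v := by
        rw [Real.rpow_def_of_pos (by norm_num), ← Real.exp_nat_mul]
        have := Real.add_one_le_exp ((v : ℝ) * (Real.log 2 * ε))
        nlinarith
      have h3 : (v : ℝ) + 1 ≤ K * (1 + v * (ε * Real.log 2)) := by
        have he : K * (1 + v * (ε * Real.log 2)) =
            1 + v + 1 / (ε * Real.log 2) + v * (ε * Real.log 2) := by
          rw [hK]; field_simp; ring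
        rw [he]
        have : 0 < 1 / (ε * Real.log 2) := by positivity
        have : 0 ≤ v * (ε * Real.log 2) := by positivity
        linarith
      push_cast
      calc (v : ℝ) + 1 ≤ K * (1 + v * (ε * Real.log 2)) := h3
        _ ≤ K * ((p : ℝ) ^ ε) ^ v := by
          have := h2.trans h1
          gcongr
    · have h2 := hP p (not_lt.1 hlt)
      have h3 : ((v + 1 : ℕ) : ℝ) ≤ 2 ^ v := by exact_mod_cast Nat.lt_two_pow_self
      rw [one_mul]
      exact h3.trans (by gcongr)
  push_cast [Finsupp.prod] at key ⊢
  rw [hmprod]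
  calc _ ≤ ∏ p ∈ m.primeFactors, (if p < P then K else 1) * ((p : ℝ) ^ ε) ^ (m.factorization p) :=
        prod_le_prod (fun i _ => by positivity) key
    _ = (∏ p ∈ m.primeFactors, (if p < P then K else 1)) *
        ∏ p ∈ m.primeFactors, ((p : ℝ) ^ ε) ^ (m.factorization p) := prod_mul_distrib
    _ ≤ _ := by
      gcongr
      rw [← prod_filter, prod_const]
      apply pow_le_pow_right₀ hK1
      calc _ ≤ #(range P) := card_le_card (fun p hp => by simp at hp ⊢; exact hp.2)
        _ = P := card_range P

lemma moebius_partial (h : ℕ) (hh : 1 ≤ h) :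
    |(∑ d ∈ Icc 1 h, (ArithmeticFunction.moebius d : ℝ) / (d : ℝ) ^ 2) - 6 / Real.pi ^ 2| ≤ 1 / (h : ℝ) := by
  have hs : (1 : ℝ) < (2 : ℂ).re := by norm_num
  have h1 := (ArithmeticFunction.LSeriesSummable_moebius_iff.2 hs).hasSum
  have hL : LSeries (fun n => ((ArithmeticFunction.moebius n : ℤ) : ℂ)) 2 = ((6 / Real.pi ^ 2 : ℝ) : ℂ) := by
    have := ArithmeticFunction.LSeries_zeta_mul_Lseries_moebius hs
    rw [ArithmeticFunction.LSeries_zeta_eq_riemannZeta hs, riemannZeta_two] at this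
    have hpi : (Real.pi : ℂ) ≠ 0 := by exact_mod_cast Real.pi_ne_zero
    push_cast
    field_simp at this ⊢
    linear_combination this
  have h2 : HasSum (fun d : ℕ => (ArithmeticFunction.moebius d : ℝ) / (d : ℝ) ^ 2) (6 / Real.pi ^ 2) := by
    rw [← Complex.hasSum_ofReal, ← hL]
    change HasSum _ (∑' b : ℕ, LSeries.term (fun n => ((ArithmeticFunction.moebius n : ℤ) : ℂ)) 2 b)
    convert h1 using 1
    funext d
    symm
    rcases eq_or_ne d 0 with rfl | hd
    · simp
    · rw [LSeries.term_of_ne_zero hd]; push_cast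
      congr 1
      exact_mod_cast Complex.cpow_natCast (d : ℂ) 2
  have h3 := h2.tendsto_sum_nat
  have h3' := (Filter.tendsto_add_atTop_iff_nat 1).2 h3
  rw [abs_sub_comm]
  refine le_of_tendsto ((h3'.sub_const _).abs) ?_
  filter_upwards [Filter.eventually_ge_atTop h] with M hM
  have e : ∑ d ∈ range (M + 1), (ArithmeticFunction.moebius d : ℝ) / (d : ℝ) ^ 2 =
      ∑ d ∈ Icc 1 h, (ArithmeticFunction.moebius d : ℝ) / (d : ℝ) ^ 2 +
      ∑ d ∈ Ioc h M, (ArithmeticFunction.moebius d : ℝ) / (d : ℝ) ^ 2 := by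
    rw [← sum_union (by
      rw [disjoint_left]; intro x; simp; omega)]
    symm
    apply sum_subset_zero_on_sdiff
    · intro x; simp; omega
    · intro x hx
      have : x = 0 := by simp at hx; omega
      simp [this]
    · intros; rfl
  rw [e, add_sub_cancel_left]
  calc _ ≤ ∑ d ∈ Ioc h M, |(ArithmeticFunction.moebius d : ℝ) / (d : ℝ) ^ 2| := abs_sum_le_sum_abs _ _
    _ ≤ ∑ d ∈ Ioc h M, ((d : ℝ) ^ 2)⁻¹ := by
      refine sum_le_sum fun d _ => ?_
      rw [abs_div, abs_of_nonneg (by positivity : (0:ℝ) ≤ (d:ℝ)^2), div_eq_mul_inv]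
      have : |(ArithmeticFunction.moebius d : ℝ)| ≤ 1 := by
        exact_mod_cast ArithmeticFunction.abs_moebius_le_one
      nlinarith [inv_nonneg.2 (by positivity : (0:ℝ) ≤ (d:ℝ)^2)]
    _ ≤ (h : ℝ)⁻¹ - (M : ℝ)⁻¹ := sum_Ioc_inv_sq_le_sub (by omega) hM
    _ ≤ 1 / h := by
      have : (0 : ℝ) ≤ (M : ℝ)⁻¹ := by positivity
      rw [one_div]; linarith

lemma count_line (d : ℕ) (hd : 0 < d) (a s : ℤ) (h : ℕ) (hs : ((Int.gcd a d : ℕ) : ℤ) ∣ s) :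
    |(#{t ∈ Icc (1 : ℤ) h | (d : ℤ) ∣ a * t + s} : ℝ) - h * (Int.gcd a d : ℕ) / d| ≤ 1 := by
  set e : ℕ := Int.gcd a d with he
  have he0 : 0 < e := Int.gcd_pos_of_ne_zero_right _ (by exact_mod_cast hd.ne')
  obtain ⟨r, hr⟩ : e ∣ d := by exact_mod_cast Int.gcd_dvd_right a (d : ℤ)
  have hr0 : 0 < r := Nat.pos_of_ne_zero (by rintro rfl; simp at hr; omega)
  obtain ⟨a', ha'⟩ : (e : ℤ) ∣ a := Int.gcd_dvd_left a (d : ℤ)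
  obtain ⟨s', hs'⟩ := hs
  have hez : (e : ℤ) ≠ 0 := by exact_mod_cast he0.ne'
  have hcop : IsCoprime (r : ℤ) a' := by
    rw [Int.isCoprime_iff_gcd_eq_one]
    have : e * Int.gcd a' r = e * 1 := by
      rw [mul_one]; conv_rhs => rw [he, ha', hr]
      push_cast; rw [Int.gcd_mul_left]; simp
    rw [Int.gcd_comm]; exact Nat.eq_of_mul_eq_mul_left he0 this
  obtain ⟨u, v, huv⟩ := hcop
  have hset : ({t ∈ Icc (1 : ℤ) h | (d : ℤ) ∣ a * t + s} : Finset ℤ) =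
      {t ∈ Ioc (0 : ℤ) h | t ≡ -(v * s') [ZMOD r]} := by
    ext t
    simp only [mem_filter, mem_Icc, mem_Ioc]
    have : ((d : ℤ) ∣ a * t + s) ↔ t ≡ -(v * s') [ZMOD r] := by
      rw [ha', hs', hr]; push_cast
      rw [show (e : ℤ) * a' * t + e * s' = e * (a' * t + s') by ring, mul_dvd_mul_iff_left hez,
        Int.modEq_comm, Int.modEq_iff_dvd]
      constructor
      · rintro ⟨k, hk⟩
        exact ⟨v * k + u * t, by linear_combination (-t) * huv + v * hk⟩
      · rintro ⟨k, hk⟩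
        exact ⟨a' * k + u * s', by linear_combination (-s') * huv + a' * hk⟩
    rw [this]; constructor <;> (rintro ⟨⟨_, _⟩, _⟩; refine ⟨⟨by omega, by omega⟩, by assumption⟩)
  rw [hset]
  have hc := Int.Ioc_filter_modEq_card 0 (h : ℤ) (r := r) (by exact_mod_cast hr0) (-(v * s'))
  have hdiv : (h : ℝ) * e / d = h / r := by
    rw [hr]; push_cast; field_simp
  rw [hdiv]
  set w : ℤ := -(v * s')
  have hrR : (0 : ℝ) < r := by exact_mod_cast hr0
  have hmono : ⌊(((0 : ℤ) : ℚ) - (w : ℚ)) / ((r : ℤ) : ℚ)⌋ ≤ ⌊(((h : ℤ) : ℚ) - (w : ℚ)) / ((r : ℤ) : ℚ)⌋ := by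
    apply Int.floor_le_floor
    push_cast
    gcongr
    positivity
  have hc' : (#{t ∈ Ioc (0 : ℤ) h | t ≡ w [ZMOD r]} : ℤ) =
      ⌊(((h : ℤ) : ℚ) - (w : ℚ)) / ((r : ℤ) : ℚ)⌋ - ⌊(((0 : ℤ) : ℚ) - (w : ℚ)) / ((r : ℤ) : ℚ)⌋ := by
    rw [← max_eq_left (sub_nonneg.2 hmono)]
    exact_mod_cast hc
  have hc'' := congrArg (Int.cast : ℤ → ℝ) hc'
  push_cast at hc''
  rw [hc'']
  have e1 : (h : ℝ) / r = (h - w) / r - (0 - w) / r := by ring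
  rw [e1]
  have f1 := Int.floor_le (((h : ℚ) - w) / r)
  have f2 := Int.lt_floor_add_one (((h : ℚ) - w) / r)
  have f3 := Int.floor_le (((0 : ℚ) - w) / r)
  have f4 := Int.lt_floor_add_one (((0 : ℚ) - w) / r)
  have f1' := (Rat.cast_le (K := ℝ)).2 f1
  have f2' := (Rat.cast_lt (K := ℝ)).2 f2
  have f3' := (Rat.cast_le (K := ℝ)).2 f3
  have f4' := (Rat.cast_lt (K := ℝ)).2 f4
  push_cast at f1' f2' f3' f4'
  rw [abs_le]; constructor <;> linarith

/-- the box -/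
noncomputable def bx (n h : ℕ) : Finset (Fin n → ℤ) := Fintype.piFinset fun _ => Icc (1 : ℤ) h

lemma mem_bx {n h : ℕ} {x : Fin n → ℤ} : x ∈ bx n h ↔ ∀ i, 1 ≤ x i ∧ x i ≤ h := by
  simp [bx]

lemma card_bx (n h : ℕ) : #(bx n h) = h ^ n := by simp [bx]

lemma sum_bx_succ (n h : ℕ) (f : (Fin (n + 1) → ℤ) → ℝ) :
    ∑ x ∈ bx (n + 1) h, f x = ∑ y ∈ bx n h, ∑ t ∈ Icc (1 : ℤ) h, f (Fin.cons t y) := by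
  rw [← sum_product']
  refine sum_bij' (fun x _ => (Fin.tail x, x 0)) (fun p _ => Fin.cons p.2 p.1) ?_ ?_ ?_ ?_ ?_
  · intro x hx
    rw [mem_bx] at hx
    simp only [mem_product, mem_bx, mem_Icc]
    exact ⟨fun i => hx i.succ, hx 0⟩
  · rintro ⟨y, t⟩ hp
    simp only [mem_product, mem_bx, mem_Icc] at hp
    rw [mem_bx]
    intro i
    refine Fin.cases ?_ ?_ i
    · simpa using hp.2
    · intro j; simpa using hp.1 j
  · intro x _; simp
  · rintro ⟨y, t⟩ _; simp
  · intro x _; simp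

lemma count_box (h : ℕ) : ∀ (n : ℕ) (a : Fin n → ℤ) (d : ℕ), 0 < d →
    (∀ k : ℕ, k ∣ d → (∀ i, (k : ℤ) ∣ a i) → k = 1) →
    |(#{x ∈ bx n h | (d : ℤ) ∣ ∑ i, a i * x i} : ℝ) - (h : ℝ) ^ n / d| ≤ n * (h : ℝ) ^ (n - 1) := by
  intro n
  induction n with
  | zero =>
    intro a d hd hg
    have : d = 1 := hg d dvd_rfl (fun i => i.elim0)
    subst this
    have : #(bx 0 h) = 1 := by simp [card_bx]
    simp [this]
  | succ n ih =>
    intro a d hd hg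
    set e : ℕ := Int.gcd (a 0) d with he
    have he0 : 0 < e := Int.gcd_pos_of_ne_zero_right _ (by exact_mod_cast hd.ne')
    have hed : e ∣ d := by exact_mod_cast Int.gcd_dvd_right (a 0) (d : ℤ)
    have hea : (e : ℤ) ∣ a 0 := Int.gcd_dvd_left (a 0) (d : ℤ)
    have hIH := ih (fun i => a i.succ) e he0 (by
      intro k hk hk'
      refine hg k (hk.trans hed) (fun i => ?_)
      refine Fin.cases ?_ (fun j => hk' j) i
      exact (Int.natCast_dvd_natCast.2 hk).trans hea)
    set S := {y ∈ bx n h | (e : ℤ) ∣ ∑ i, a i.succ * y i} with hS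
    have hcount : (#{x ∈ bx (n + 1) h | (d : ℤ) ∣ ∑ i, a i * x i} : ℝ) =
        ∑ y ∈ S, (#{t ∈ Icc (1 : ℤ) h | (d : ℤ) ∣ a 0 * t + ∑ i : Fin n, a i.succ * y i} : ℝ) := by
      rw [natCast_card_filter, sum_bx_succ, hS, sum_filter]
      refine sum_congr rfl fun y _ => ?_
      simp only [Fin.sum_univ_succ, Fin.cons_zero, Fin.cons_succ]
      split_ifs with hc
      · rw [natCast_card_filter]
      · apply sum_eq_zero
        intro t _
        rw [if_neg]
        intro hdv
        apply hc
        have h1 : (e : ℤ) ∣ a 0 * t + ∑ i : Fin n, a i.succ * y i :=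
          (Int.natCast_dvd_natCast.2 hed).trans hdv
        exact (dvd_add_right (hea.mul_right t)).1 h1
    rw [hcount]
    have hSc : (#S : ℝ) ≤ (h : ℝ) ^ n := by
      have := card_filter_le (bx n h) (fun y => (e : ℤ) ∣ ∑ i, a i.succ * y i)
      rw [card_bx] at this
      exact_mod_cast this
    have hdR : (0 : ℝ) < d := by exact_mod_cast hd
    have heR : (0 : ℝ) < e := by exact_mod_cast he0
    have hle : (e : ℝ) ≤ d := by exact_mod_cast Nat.le_of_dvd hd hed
    have hdiff : |∑ y ∈ S, (#{t ∈ Icc (1 : ℤ) h | (d : ℤ) ∣ a 0 * t + ∑ i : Fin n, a i.succ * y i} : ℝ)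
        - #S * (h * e / d)| ≤ #S := by
      rw [← nsmul_eq_mul, ← sum_const, ← sum_sub_distrib]
      refine (abs_sum_le_sum_abs _ _).trans ?_
      calc _ ≤ ∑ y ∈ S, (1 : ℝ) := sum_le_sum fun y hy =>
            count_line d hd (a 0) _ h (mem_filter.1 hy).2
        _ = #S := by simp
    have hdiff2 : |(#S : ℝ) * (h * e / d) - (h : ℝ) ^ (n + 1) / d| ≤ n * (h : ℝ) ^ n := by
      have : (#S : ℝ) * (h * e / d) - (h : ℝ) ^ (n + 1) / d =
          ((#S : ℝ) - (h : ℝ) ^ n / e) * (h * (e / d)) := by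
        field_simp
        ring
      rw [this, abs_mul, abs_of_nonneg (by positivity : (0 : ℝ) ≤ h * (e / d))]
      have h1 : (e : ℝ) / d ≤ 1 := (div_le_one hdR).2 hle
      calc _ ≤ (n * (h : ℝ) ^ (n - 1)) * (h * 1) := by gcongr
        _ = n * (h : ℝ) ^ n := by
          rcases n with _ | n
          · simp
          · simp [pow_succ]; ring
    have := abs_sub_le (∑ y ∈ S, (#{t ∈ Icc (1 : ℤ) h | (d : ℤ) ∣ a 0 * t + ∑ i : Fin n, a i.succ * y i} : ℝ))
      ((#S : ℝ) * (h * e / d)) ((h : ℝ) ^ (n + 1) / d)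
    push_cast
    linarith

/-- number of box points whose linear form is divisible by `d` -/
noncomputable def Ncount {n : ℕ} (b : Fin n → ℤ) (h d : ℕ) : ℕ :=
  #{x ∈ bx n h | (d : ℤ) ∣ ∑ i, b i * x i}

lemma moebius_gcd (u v : ℤ) (hu : 0 < u) (M : ℕ) (hM : u ≤ M) :
    (if Int.gcd u v = 1 then (1 : ℝ) else 0) =
      ∑ d ∈ Icc 1 M, (ArithmeticFunction.moebius d : ℝ) *
        ((if (d : ℤ) ∣ u then 1 else 0) * (if (d : ℤ) ∣ v then 1 else 0)) := by
  have hg : Int.gcd u v ≠ 0 := (Int.gcd_pos_of_ne_zero_left _ hu.ne').ne'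
  have h1 : ∑ d ∈ (Int.gcd u v).divisors, (ArithmeticFunction.moebius d) =
      if Int.gcd u v = 1 then (1 : ℤ) else 0 := by
    rw [← ArithmeticFunction.coe_mul_zeta_apply, ArithmeticFunction.moebius_mul_coe_zeta,
      ArithmeticFunction.one_apply]
  have h2 : (if Int.gcd u v = 1 then (1 : ℝ) else 0) =
      ((if Int.gcd u v = 1 then (1 : ℤ) else 0 : ℤ) : ℝ) := by split_ifs <;> simp
  rw [h2, ← h1]
  push_cast
  have h3 : (Int.gcd u v).divisors = (Icc 1 M).filter (fun d : ℕ => (d : ℤ) ∣ u ∧ (d : ℤ) ∣ v) := by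
    ext d
    simp only [Nat.mem_divisors, mem_filter, mem_Icc]
    rw [← Int.dvd_coe_gcd_iff, Int.natCast_dvd_natCast]
    constructor
    · rintro ⟨hd, _⟩
      refine ⟨⟨Nat.pos_of_dvd_of_pos hd (Nat.pos_of_ne_zero hg), ?_⟩, hd⟩
      have : (d : ℤ) ∣ u := (Int.natCast_dvd_natCast.2 hd).trans (Int.gcd_dvd_left u v)
      have := Int.le_of_dvd hu this
      omega
    · rintro ⟨_, hd⟩
      exact ⟨hd, hg⟩
  rw [h3, sum_filter]
  refine sum_congr rfl fun d _ => ?_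
  by_cases hdu : (d : ℤ) ∣ u <;> by_cases hdv : (d : ℤ) ∣ v <;> simp [hdu, hdv]

lemma form_bounds {n h H : ℕ} (hn : 1 ≤ n) {b : Fin n → ℤ} (hb : ∀ i, 0 < b i ∧ b i ≤ H)
    {x : Fin n → ℤ} (hx : x ∈ bx n h) :
    0 < ∑ i, b i * x i ∧ ∑ i, b i * x i ≤ ((n * (h * H) : ℕ) : ℤ) := by
  rw [mem_bx] at hx
  constructor
  · apply sum_pos
    · intro i _
      have := hx i
      exact mul_pos (hb i).1 (by omega)
    · exact ⟨⟨0, by omega⟩, mem_univ _⟩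
  · calc ∑ i, b i * x i ≤ ∑ i : Fin n, ((h : ℤ) * H) := by
          refine sum_le_sum fun i _ => ?_
          rw [mul_comm]
          exact mul_le_mul (hx i).2 (hb i).2 (hb i).1.le (by positivity)
      _ = _ := by simp

lemma R_eq_sum {n h H : ℕ} (hn : 1 ≤ n) (b : Fin n → ℤ) (hb : ∀ i, 0 < b i ∧ b i ≤ H) :
    (#{p ∈ bx n h ×ˢ bx n h | Int.gcd (∑ i, b i * p.1 i) (∑ i, b i * p.2 i) = 1} : ℝ) =
      ∑ d ∈ Icc 1 (n * (h * H)), (ArithmeticFunction.moebius d : ℝ) * (Ncount b h d : ℝ) ^ 2 := by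
  have hN : ∀ d, (Ncount b h d : ℝ) ^ 2 = ∑ p ∈ bx n h ×ˢ bx n h,
      ((if (d : ℤ) ∣ ∑ i, b i * p.1 i then (1 : ℝ) else 0) *
        (if (d : ℤ) ∣ ∑ i, b i * p.2 i then (1 : ℝ) else 0)) := by
    intro d
    rw [pow_two, Ncount, natCast_card_filter, sum_mul_sum, sum_product]
  simp_rw [hN, mul_sum]
  rw [sum_comm, natCast_card_filter]
  refine sum_congr rfl fun p hp => ?_
  have h1 := form_bounds hn hb (mem_product.1 hp).1
  exact moebius_gcd _ _ h1.1 _ h1.2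

lemma sum_N {n h H : ℕ} (hn : 1 ≤ n) (b : Fin n → ℤ) (hb : ∀ i, 0 < b i ∧ b i ≤ H)
    (ε C : ℝ) (hε : 0 < ε) (hC0 : 0 < C)
    (hC : ∀ m : ℕ, m ≠ 0 → (#m.divisors : ℝ) ≤ C * (m : ℝ) ^ ε) :
    ∑ d ∈ Icc 1 (n * (h * H)), (Ncount b h d : ℝ) ≤ (h : ℝ) ^ n * (C * ((n * (h * H) : ℕ) : ℝ) ^ ε) := by
  simp_rw [Ncount, natCast_card_filter]
  rw [sum_comm]
  calc _ ≤ ∑ x ∈ bx n h, (C * ((n * (h * H) : ℕ) : ℝ) ^ ε) := by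
        refine sum_le_sum fun x hx => ?_
        obtain ⟨h1, h2⟩ := form_bounds hn hb hx
        set u := ∑ i, b i * x i
        rw [← natCast_card_filter]
        lift u to ℕ using h1.le with m hm
        have hm0 : m ≠ 0 := by omega
        calc _ ≤ (#m.divisors : ℝ) := by
              norm_cast
              apply card_le_card
              intro d hd
              simp only [mem_filter, Nat.mem_divisors] at hd ⊢
              exact ⟨by exact_mod_cast hd.2, hm0⟩
          _ ≤ C * (m : ℝ) ^ ε := hC m hm0
          _ ≤ _ := by
              have : (m : ℝ) ≤ ((n * (h * H) : ℕ) : ℝ) := by exact_mod_cast h2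
              gcongr
    _ = _ := by rw [sum_const, card_bx, nsmul_eq_mul]; push_cast; rfl

lemma main_bound (n : ℕ) (hn : 1 ≤ n) (ε : ℝ) (hε : 0 < ε) : ∃ C : ℝ, 0 < C ∧
    ∀ (b : Fin n → ℤ) (H h : ℕ), 1 ≤ h → 1 ≤ H → (∀ i, 0 < b i ∧ b i ≤ H) →
      (∀ k : ℕ, (∀ i, (k : ℤ) ∣ b i) → k = 1) →
      |(#{p ∈ bx n h ×ˢ bx n h | Int.gcd (∑ i, b i * p.1 i) (∑ i, b i * p.2 i) = 1} : ℝ)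
        - (6 / Real.pi ^ 2) * (h : ℝ) ^ (2 * n)| ≤
      C * (h : ℝ) ^ (2 * n - 1) * ((h : ℝ) * H) ^ ε := by
  obtain ⟨C0, hC0, hdiv⟩ := divisor_bound ε hε
  refine ⟨2 * n * (1 + 1 / ε) + n ^ 2 + (n + 1) * C0 * (n : ℝ) ^ ε + 1, by positivity, ?_⟩
  intro b H h hh hH hb hprim
  rw [R_eq_sum hn b hb]
  have hhR : (1 : ℝ) ≤ h := by exact_mod_cast hh
  have hHR : (1 : ℝ) ≤ H := by exact_mod_cast hH
  have hh0 : (0 : ℝ) < h := by linarith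
  set M := n * (h * H) with hM
  have hhM : h ≤ M := by
    rw [hM]; nlinarith [Nat.mul_le_mul hn (Nat.mul_le_mul (le_refl h) hH)]
  set T : ℝ := ((h : ℝ) * H) ^ ε with hT
  have hhH : (h : ℝ) ≤ h * H := by nlinarith
  have hT1 : 1 ≤ T := Real.one_le_rpow (hhR.trans hhH) hε.le
  set A : ℝ := (h : ℝ) ^ (n - 1) with hA
  have hA0 : 0 < A := by positivity
  have hAn : (h : ℝ) ^ n = A * h := by rw [hA, ← pow_succ]; congr 1; omega
  have hP : (h : ℝ) ^ (2 * n - 1) = A * (A * h) := by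
    rw [← hAn, hA, ← pow_add]; congr 1; omega
  have hPP : (h : ℝ) ^ (2 * n) = (A * h) * (A * h) := by
    rw [← hAn, ← pow_add]; congr 1; omega
  have hN : ∀ d : ℕ, 0 < d → |(Ncount b h d : ℝ) - A * h / d| ≤ n * A := by
    intro d hd
    have := count_box h n b d hd (fun k _ hk => hprim k hk)
    rwa [hAn] at this
  have hmu : ∀ d : ℕ, |(ArithmeticFunction.moebius d : ℝ)| ≤ 1 := fun d => by
    exact_mod_cast ArithmeticFunction.abs_moebius_le_one
  have hsplit : ∑ d ∈ Icc 1 M, (ArithmeticFunction.moebius d : ℝ) * (Ncount b h d : ℝ) ^ 2 =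
      ∑ d ∈ Icc 1 h, (ArithmeticFunction.moebius d : ℝ) * (Ncount b h d : ℝ) ^ 2 +
      ∑ d ∈ Ioc h M, (ArithmeticFunction.moebius d : ℝ) * (Ncount b h d : ℝ) ^ 2 := by
    rw [← sum_union (by rw [disjoint_left]; intro x; simp; omega)]
    congr 1
    ext x; simp; omega
  have t1 : |∑ d ∈ Icc 1 h, ((ArithmeticFunction.moebius d : ℝ) * (Ncount b h d : ℝ) ^ 2 -
      (A * h) * (A * h) * ((ArithmeticFunction.moebius d : ℝ) / (d : ℝ) ^ 2))| ≤
      (2 * n * (1 + 1 / ε) + n ^ 2) * (A * (A * h)) * T := by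
    refine (abs_sum_le_sum_abs _ _).trans ?_
    have hlog : ∑ d ∈ Icc 1 h, ((d : ℝ))⁻¹ ≤ (1 + 1 / ε) * T := by
      have e1 := harmonic_le_one_add_log h
      rw [harmonic_eq_sum_Icc] at e1
      push_cast at e1
      have e2 := Real.log_le_rpow_div hh0.le hε
      have e3 : (h : ℝ) ^ ε ≤ T := by rw [hT]; gcongr
      have e4 : (h : ℝ) ^ ε / ε ≤ 1 / ε * T := by
        rw [div_mul_eq_mul_div, one_mul]; gcongr
      linarith
    calc _ ≤ ∑ d ∈ Icc 1 h, (2 * n * (A * (A * h)) * (d : ℝ)⁻¹ + n ^ 2 * A * A) := by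
          refine sum_le_sum fun d hd => ?_
          have hd0 : 0 < d := by simp at hd; omega
          have hdR : (0 : ℝ) < d := by exact_mod_cast hd0
          have h1 := hN d hd0
          set N : ℝ := (Ncount b h d : ℝ)
          have e : (ArithmeticFunction.moebius d : ℝ) * N ^ 2 -
              (A * h) * (A * h) * ((ArithmeticFunction.moebius d : ℝ) / (d : ℝ) ^ 2) =
              (ArithmeticFunction.moebius d : ℝ) * ((N - A * h / d) * ((N - A * h / d) + 2 * (A * h / d))) := by
            field_simp; ring
          rw [e, abs_mul, abs_mul]
          have h2 : |(N - A * h / d) + 2 * (A * h / d)| ≤ n * A + 2 * (A * h / d) := by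
            refine (abs_add_le _ _).trans ?_
            rw [abs_of_nonneg (by positivity : (0 : ℝ) ≤ 2 * (A * h / d))]
            linarith
          calc _ ≤ 1 * ((n * A) * (n * A + 2 * (A * h / d))) := by
                gcongr
                exact hmu d
            _ = _ := by ring
      _ = 2 * n * (A * (A * h)) * ∑ d ∈ Icc 1 h, ((d : ℝ))⁻¹ + n ^ 2 * (A * (A * h)) := by
          rw [sum_add_distrib, ← mul_sum, sum_const, Nat.card_Icc, nsmul_eq_mul]
          push_cast
          simp
          ring
      _ ≤ 2 * n * (A * (A * h)) * ((1 + 1 / ε) * T) + n ^ 2 * (A * (A * h)) * T := by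
          refine add_le_add (by gcongr) ?_
          exact le_mul_of_one_le_right (by positivity) hT1
      _ = _ := by ring
  have t2 : |∑ d ∈ Ioc h M, (ArithmeticFunction.moebius d : ℝ) * (Ncount b h d : ℝ) ^ 2| ≤
      ((n + 1) * C0 * (n : ℝ) ^ ε) * (A * (A * h)) * T := by
    refine (abs_sum_le_sum_abs _ _).trans ?_
    calc _ ≤ ∑ d ∈ Ioc h M, ((n + 1) * A) * (Ncount b h d : ℝ) := by
          refine sum_le_sum fun d hd => ?_
          have hd1 : h < d := (mem_Ioc.1 hd).1
          have hdR : (h : ℝ) ≤ d := by exact_mod_cast hd1.le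
          have h1 := (abs_le.1 (hN d (by omega))).2
          have h2 : A * h / d ≤ A := by
            rw [div_le_iff₀ (by linarith)]; gcongr
          have h3 : (Ncount b h d : ℝ) ≤ (n + 1) * A := by linarith
          rw [abs_mul, abs_of_nonneg (by positivity : (0 : ℝ) ≤ (Ncount b h d : ℝ) ^ 2), pow_two]
          calc _ ≤ 1 * ((n + 1) * A * (Ncount b h d : ℝ)) := by
                gcongr
                exact hmu d
            _ = _ := one_mul _
      _ ≤ ∑ d ∈ Icc 1 M, ((n + 1) * A) * (Ncount b h d : ℝ) := by
          apply sum_le_sum_of_subset_of_nonneg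
          · intro d; simp; omega
          · intros; positivity
      _ = ((n + 1) * A) * ∑ d ∈ Icc 1 M, (Ncount b h d : ℝ) := by rw [mul_sum]
      _ ≤ ((n + 1) * A) * ((h : ℝ) ^ n * (C0 * ((n * (h * H) : ℕ) : ℝ) ^ ε)) := by
          gcongr
          exact sum_N hn b hb ε C0 hε hC0 hdiv
      _ = _ := by
          push_cast
          rw [Real.mul_rpow (by positivity) (by positivity), hAn]
          ring
  have t3 : |(A * h) * (A * h) * ((∑ d ∈ Icc 1 h, (ArithmeticFunction.moebius d : ℝ) / (d : ℝ) ^ 2)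
      - 6 / Real.pi ^ 2)| ≤ 1 * (A * (A * h)) * T := by
    rw [abs_mul, abs_of_nonneg (by positivity : (0 : ℝ) ≤ (A * h) * (A * h))]
    calc _ ≤ (A * h) * (A * h) * (1 / (h : ℝ)) := by
          gcongr
          exact moebius_partial h hh
      _ = 1 * (A * (A * h)) := by field_simp
      _ ≤ _ := le_mul_of_one_le_right (by positivity) hT1
  rw [hsplit, hP, hPP]
  rw [sum_sub_distrib, ← mul_sum] at t1
  rw [abs_le] at t1 t2 t3 ⊢
  constructor
  · linarith [t1.1, t2.1, t3.1]
  · linarith [t1.2, t2.2, t3.2]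

theorem Rcount_asymptotic (n : ℕ) (hn : 2 ≤ n) (ε : ℝ) (hε : 0 < ε) :
    ∃ C : ℝ, 0 < C ∧
      ∀ a : Fin n → ℤ, (∀ i, 0 < a i) → ∀ h : ℕ, 2 ≤ h →
        |(Rcount a h : ℝ) - (6 / Real.pi ^ 2) * (h : ℝ) ^ (2 * n)| ≤
          C * (h : ℝ) ^ ((2 * n : ℝ) - (n : ℝ) / ((n : ℝ) ^ 2 - n + 1)) *
            ((h : ℝ) * (vecHeight a : ℝ)) ^ ε := by
  obtain ⟨C, hC, hmain⟩ := main_bound n (by omega) ε hε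
  refine ⟨C, hC, fun a ha h hh => ?_⟩
  have hne : (univ : Finset (Fin n)).Nonempty := ⟨⟨0, by omega⟩, mem_univ _⟩
  obtain ⟨b, hab, hb1⟩ := Finset.extract_gcd a hne
  set g := univ.gcd a with hg
  have hab' : ∀ i, a i = g * b i := fun i => hab i (mem_univ i)
  have hg0 : 0 < g := by
    have h1 : 0 ≤ g := by
      have : normalize g = g := Finset.normalize_gcd
      rw [← this, ← Int.abs_eq_normalize]; exact abs_nonneg _
    have h2 : g ≠ 0 := by
      intro h0
      have := hab' ⟨0, by omega⟩
      rw [h0, zero_mul] at this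
      exact (ha _).ne' this
    omega
  have hb0 : ∀ i, 0 < b i := fun i => by
    have := ha i
    rw [hab' i] at this
    exact pos_of_mul_pos_right this hg0.le
  have haH : ∀ i, a i ≤ vecHeight a := fun i => by
    have : (a i).natAbs ≤ vecHeight a := Finset.le_sup (f := fun i => (a i).natAbs) (mem_univ i)
    have := ha i
    omega
  have hbH : ∀ i, b i ≤ vecHeight a := fun i => by
    refine le_trans ?_ (haH i)
    rw [hab' i]
    exact le_mul_of_one_le_left (hb0 i).le hg0
  have hH : 1 ≤ vecHeight a := by
    have h1 := haH ⟨0, by omega⟩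
    have h2 := ha ⟨0, by omega⟩
    omega
  have hprim : ∀ k : ℕ, (∀ i, (k : ℤ) ∣ b i) → k = 1 := by
    intro k hk
    have : (k : ℤ) ∣ univ.gcd b := Finset.dvd_gcd fun i _ => hk i
    rw [hb1] at this
    exact Nat.dvd_one.1 (by exact_mod_cast this)
  have hR : Rcount a h =
      #{p ∈ bx n h ×ˢ bx n h | Int.gcd (∑ i, b i * p.1 i) (∑ i, b i * p.2 i) = 1} := by
    rw [Rcount]
    apply Nat.subtype_card
    rintro ⟨x, y⟩
    have hgcd : (Int.gcd (∑ i, b i * x i) (∑ i, b i * y i) = 1) ↔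
        ((Int.gcd (∑ i, a i * x i) (∑ i, a i * y i) : ℤ) = g) := by
      simp_rw [hab', mul_assoc, ← mul_sum]
      rw [Int.gcd_mul_left]
      push_cast
      rw [abs_of_pos hg0]
      constructor
      · intro h; rw [h]; simp
      · intro h
        have : g * (Int.gcd (∑ i, b i * x i) (∑ i, b i * y i) : ℤ) = g * 1 := by rw [h, mul_one]
        exact_mod_cast mul_left_cancel₀ hg0.ne' this
    simp only [mem_filter, mem_product, mem_bx, hgcd, vecHeight, Finset.sup_le_iff, mem_univ,
      true_implies]
    constructor
    · rintro ⟨⟨h1, h2⟩, h3⟩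
      exact ⟨fun i => by have := h1 i; omega, fun i => by have := h2 i; omega,
        fun i => by have := h1 i; omega, fun i => by have := h2 i; omega, h3⟩
    · rintro ⟨h1, h2, h3, h4, h5⟩
      exact ⟨⟨fun i => by have := h1 i; have := h3 i; omega,
        fun i => by have := h2 i; have := h4 i; omega⟩, h5⟩
  rw [hR]
  refine (hmain b (vecHeight a) h (by omega) hH (fun i => ⟨hb0 i, hbH i⟩) hprim).trans ?_
  have hh1 : (1 : ℝ) ≤ h := by exact_mod_cast (by omega : 1 ≤ h)
  have hexp : (h : ℝ) ^ (2 * n - 1) ≤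
      (h : ℝ) ^ ((2 * n : ℝ) - (n : ℝ) / ((n : ℝ) ^ 2 - n + 1)) := by
    rw [← Real.rpow_natCast]
    apply Real.rpow_le_rpow_of_exponent_le hh1
    have hnR : (2 : ℝ) ≤ n := by exact_mod_cast hn
    have : (n : ℝ) / ((n : ℝ) ^ 2 - n + 1) ≤ 1 := by
      rw [div_le_one (by nlinarith)]; nlinarith [sq_nonneg ((n : ℝ) - 1)]
    rw [Nat.cast_sub (by omega)]
    push_cast
    linarith
  gcongr
end
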